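/- arXiv:1511.02558 — 3 statements merged into one kernel-verified Lean document; each statement's English description precedes it below -/
import Mathlib

section
/- For every integer n ≥ 40, |p(n)/T̃(n) - 1| < e^{-μ(n)/3}. -/
open Real

/-- The partition function, as a real number. -/
noncomputable def p (n : ℕ) : ℝ := (Fintype.card (Nat.Partition n) : ℝ)

/-- `μ(x) = (π/6)·√(24x - 1)`. -/
noncomputable def mu (x : ℝ) : ℝ := π / 6 * Real.sqrt (24 * x - 1)

/-- `d = π²/(6√3)`. -/
noncomputable def d : ℝ := π ^ 2 / (6 * Real.sqrt 3)

/-- The main term `T̃(x) = (d/μ(x)²)·(1 - 1/μ(x))·e^{μ(x)}`. -/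
noncomputable def T (x : ℝ) : ℝ := d / mu x ^ 2 * (1 - 1 / mu x) * Real.exp (mu x)

/-!
With `q = exp (2πiτ)`, the function `q ^ (1 / 24) / η(τ)` generates the partition numbers, so
`p n = F (τ + 1) - F τ` for a primitive `F` of `exp (-2πi (n - 1 / 24) τ) / η(τ)`. The integral from
`τ` to `τ + 1` is taken along the arc `|θ| ≤ π / 3` of the circle of radius `r = 1 / √(24 n - 1)`
about `0` and along horizontal segments at the height `r / 2` of its end points.

On the arc, the transformation law of `η` under `τ ↦ -1 / τ` turns the integrand into an elementary
function, whose integral is `T n` up to an error of order `exp (mu n / 2)`. On the segments, the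
`SL₂(ℤ)`-invariance of `|η(τ)| ^ 4 * Im τ` bounds `1 / η`, and their contribution has the same
order. Since `T n` is of order `exp (mu n) / mu n ^ 2`, this proves the claim for `400 ≤ n`. The
remaining cases are verified numerically, with `p n` computed from Euler's pentagonal number
recurrence and `T n` enclosed by fixed-point arithmetic.
-/

open Complex (I)
open Filter Finset
open scoped Topology

section PartitionSeries

/-- The power series `1 + X ^ k + X ^ (2 * k) + ⋯`. -/
noncomputable def geomPow (k : ℕ) : PowerSeries ℕ := PowerSeries.mk fun n ↦ if k ∣ n then 1 else 0

/-- The generating function of the partitions into parts of size at most `N`. -/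
noncomputable def boundedSeries (N : ℕ) : PowerSeries ℕ := ∏ i ∈ range N, geomPow (i + 1)

/-- Euler's function `(q; q)_∞ = ∏ (1 - q ^ i)`, the product being over `i ≥ 1`. -/
noncomputable def eulerFunction (q : ℂ) : ℂ := ∏' i : ℕ, (1 - q ^ (i + 1))

lemma p_nonneg (n : ℕ) : 0 ≤ p n := Nat.cast_nonneg _

lemma p_zero : p 0 = 1 := by simp [p]

open PowerSeries.WithPiTopology in
lemma tsum_X_pow_eq_geomPow {k : ℕ} (hk : k ≠ 0) :
    ∑' j : ℕ, (PowerSeries.X : PowerSeries ℕ) ^ (k * j) = geomPow k := by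
  refine HasSum.tsum_eq ((hasSum_iff_hasSum_coeff ..).2 fun n ↦ ?_)
  simp only [geomPow, PowerSeries.coeff_mk, PowerSeries.coeff_X_pow]
  split_ifs with h
  · obtain ⟨j, rfl⟩ := h
    convert! hasSum_ite_eq j (1 : ℕ) using 2 with i
    simp [hk, eq_comm]
  · convert! hasSum_zero using 2 with i
    exact if_neg fun hn ↦ h ⟨i, hn⟩

open PowerSeries.WithPiTopology in
lemma eventually_coeff_boundedSeries (n : ℕ) :
    ∀ᶠ N in atTop, (boundedSeries N).coeff n = Fintype.card (Nat.Partition n) := by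
  have h := Nat.Partition.hasProd_powerSeriesMk_card_restricted ℕ (fun _ ↦ True)
  have hn := (tendsto_iff_coeff_tendsto ..).1 h.tendsto_prod_nat n
  rw [nhds_discrete, tendsto_pure] at hn
  filter_upwards [hn] with N hN
  simpa [tsum_X_pow_eq_geomPow, boundedSeries, Nat.Partition.restricted] using hN

lemma monotone_coeff_boundedSeries (n : ℕ) : Monotone fun N ↦ (boundedSeries N).coeff n := by
  refine monotone_nat_of_le_succ fun N ↦ ?_
  rw [boundedSeries, boundedSeries, prod_range_succ, PowerSeries.coeff_mul]
  refine le_trans ?_ (single_le_sum (fun _ _ ↦ Nat.zero_le _)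
    (show (n, 0) ∈ antidiagonal n by simp))
  simp [geomPow]

lemma coeff_boundedSeries_le (N n : ℕ) :
    (boundedSeries N).coeff n ≤ Fintype.card (Nat.Partition n) := by
  obtain ⟨M, hM, hNM⟩ := ((eventually_coeff_boundedSeries n).and (eventually_ge_atTop N)).exists
  exact hM ▸ monotone_coeff_boundedSeries n hNM

lemma hasSum_geomPow {q : ℂ} (hq : ‖q‖ < 1) {k : ℕ} (hk : k ≠ 0) :
    HasSum (fun n ↦ ((geomPow k).coeff n : ℂ) * q ^ n) (1 - q ^ k)⁻¹ := by
  have hqk : ‖q ^ k‖ < 1 := by simpa using pow_lt_one₀ (norm_nonneg q) hq hk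
  rw [← Function.Injective.hasSum_iff (mul_right_injective₀ hk)]
  · convert! hasSum_geometric_of_norm_lt_one hqk using 2 with j
    simp [geomPow, pow_mul]
  · intro n hn
    have : ¬ k ∣ n := fun ⟨j, hj⟩ ↦ hn ⟨j, hj.symm⟩
    simp [geomPow, this]

lemma hasSum_boundedSeries {q : ℂ} (hq : ‖q‖ < 1) (N : ℕ) :
    HasSum (fun n ↦ ((boundedSeries N).coeff n : ℂ) * q ^ n)
      (∏ i ∈ range N, (1 - q ^ (i + 1)))⁻¹ := by
  induction N with
  | zero =>
    convert! hasSum_ite_eq 0 (1 : ℂ) using 2 with n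
    · by_cases h : n = 0 <;> simp [boundedSeries, PowerSeries.coeff_one, h]
    · simp
  | succ N ih =>
    have hgeom := hasSum_geomPow hq N.succ_ne_zero
    have hs := (summable_norm_sum_mul_antidiagonal_of_summable_norm
      ih.summable.norm hgeom.summable.norm).of_norm.hasSum
    rw [← tsum_mul_tsum_eq_tsum_sum_antidiagonal_of_summable_norm
      ih.summable.norm hgeom.summable.norm, ih.tsum_eq, hgeom.tsum_eq, ← mul_inv,
      ← prod_range_succ (fun i ↦ 1 - q ^ (i + 1))] at hs
    convert! hs using 2 with n
    rw [boundedSeries, prod_range_succ, PowerSeries.coeff_mul, ← boundedSeries]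
    push_cast
    rw [sum_mul]
    refine sum_congr rfl fun ij hij ↦ ?_
    rw [← mem_antidiagonal.1 hij, pow_add, mul_mul_mul_comm]

lemma inv_one_sub_le_exp {ρ x : ℝ} (hρ : ρ < 1) (hxρ : x ≤ ρ) (hx : 0 ≤ x) :
    (1 - x)⁻¹ ≤ exp (x / (1 - ρ)) := by
  have : 0 < 1 - ρ := by linarith
  have : 0 < 1 - x := by linarith
  calc (1 - x)⁻¹ = x / (1 - x) + 1 := by field_simp; ring
    _ ≤ x / (1 - ρ) + 1 := by gcongr
    _ ≤ exp (x / (1 - ρ)) := add_one_le_exp _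

lemma inv_prod_one_sub_pow_le {ρ : ℝ} (h0 : 0 ≤ ρ) (h1 : ρ < 1) (N : ℕ) :
    (∏ i ∈ range N, (1 - ρ ^ (i + 1)))⁻¹ ≤ exp (ρ / (1 - ρ) ^ 2) := by
  have hpow (i : ℕ) : ρ ^ (i + 1) ≤ ρ := pow_le_of_le_one h0 h1.le i.succ_ne_zero
  have hpos : 0 < 1 - ρ := by linarith
  rw [← prod_inv_distrib]
  calc ∏ i ∈ range N, (1 - ρ ^ (i + 1))⁻¹
      ≤ ∏ i ∈ range N, exp (ρ ^ (i + 1) / (1 - ρ)) :=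
        prod_le_prod (fun i _ ↦ inv_nonneg.2 (by linarith [hpow i]))
          fun i _ ↦ inv_one_sub_le_exp h1 (hpow i) (by positivity)
    _ = exp ((∑ i ∈ range N, ρ ^ i) * ρ / (1 - ρ)) := by
        simp only [← exp_sum, sum_mul, sum_div, pow_succ]
    _ ≤ exp ((1 - ρ)⁻¹ * ρ / (1 - ρ)) := by
        gcongr
        rw [← tsum_geometric_of_lt_one h0 h1]
        exact (summable_geometric_of_lt_one h0 h1).sum_le_tsum _ fun i _ ↦ pow_nonneg h0 i
    _ = exp (ρ / (1 - ρ) ^ 2) := by congr 1; field_simp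

lemma sum_p_mul_pow_le {ρ : ℝ} (h0 : 0 ≤ ρ) (h1 : ρ < 1) (M : ℕ) :
    ∑ n ∈ range M, p n * ρ ^ n ≤ exp (ρ / (1 - ρ) ^ 2) := by
  obtain ⟨N, hN⟩ := ((eventually_all_finset (range M)).2
    fun n _ ↦ eventually_coeff_boundedSeries n).exists
  have hs : HasSum (fun n ↦ ((boundedSeries N).coeff n : ℝ) * ρ ^ n)
      (∏ i ∈ range N, (1 - ρ ^ (i + 1)))⁻¹ := by
    exact_mod_cast hasSum_boundedSeries (q := ρ) (by simpa [abs_of_nonneg h0] using h1) N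
  calc ∑ n ∈ range M, p n * ρ ^ n
      = ∑ n ∈ range M, ((boundedSeries N).coeff n : ℝ) * ρ ^ n :=
        sum_congr rfl fun n hn ↦ by rw [hN n hn, p]
    _ ≤ (∏ i ∈ range N, (1 - ρ ^ (i + 1)))⁻¹ := sum_le_hasSum _ (fun n _ ↦ by positivity) hs
    _ ≤ exp (ρ / (1 - ρ) ^ 2) := inv_prod_one_sub_pow_le h0 h1 N

lemma summable_p_mul_pow {ρ : ℝ} (h0 : 0 ≤ ρ) (h1 : ρ < 1) : Summable fun n ↦ p n * ρ ^ n :=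
  summable_of_sum_range_le (fun n ↦ mul_nonneg (p_nonneg n) (pow_nonneg h0 n))
    (sum_p_mul_pow_le h0 h1)

lemma tsum_p_mul_pow_le {ρ : ℝ} (h0 : 0 ≤ ρ) (h1 : ρ < 1) :
    ∑' n, p n * ρ ^ n ≤ exp (ρ / (1 - ρ) ^ 2) :=
  Real.tsum_le_of_sum_range_le (fun n ↦ mul_nonneg (p_nonneg n) (pow_nonneg h0 n))
    (sum_p_mul_pow_le h0 h1)

lemma norm_p_mul_pow (n : ℕ) (q : ℂ) : ‖(p n : ℂ) * q ^ n‖ = p n * ‖q‖ ^ n := by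
  simp [abs_of_nonneg (p_nonneg n)]

lemma eulerFunction_ne_zero {q : ℂ} (hq : ‖q‖ < 1) : eulerFunction q ≠ 0 := by
  simp only [eulerFunction, sub_eq_add_neg]
  refine tprod_one_add_ne_zero_of_summable (f := fun i : ℕ ↦ -q ^ (i + 1)) (fun i h ↦ ?_) ?_
  · have hlt : ‖q ^ (i + 1)‖ < 1 := by simpa using pow_lt_one₀ (norm_nonneg q) hq i.succ_ne_zero
    simp [show q ^ (i + 1) = 1 by linear_combination -h] at hlt
  · simpa using (summable_nat_add_iff 1).2 (summable_geometric_of_lt_one (norm_nonneg q) hq)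

lemma hasSum_p_mul_pow {q : ℂ} (hq : ‖q‖ < 1) :
    HasSum (fun n ↦ (p n : ℂ) * q ^ n) (eulerFunction q)⁻¹ := by
  have hsum : Summable fun n ↦ p n * ‖q‖ ^ n := summable_p_mul_pow (norm_nonneg q) hq
  have hprod : Tendsto (fun N ↦ (∏ i ∈ range N, (1 - q ^ (i + 1)))⁻¹) atTop
      (𝓝 (eulerFunction q)⁻¹) :=
    (ModularForm.multipliable_one_sub_pow hq).hasProd.tendsto_prod_nat.inv₀
      (eulerFunction_ne_zero hq)
  have hseries : Tendsto (fun N ↦ ∑' n, ((boundedSeries N).coeff n : ℂ) * q ^ n) atTop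
      (𝓝 (∑' n, (p n : ℂ) * q ^ n)) := by
    refine tendsto_tsum_of_dominated_convergence hsum (fun n ↦ ?_) (.of_forall fun N n ↦ ?_)
    · refine tendsto_nhds_of_eventually_eq ?_
      filter_upwards [eventually_coeff_boundedSeries n] with N hN
      simp [hN, p]
    · rw [norm_mul, norm_pow, Complex.norm_natCast]
      exact mul_le_mul_of_nonneg_right (Nat.cast_le.2 (coeff_boundedSeries_le N n))
        (by positivity)
  simp only [(hasSum_boundedSeries hq _).tsum_eq] at hseries
  rw [← tendsto_nhds_unique hseries hprod]
  exact (Summable.of_norm (by simpa only [norm_p_mul_pow])).hasSum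

lemma norm_inv_eulerFunction_sub_one_le {q : ℂ} (hq : ‖q‖ < 1) :
    ‖(eulerFunction q)⁻¹ - 1‖ ≤ exp (‖q‖ / (1 - ‖q‖) ^ 2) - 1 := by
  have hsum : Summable fun n ↦ p n * ‖q‖ ^ n := summable_p_mul_pow (norm_nonneg q) hq
  have hle := tsum_p_mul_pow_le (norm_nonneg q) hq
  rw [hsum.tsum_eq_zero_add] at hle
  rw [← (hasSum_p_mul_pow hq).tsum_eq, (hasSum_p_mul_pow hq).summable.tsum_eq_zero_add]
  simp only [p_zero, pow_zero, Complex.ofReal_one, mul_one, add_sub_cancel_left] at hle ⊢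
  exact (tsum_of_norm_bounded ((summable_nat_add_iff 1).2 hsum).hasSum
    fun n ↦ (norm_p_mul_pow _ q).le).trans (by linarith)

lemma exp_div_one_sub_sq_le {x : ℝ} (h0 : 0 ≤ x) (h : x ≤ 1 / 100) :
    exp (x / (1 - x) ^ 2) ≤ 1 + 2 * x := by
  have hsq : (99 / 100) ^ 2 ≤ (1 - x) ^ 2 := by gcongr; linarith
  have hle : x / (1 - x) ^ 2 ≤ 11 / 10 * x := by
    rw [div_le_iff₀ (by positivity)]
    nlinarith
  have hnonneg : 0 ≤ x / (1 - x) ^ 2 := by positivity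
  have htaylor := (abs_le.1 (abs_exp_sub_one_sub_id_le (x := x / (1 - x) ^ 2)
    (by rw [abs_of_nonneg hnonneg]; linarith))).2
  nlinarith

lemma norm_inv_eulerFunction_sub_one_le_of_norm_le {q : ℂ} (hq : ‖q‖ ≤ 1 / 100) :
    ‖(eulerFunction q)⁻¹ - 1‖ ≤ 2 * ‖q‖ := by
  linarith [norm_inv_eulerFunction_sub_one_le (show ‖q‖ < 1 by linarith),
    exp_div_one_sub_sq_le (norm_nonneg q) hq]

end PartitionSeries

section Primitive

open Function.Periodic (qParam)

/-- The integrand `P(q) / q ^ n` of Cauchy's formula for `p n`, where `q = exp (2πiτ)` and `P` is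
the generating function of the partitions. -/
noncomputable def cauchyIntegrand (n : ℕ) (τ : ℂ) : ℂ :=
  (eulerFunction (qParam 1 τ))⁻¹ / qParam 1 τ ^ n

/-- A primitive of the `m`-th term `p m * q ^ (m - n)` of the Fourier series of
`cauchyIntegrand n`. -/
noncomputable def primitiveTerm (n m : ℕ) (τ : ℂ) : ℂ :=
  if m = n then p n * τ
  else p m / (2 * π * I * ((m : ℂ) - n)) * Complex.exp (2 * π * I * ((m : ℂ) - n) * τ)

/-- A primitive of `cauchyIntegrand n` on the upper half-plane. -/
noncomputable def cauchyPrimitive (n : ℕ) (τ : ℂ) : ℂ := ∑' m, primitiveTerm n m τ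

lemma norm_qParam_one (τ : ℂ) : ‖qParam 1 τ‖ = exp (-(2 * π * τ.im)) := by
  simp [Function.Periodic.norm_qParam]

lemma exp_neg_two_pi_mul_lt_one {y : ℝ} (hy : 0 < y) : exp (-(2 * π * y)) < 1 := by
  rw [exp_lt_one_iff, neg_lt_zero]
  positivity

lemma norm_qParam_one_lt_one {τ : ℂ} (hτ : 0 < τ.im) : ‖qParam 1 τ‖ < 1 :=
  norm_qParam_one τ ▸ exp_neg_two_pi_mul_lt_one hτ

lemma norm_fourierTerm_le (n m : ℕ) {τ : ℂ} {a b : ℝ} (ha : a ≤ τ.im) (hb : τ.im ≤ b) :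
    ‖(p m : ℂ) * Complex.exp (2 * π * I * ((m : ℂ) - n) * τ)‖ ≤
      exp (2 * π * n * b) * (p m * exp (-(2 * π * a)) ^ m) := by
  have hexp : ‖Complex.exp (2 * π * I * ((m : ℂ) - n) * τ)‖ = exp (-(2 * π * (m - n) * τ.im)) := by
    rw [Complex.norm_exp]
    simp [mul_assoc]
  rw [norm_mul, hexp, Complex.norm_of_nonneg (p_nonneg m), mul_left_comm, ← exp_nat_mul, ← exp_add]
  gcongr
  · exact p_nonneg m
  · have hm : 0 ≤ 2 * π * m * (τ.im - a) := mul_nonneg (by positivity) (by linarith)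
    have hn : 0 ≤ 2 * π * n * (b - τ.im) := mul_nonneg (by positivity) (by linarith)
    linarith

lemma hasDerivAt_primitiveTerm (n m : ℕ) (τ : ℂ) :
    HasDerivAt (primitiveTerm n m) (p m * Complex.exp (2 * π * I * ((m : ℂ) - n) * τ)) τ := by
  unfold primitiveTerm
  split_ifs with h
  · simpa [h] using (hasDerivAt_id τ).const_mul (p n : ℂ)
  · have hmn : (m : ℂ) - n ≠ 0 := sub_ne_zero.2 (by exact_mod_cast h)
    have hpi : (π : ℂ) ≠ 0 := by exact_mod_cast pi_ne_zero
    convert! (((hasDerivAt_id τ).const_mul (2 * π * I * ((m : ℂ) - n))).cexp).const_mul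
      ((p m : ℂ) / (2 * π * I * ((m : ℂ) - n))) using 1
    simp only [id]
    field_simp

lemma norm_primitiveTerm_le {n m : ℕ} (hnm : n < m) (τ : ℂ) :
    ‖primitiveTerm n m τ‖ ≤ ‖(p m : ℂ) * Complex.exp (2 * π * I * ((m : ℂ) - n) * τ)‖ := by
  have hone : (1 : ℝ) ≤ m - n := by
    have : (n : ℝ) + 1 ≤ m := by exact_mod_cast hnm
    linarith
  have hden : 1 ≤ ‖2 * π * I * ((m : ℂ) - n)‖ := by
    rw [show (m : ℂ) - n = ((m - n : ℝ) : ℂ) by push_cast; rfl]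
    simp only [norm_mul, Complex.norm_real, Complex.norm_I, Complex.norm_ofNat, norm_eq_abs,
      abs_of_pos pi_pos, abs_of_pos (by linarith : (0 : ℝ) < m - n)]
    nlinarith [pi_gt_three]
  rw [primitiveTerm, if_neg hnm.ne', norm_mul, norm_mul, norm_div]
  gcongr
  exact div_le_self (norm_nonneg _) hden

lemma summable_exp_mul_p_mul_exp_pow (C : ℝ) {a : ℝ} (ha : 0 < a) :
    Summable fun m ↦ C * (p m * exp (-(2 * π * a)) ^ m) :=
  (summable_p_mul_pow (exp_nonneg _) (exp_neg_two_pi_mul_lt_one ha)).mul_left C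

lemma summable_primitiveTerm (n : ℕ) {τ : ℂ} (hτ : 0 < τ.im) :
    Summable fun m ↦ primitiveTerm n m τ := by
  refine .of_norm_bounded_eventually_nat
    (summable_exp_mul_p_mul_exp_pow (exp (2 * π * n * τ.im)) hτ) ?_
  filter_upwards [eventually_gt_atTop n] with m hm
  exact (norm_primitiveTerm_le hm τ).trans (norm_fourierTerm_le n m le_rfl le_rfl)

lemma tsum_fourierTerm (n : ℕ) {τ : ℂ} (hτ : 0 < τ.im) :
    ∑' m : ℕ, (p m : ℂ) * Complex.exp (2 * π * I * ((m : ℂ) - n) * τ) = cauchyIntegrand n τ := by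
  rw [cauchyIntegrand, ← (hasSum_p_mul_pow (norm_qParam_one_lt_one hτ)).tsum_eq, ← tsum_div_const]
  refine tsum_congr fun m ↦ ?_
  rw [mul_div_assoc, qParam, ← Complex.exp_nat_mul, ← Complex.exp_nat_mul, ← Complex.exp_sub]
  congr 2
  push_cast
  ring

lemma hasDerivAt_cauchyPrimitive (n : ℕ) {τ : ℂ} (hτ : 0 < τ.im) :
    HasDerivAt (cauchyPrimitive n) (cauchyIntegrand n τ) τ := by
  set strip : Set ℂ := {z | τ.im / 2 < z.im ∧ z.im < τ.im + 1}
  have hopen : IsOpen strip := (isOpen_lt continuous_const Complex.continuous_im).inter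
    (isOpen_lt Complex.continuous_im continuous_const)
  have hconv : Convex ℝ strip := (convex_halfSpace_im_gt _).inter (convex_halfSpace_im_lt _)
  have hmem : τ ∈ strip := ⟨half_lt_self hτ, lt_add_one τ.im⟩
  rw [← tsum_fourierTerm n hτ]
  exact hasDerivAt_tsum_of_isPreconnected
    (summable_exp_mul_p_mul_exp_pow (exp (2 * π * n * (τ.im + 1))) (half_pos hτ))
    hopen hconv.isPreconnected (fun m z _ ↦ hasDerivAt_primitiveTerm n m z)
    (fun m z hz ↦ norm_fourierTerm_le n m hz.1.le hz.2.le) hmem (summable_primitiveTerm n hτ) hmem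

lemma cauchyPrimitive_add_one_sub (n : ℕ) {τ : ℂ} (hτ : 0 < τ.im) :
    cauchyPrimitive n (τ + 1) - cauchyPrimitive n τ = p n := by
  rw [cauchyPrimitive, cauchyPrimitive, ← (summable_primitiveTerm n (by simpa using hτ)).tsum_sub
    (summable_primitiveTerm n hτ), tsum_eq_single n]
  · simp only [primitiveTerm, if_true]
    ring
  · intro m hm
    have hperiodic : Complex.exp (2 * π * I * ((m : ℂ) - n) * (τ + 1)) =
        Complex.exp (2 * π * I * ((m : ℂ) - n) * τ) := by
      rw [mul_add, Complex.exp_add, mul_one, show 2 * π * I * ((m : ℂ) - n) =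
        (((m : ℤ) - n : ℤ) : ℂ) * (2 * π * I) by push_cast; ring,
        Complex.exp_int_mul_two_pi_mul_I, mul_one]
    simp only [primitiveTerm, if_neg hm, hperiodic, sub_self]

end Primitive

section ModularBound

open Function.Periodic (qParam)
open UpperHalfPlane hiding I
open MatrixGroups
open ModularForm (eta)

lemma norm_eta (τ : ℂ) : ‖eta τ‖ = exp (-(π * τ.im / 12)) * ‖eulerFunction (qParam 1 τ)‖ := by
  rw [eta, norm_mul, Function.Periodic.norm_qParam, eulerFunction]
  ring_nf

lemma cauchyIntegrand_eq_div_eta (n : ℕ) (τ : ℂ) :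
    cauchyIntegrand n τ = Complex.exp (-(π * I * (24 * n - 1) * τ / 12)) / eta τ := by
  have hexp : Complex.exp (-(π * I * (24 * n - 1) * τ / 12)) = qParam 24 τ / qParam 1 τ ^ n := by
    rw [qParam, qParam, ← Complex.exp_nat_mul, ← Complex.exp_sub]
    congr 1
    push_cast
    ring
  have hq : qParam 24 τ ≠ 0 := Complex.exp_ne_zero _
  rw [hexp, cauchyIntegrand, eta, eulerFunction, div_right_comm, div_mul_cancel_left₀ hq]

lemma norm_eta_pow_mul_im_pow_smul (g : SL(2, ℤ)) (τ : ℍ) :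
    ‖eta ↑(g • τ)‖ ^ 24 * (g • τ).im ^ 6 = ‖eta τ‖ ^ 24 * τ.im ^ 6 := by
  have h := petersson_slash_SL 12 ModularForm.discriminant ModularForm.discriminant g τ
  rw [SlashInvariantForm.slash_action_generators_SL2Z ModularForm.discriminant_S_invariant
    ModularForm.discriminant_T_invariant g] at h
  have hnorm := congrArg norm h
  simp only [petersson, ModularForm.discriminant, norm_mul, norm_pow, RCLike.norm_conj, norm_zpow,
    Complex.norm_real, norm_eq_abs, abs_of_pos (UpperHalfPlane.im_pos _)] at hnorm
  rw [← sq_eq_sq₀ (by have := (g • τ).im_pos; positivity) (by have := τ.im_pos; positivity)]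
  have him (z : ℍ) : z.im ^ (12 : ℤ) = (z.im ^ 6) ^ 2 := by
    rw [← pow_mul]
    norm_cast
  rw [him, him] at hnorm
  linarith

lemma norm_eta_smul_le {g : SL(2, ℤ)} {τ : ℍ} (h : τ.im ≤ (g • τ).im) :
    ‖eta ↑(g • τ)‖ ≤ ‖eta τ‖ := by
  refine le_of_pow_le_pow_left₀ (n := 24) (by norm_num) (norm_nonneg _) ?_
  refine le_of_mul_le_mul_right ?_ (pow_pos τ.im_pos 6)
  rw [← norm_eta_pow_mul_im_pow_smul g]
  have := τ.im_pos
  gcongr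

lemma norm_qParam_one_le_of_five_le {τ : ℂ} (h : 5 ≤ 2 * π * τ.im) : ‖qParam 1 τ‖ ≤ 1 / 100 := by
  rw [norm_qParam_one, Real.exp_neg, one_div]
  gcongr
  calc (100 : ℝ) ≤ 2.7182818283 ^ 5 := by norm_num
    _ ≤ exp 1 ^ 5 := by gcongr; exact exp_one_gt_d9.le
    _ = exp 5 := by rw [← exp_nat_mul]; norm_num
    _ ≤ exp (2 * π * τ.im) := exp_le_exp.2 h

lemma inv_norm_eta_le_of_three_le {τ : ℍ} (h : 3 ≤ 4 * τ.im ^ 2) :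
    ‖eta τ‖⁻¹ ≤ 51 / 50 * exp (π * τ.im / 12) := by
  have him : 5 / 6 ≤ τ.im := by nlinarith [τ.im_pos]
  have hq : ‖qParam 1 τ‖ ≤ 1 / 100 :=
    norm_qParam_one_le_of_five_le (by rw [coe_im]; nlinarith [pi_gt_three])
  have hE : ‖(eulerFunction (qParam 1 τ))⁻¹‖ ≤ 51 / 50 := by
    have hle := norm_inv_eulerFunction_sub_one_le_of_norm_le hq
    have htri := norm_le_norm_sub_add (eulerFunction (qParam 1 τ))⁻¹ 1
    rw [norm_one] at htri
    linarith
  rw [norm_eta, mul_inv, ← Real.exp_neg, neg_neg, ← norm_inv, mul_comm, coe_im]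
  gcongr

/- Moving `τ` into the fundamental domain can only decrease `‖η‖`, and the lower bound `s` on the
denominators `|cτ + d|²` bounds the height that is reached. -/
lemma inv_norm_eta_le_of_le_normSq {τ : ℍ} {s : ℝ} (hs : 0 < s) (hτ : 4 * τ.im ^ 2 ≤ 3)
    (h : ∀ c d : ℤ, IsCoprime c d → s ≤ Complex.normSq (c * τ + d)) :
    ‖eta τ‖⁻¹ ≤ 51 / 50 * exp (π * τ.im / (12 * s)) := by
  obtain ⟨g, hg⟩ := ModularGroup.exists_smul_mem_fd τ
  have hfd := ModularGroup.three_le_four_mul_im_sq_of_mem_fd hg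
  have him : (g • τ).im ≤ τ.im / s := by
    rw [ModularGroup.im_smul_eq_div_normSq, ModularGroup.denom_apply]
    have := τ.im_pos
    gcongr
    exact h _ _ (ModularGroup.bottom_row_coprime g)
  have hle : τ.im ≤ (g • τ).im :=
    (pow_le_pow_iff_left₀ τ.im_pos.le (g • τ).im_pos.le two_ne_zero).1 (by linarith)
  calc ‖eta τ‖⁻¹ ≤ ‖eta ↑(g • τ)‖⁻¹ := by
        gcongr
        · exact norm_pos_iff.2 (ModularForm.eta_ne_zero (g • τ).2)
        · exact norm_eta_smul_le hle
    _ ≤ 51 / 50 * exp (π * (g • τ).im / 12) := inv_norm_eta_le_of_three_le hfd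
    _ ≤ 51 / 50 * exp (π * (τ.im / s) / 12) := by gcongr
    _ = 51 / 50 * exp (π * τ.im / (12 * s)) := by ring_nf

lemma sq_le_sq_add_intCast {x : ℝ} (hx : |x| ≤ 1 / 2) (k : ℤ) : x ^ 2 ≤ (x + k) ^ 2 := by
  obtain ⟨hx1, hx2⟩ := abs_le.1 hx
  rcases lt_trichotomy k 0 with h | rfl | h
  · have : (k : ℝ) ≤ -1 := by exact_mod_cast (by omega : k ≤ -1)
    nlinarith
  · simp
  · have : (1 : ℝ) ≤ k := by exact_mod_cast h
    nlinarith

lemma four_mul_im_sq_le_normSq {z : ℂ} (hre : |z.re| ≤ 1 / 2) (h : 3 * z.im ^ 2 ≤ z.re ^ 2)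
    {c d : ℤ} (hcd : IsCoprime c d) : 4 * z.im ^ 2 ≤ Complex.normSq (c * z + d) := by
  have hre2 : z.re ^ 2 ≤ (1 / 2) ^ 2 :=
    sq_le_sq.2 (by rwa [abs_of_pos (one_half_pos (α := ℝ))])
  have hnormSq : Complex.normSq (c * z + d) = (c * z.re + d) ^ 2 + c ^ 2 * z.im ^ 2 := by
    rw [Complex.normSq_apply]
    simp
    ring
  rw [hnormSq]
  have habs : c = 0 ∨ c = 1 ∨ c = -1 ∨ 2 ≤ |c| := by
    rcases abs_cases c with ⟨habs, _⟩ | ⟨habs, _⟩ <;> omega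
  rcases habs with rfl | rfl | rfl | hc
  · have hd : (1 : ℝ) ≤ (d : ℝ) ^ 2 := by
      rw [one_le_sq_iff_one_le_abs]
      exact_mod_cast Int.one_le_abs (by simpa using hcd.ne_zero_or_ne_zero)
    simp only [Int.cast_zero, zero_mul, zero_add]
    nlinarith
  · have := sq_le_sq_add_intCast hre d
    push_cast
    linarith
  · have := sq_le_sq_add_intCast hre (-d)
    push_cast at this ⊢
    linarith
  · have hc2 : (2 : ℝ) ^ 2 ≤ (c : ℝ) ^ 2 :=
      sq_le_sq.2 (by simpa using (mod_cast hc : (2 : ℝ) ≤ |c|))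
    nlinarith [sq_nonneg (c * z.re + d), sq_nonneg z.im]

lemma norm_cauchyIntegrand_le {n : ℕ} {τ : ℂ} (hτ : 0 < τ.im) (hre : |τ.re| ≤ 1 / 2)
    (h : 3 * τ.im ^ 2 ≤ τ.re ^ 2) :
    ‖cauchyIntegrand n τ‖ ≤
      51 / 50 * exp (π * (24 * n - 1) * τ.im / 12 + π / (48 * τ.im)) := by
  have him : 4 * τ.im ^ 2 ≤ 3 := by nlinarith [sq_abs τ.re, abs_nonneg τ.re]
  have heta := inv_norm_eta_le_of_le_normSq (τ := ⟨τ, hτ⟩) (s := 4 * τ.im ^ 2) (by positivity) him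
    fun c d hcd ↦ four_mul_im_sq_le_normSq hre h hcd
  have hexp : ‖Complex.exp (-(π * I * (24 * n - 1) * τ / 12))‖ =
      exp (π * (24 * n - 1) * τ.im / 12) := by
    rw [Complex.norm_exp]
    congr 1
    simp [mul_assoc, neg_div]
  rw [cauchyIntegrand_eq_div_eta, norm_div, hexp, div_eq_mul_inv, exp_add, mul_left_comm]
  gcongr
  refine heta.trans_eq ?_
  congr 2
  simp only [UpperHalfPlane.im]
  field_simp
  norm_num

end ModularBound

section Arc

open Function.Periodic (qParam)
open ModularForm (eta)

/-- The point of argument `π / 2 - θ` on the circle of radius `r` about `0`. -/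
noncomputable def arcPoint (r θ : ℝ) : ℂ := r * (I * Complex.exp (-(θ * I)))

lemma arcPoint_eq (r θ : ℝ) : arcPoint r θ = (r * sin θ : ℝ) + (r * cos θ : ℝ) * I := by
  rw [arcPoint, ← neg_mul, Complex.exp_mul_I, Complex.cos_neg, Complex.sin_neg]
  push_cast
  linear_combination -(r * Complex.sin θ) * Complex.I_sq

lemma arcPoint_im (r θ : ℝ) : (arcPoint r θ).im = r * cos θ := by
  rw [arcPoint_eq, Complex.add_im, Complex.ofReal_im, Complex.im_ofReal_mul, Complex.I_im]
  ring

lemma hasDerivAt_arcPoint (r θ : ℝ) :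
    HasDerivAt (arcPoint r) (r * Complex.exp (-(θ * I))) θ := by
  convert! ((((hasDerivAt_id (θ : ℂ)).mul_const I).neg.cexp.const_mul I).const_mul
    (r : ℂ)).comp_ofReal using 1
  simp only [id]
  linear_combination (r * Complex.exp (-(θ * I))) * Complex.I_sq

lemma neg_one_div_arcPoint (r θ : ℝ) : -1 / arcPoint r θ = arcPoint r⁻¹ (-θ) := by
  rw [arcPoint, arcPoint, ← div_div, ← div_div, Complex.div_I, Complex.exp_neg]
  push_cast
  simp only [neg_mul, neg_neg]
  field_simp

lemma sqrt_arcPoint_eq_exp {r θ : ℝ} (hr : 0 < r) (hθ : |θ| < π / 2) :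
    Complex.sqrt (arcPoint r θ) = √r * Complex.exp ((π / 2 - θ) / 2 * I) := by
  obtain ⟨hθ1, hθ2⟩ := abs_lt.1 hθ
  have hpolar : arcPoint r θ = Complex.exp (log r + (π / 2 - θ : ℝ) * I) := by
    rw [Complex.exp_add, ← Complex.ofReal_exp, exp_log hr, arcPoint]
    push_cast
    rw [sub_mul, sub_eq_add_neg, Complex.exp_add, Complex.exp_pi_div_two_mul_I]
  rw [hpolar, sqrt_eq_exp (Complex.exp_ne_zero _), Complex.log_exp (by simp; linarith)
    (by simp; linarith), add_div, Complex.exp_add, sqrt_eq_rpow, rpow_def_of_pos hr]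
  push_cast
  ring_nf

lemma sqrt_arcPoint {r θ : ℝ} (hr : 0 < r) (hθ : |θ| < π / 2) :
    Complex.sqrt (arcPoint r θ) =
      Complex.sqrt I * (√r * Complex.exp (-(θ / 2 * I))) := by
  have hI := sqrt_arcPoint_eq_exp one_pos (θ := 0) (by simpa using by positivity)
  rw [show arcPoint 1 0 = I by simp [arcPoint]] at hI
  rw [sqrt_arcPoint_eq_exp hr hθ, hI, sqrt_one, Complex.ofReal_one, one_mul, mul_left_comm,
    ← Complex.exp_add]
  push_cast
  ring_nf

lemma eta_arcPoint {r θ : ℝ} (hr : 0 < r) (hθ : |θ| < π / 2) :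
    √r * Complex.exp (-(θ / 2 * I)) * eta (arcPoint r θ) = eta (arcPoint r⁻¹ (-θ)) := by
  have him : 0 < (arcPoint r θ).im := by
    rw [arcPoint_im]
    exact mul_pos hr (cos_pos_of_mem_Ioo (abs_lt.1 hθ))
  have hI : Complex.sqrt I ≠ 0 := by simp [Complex.sqrt]
  have hS := ModularForm.eta_comp_eq_csqrt_I_inv him
  simp only [Function.comp_apply, Pi.smul_apply, Pi.mul_apply, smul_eq_mul] at hS
  rw [← neg_one_div_arcPoint, hS, sqrt_arcPoint hr hθ, mul_assoc (Complex.sqrt I),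
    inv_mul_cancel_left₀ hI]

lemma arcPoint_div_sq (r θ : ℝ) : arcPoint r θ / r ^ 2 = arcPoint r⁻¹ θ := by
  simp only [arcPoint, Complex.ofReal_inv]
  field_simp

lemma arcPoint_add_arcPoint_neg (r θ : ℝ) :
    arcPoint r θ + arcPoint r (-θ) = (2 * r * cos θ : ℝ) * I := by
  rw [arcPoint_eq, arcPoint_eq, sin_neg, cos_neg]
  push_cast
  ring

lemma exp_arcPoint {n : ℕ} {r : ℝ} (hr0 : 0 < r) (hr : r ^ 2 * (24 * n - 1) = 1) (θ : ℝ) :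
    Complex.exp (-(π * I * (24 * n - 1) * arcPoint r θ / 12)) =
      exp (π / (6 * r) * cos θ) * qParam 24 (arcPoint r⁻¹ (-θ)) := by
  have hn : (24 * n - 1 : ℂ) = 1 / r ^ 2 := by
    rw [eq_div_iff (pow_ne_zero 2 (by exact_mod_cast hr0.ne')), mul_comm]
    exact_mod_cast hr
  have hadd : arcPoint r θ / r ^ 2 + arcPoint r⁻¹ (-θ) = (2 * r⁻¹ * cos θ : ℝ) * I := by
    rw [arcPoint_div_sq, arcPoint_add_arcPoint_neg]
  rw [qParam, Complex.ofReal_exp, ← Complex.exp_add, hn]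
  congr 1
  push_cast at hadd ⊢
  linear_combination -(π * I / 12) * hadd -
    (π * (r : ℂ)⁻¹ * Complex.cos θ / 6) * Complex.I_sq

lemma cauchyIntegrand_arcPoint {n : ℕ} {r θ : ℝ} (hr0 : 0 < r) (hr : r ^ 2 * (24 * n - 1) = 1)
    (hθ : |θ| < π / 2) :
    cauchyIntegrand n (arcPoint r θ) =
      (√r * exp (π / (6 * r) * cos θ) : ℝ) * Complex.exp (-(θ / 2 * I)) *
        (eulerFunction (qParam 1 (arcPoint r⁻¹ (-θ))))⁻¹ := by
  have hsqrt : (√r : ℂ) * Complex.exp (-(θ / 2 * I)) ≠ 0 :=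
    mul_ne_zero (by exact_mod_cast (sqrt_pos.2 hr0).ne') (Complex.exp_ne_zero _)
  have hqParam : qParam 24 (arcPoint r⁻¹ (-θ)) ≠ 0 := Complex.exp_ne_zero _
  have heta : eta (arcPoint r⁻¹ (-θ)) =
      qParam 24 (arcPoint r⁻¹ (-θ)) * eulerFunction (qParam 1 (arcPoint r⁻¹ (-θ))) := rfl
  rw [cauchyIntegrand_eq_div_eta, exp_arcPoint hr0 hr,
    eq_div_of_mul_eq hsqrt ((mul_comm _ _).trans (eta_arcPoint hr0 hθ)), heta, div_div_eq_mul_div,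
    mul_right_comm, mul_comm (qParam 24 _),
    mul_div_mul_right _ _ hqParam]
  push_cast
  ring

end Arc

section Contour

open Function.Periodic (qParam)

/-- The main part of the Cauchy integrand along the arc of radius `π / (6 * m)`, in the variable
`t = sin (θ / 2)` and up to the factor `r * √r`. -/
noncomputable def mainIntegrand (m t : ℝ) : ℝ := 2 * (1 - 4 * t ^ 2) * exp (m * (1 - 2 * t ^ 2))

/-- The contribution of the arc `|θ| ≤ π / 3`, whose end points correspond to `t = ±1 / 2`. -/
noncomputable def mainIntegral (m : ℝ) : ℝ := ∫ t in (-(1 / 2))..(1 / 2), mainIntegrand m t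

lemma continuous_mainIntegrand (m : ℝ) : Continuous (mainIntegrand m) := by
  unfold mainIntegrand
  fun_prop

lemma hasDerivAt_integral_mainIntegrand (m θ : ℝ) :
    HasDerivAt (fun θ ↦ ∫ t in (-(1 / 2))..sin (θ / 2), mainIntegrand m t)
      (exp (m * cos θ) * cos (3 / 2 * θ)) θ := by
  have hcont := continuous_mainIntegrand m
  convert! (intervalIntegral.integral_hasDerivAt_right (hcont.intervalIntegrable _ _)
    (hcont.stronglyMeasurableAtFilter _ _) (hcont.continuousAt (x := sin (θ / 2)))).comp θ
    ((hasDerivAt_id θ).div_const 2).sin using 1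
  have hcos : cos θ = 1 - 2 * sin (θ / 2) ^ 2 := by
    rw [← mul_div_cancel₀ θ two_ne_zero, cos_two_mul, cos_sq', mul_div_cancel_left₀ _ two_ne_zero]
    ring
  have hcos3 : cos (3 / 2 * θ) = cos (θ / 2) * (1 - 4 * sin (θ / 2) ^ 2) := by
    rw [show 3 / 2 * θ = 3 * (θ / 2) by ring, cos_three_mul]
    linear_combination 4 * cos (θ / 2) * sin_sq_add_cos_sq (θ / 2)
  rw [mainIntegrand, hcos, hcos3, id]
  ring

lemma half_le_cos {θ : ℝ} (hθ : |θ| ≤ π / 3) : 1 / 2 ≤ cos θ := by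
  rw [← cos_abs, ← cos_pi_div_three]
  exact cos_le_cos_of_nonneg_of_le_pi (abs_nonneg _) (by linarith [pi_pos]) hθ

lemma norm_cauchyIntegrand_arcPoint_sub_le {n : ℕ} {r θ : ℝ} (hr0 : 0 < r) (hr1 : r ≤ 1 / 5)
    (hr : r ^ 2 * (24 * n - 1) = 1) (hθ : |θ| ≤ π / 3) :
    ‖cauchyIntegrand n (arcPoint r θ) * (r * Complex.exp (-(θ * I))) -
      (r * √r * exp (π / (6 * r) * cos θ) : ℝ) * Complex.exp (-(3 / 2 * θ : ℝ) * I)‖ ≤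
      2 * (r * √r) := by
  have hcos := half_le_cos hθ
  set q := qParam 1 (arcPoint r⁻¹ (-θ)) with hqdef
  have him : 2 * π * (arcPoint r⁻¹ (-θ)).im = 12 * (π / (6 * r) * cos θ) := by
    rw [arcPoint_im, cos_neg]
    field_simp
    norm_num
  have hq : ‖q‖ = exp (-(12 * (π / (6 * r) * cos θ))) := by rw [← him, norm_qParam_one]
  have hq1 : ‖q‖ ≤ 1 / 100 := by
    refine norm_qParam_one_le_of_five_le ?_
    rw [arcPoint_im, cos_neg, ← div_eq_inv_mul, ← mul_div_assoc, le_div_iff₀ hr0]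
    nlinarith [pi_gt_three]
  have hexp : Complex.exp (-(θ / 2 * I)) * Complex.exp (-(θ * I)) =
      Complex.exp (-(3 / 2 * θ : ℝ) * I) := by
    rw [← Complex.exp_add]
    push_cast
    ring_nf
  rw [cauchyIntegrand_arcPoint hr0 hr (by linarith [pi_pos]), ← hqdef]
  calc _ = ‖(r * √r * exp (π / (6 * r) * cos θ) : ℝ) * Complex.exp (-(3 / 2 * θ : ℝ) * I) *
          ((eulerFunction q)⁻¹ - 1)‖ := by
        rw [← hexp]
        congr 1
        push_cast
        ring
    _ = r * √r * exp (π / (6 * r) * cos θ) * ‖(eulerFunction q)⁻¹ - 1‖ := by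
        rw [norm_mul, norm_mul, Complex.norm_of_nonneg (by positivity), ← Complex.ofReal_neg,
          Complex.norm_exp_ofReal_mul_I, mul_one]
    _ ≤ r * √r * exp (π / (6 * r) * cos θ) *
          (2 * exp (-(12 * (π / (6 * r) * cos θ)))) := by
        gcongr
        exact hq ▸ norm_inv_eulerFunction_sub_one_le_of_norm_le hq1
    _ = 2 * (r * √r) * exp (-(11 * (π / (6 * r) * cos θ))) := by
        rw [mul_mul_mul_comm, ← exp_add, mul_comm (r * √r) 2]
        ring_nf
    _ ≤ 2 * (r * √r) := mul_le_of_le_one_right (by positivity) (exp_le_one_iff.2 (by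
        rw [neg_nonpos]
        positivity))

lemma abs_re_cauchyPrimitive_arcPoint_sub_le {n : ℕ} {r : ℝ} (hr0 : 0 < r) (hr1 : r ≤ 1 / 5)
    (hr : r ^ 2 * (24 * n - 1) = 1) :
    |(cauchyPrimitive n (arcPoint r (π / 3)) - cauchyPrimitive n (arcPoint r (-(π / 3)))).re -
      r * √r * mainIntegral (π / (6 * r))| ≤ 1 := by
  set f : ℝ → ℝ := fun θ ↦ (cauchyPrimitive n (arcPoint r θ)).re -
    r * √r * ∫ t in (-(1 / 2))..sin (θ / 2), mainIntegrand (π / (6 * r)) t with hf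
  have hderiv : ∀ θ ∈ Set.Icc (-(π / 3)) (π / 3), HasDerivWithinAt f
      (cauchyIntegrand n (arcPoint r θ) * (r * Complex.exp (-(θ * I))) -
        (r * √r * exp (π / (6 * r) * cos θ) : ℝ) * Complex.exp (-(3 / 2 * θ : ℝ) * I)).re
      (Set.Icc (-(π / 3)) (π / 3)) θ := by
    intro θ hθ
    have hcos : 0 < cos θ :=
      cos_pos_of_mem_Ioo ⟨by linarith [hθ.1, pi_pos], by linarith [hθ.2, pi_pos]⟩
    have hF := Complex.reCLM.hasFDerivAt.comp_hasDerivAt θ ((hasDerivAt_cauchyPrimitive n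
      (τ := arcPoint r θ) (by rw [arcPoint_im]; positivity)).comp θ (hasDerivAt_arcPoint r θ))
    convert! (hF.sub ((hasDerivAt_integral_mainIntegrand (π / (6 * r)) θ).const_mul
      (r * √r))).hasDerivWithinAt using 1
    rw [Complex.sub_re, Complex.re_ofReal_mul, ← Complex.ofReal_neg, Complex.exp_ofReal_mul_I_re,
      cos_neg, mul_assoc, Complex.reCLM_apply]
  have hbound : ∀ θ ∈ Set.Ico (-(π / 3)) (π / 3), ‖(cauchyIntegrand n (arcPoint r θ) *
      (r * Complex.exp (-(θ * I))) - (r * √r * exp (π / (6 * r) * cos θ) : ℝ) *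
        Complex.exp (-(3 / 2 * θ : ℝ) * I)).re‖ ≤ 2 * (r * √r) := fun θ hθ ↦
    (Complex.abs_re_le_norm _).trans
      (norm_cauchyIntegrand_arcPoint_sub_le hr0 hr1 hr (abs_le.2 ⟨hθ.1, hθ.2.le⟩))
  have hsin : sin (π / 3 / 2) = 1 / 2 := by
    rw [div_div, show (3 : ℝ) * 2 = 6 by norm_num, sin_pi_div_six]
  have hends : (cauchyPrimitive n (arcPoint r (π / 3)) -
      cauchyPrimitive n (arcPoint r (-(π / 3)))).re - r * √r * mainIntegral (π / (6 * r)) =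
      f (π / 3) - f (-(π / 3)) := by
    simp only [hf, neg_div, sin_neg, hsin, intervalIntegral.integral_same, Complex.sub_re,
      mainIntegral]
    ring
  have hsqrt : √r ≤ 1 / 2 := by
    rw [sqrt_le_left (by norm_num)]
    linarith
  rw [hends, ← norm_eq_abs]
  calc ‖f (π / 3) - f (-(π / 3))‖ ≤ 2 * (r * √r) * (π / 3 - -(π / 3)) :=
        norm_image_sub_le_of_norm_deriv_le_segment' hderiv hbound (π / 3)
          ⟨by linarith [pi_pos], le_rfl⟩
    _ ≤ 2 * (1 / 5 * (1 / 2)) * (4 / 3 - -(4 / 3)) := by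
        gcongr <;> linarith [pi_pos, pi_lt_four]
    _ ≤ 1 := by norm_num

lemma norm_cauchyPrimitive_sub_le {n : ℕ} {r a b : ℝ} (hr0 : 0 < r)
    (hr : r ^ 2 * (24 * n - 1) = 1) (hab : a ≤ b)
    (h : ∀ x ∈ Set.Icc a b, |x| ≤ 1 / 2 ∧ 3 / 4 * r ^ 2 ≤ x ^ 2) :
    ‖cauchyPrimitive n (b + (r / 2 : ℝ) * I) - cauchyPrimitive n (a + (r / 2 : ℝ) * I)‖ ≤
      51 / 50 * exp (π / (12 * r)) * (b - a) := by
  have hre : ∀ x : ℝ, (x + (r / 2 : ℝ) * I : ℂ).re = x := fun x ↦ by simp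
  have him : ∀ x : ℝ, (x + (r / 2 : ℝ) * I : ℂ).im = r / 2 := fun x ↦ by simp
  have hderiv : ∀ x ∈ Set.Icc a b, HasDerivWithinAt
      (fun x : ℝ ↦ cauchyPrimitive n (x + (r / 2 : ℝ) * I))
      (cauchyIntegrand n (x + (r / 2 : ℝ) * I)) (Set.Icc a b) x := fun x _ ↦ by
    simpa using ((hasDerivAt_cauchyPrimitive n (τ := x + (r / 2 : ℝ) * I) (by simpa)).comp (x : ℂ)
      ((hasDerivAt_id (x : ℂ)).add_const ((r / 2 : ℝ) * I))).comp_ofReal.hasDerivWithinAt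
  refine norm_image_sub_le_of_norm_deriv_le_segment' hderiv (fun x hx ↦ ?_) b ⟨hab, le_rfl⟩
  obtain ⟨hx1, hx2⟩ := h x (Set.Ico_subset_Icc_self hx)
  convert norm_cauchyIntegrand_le (n := n) (him x ▸ half_pos hr0) ((hre x).symm ▸ hx1)
    (by rw [hre, him]; linarith) using 3
  have hn : (24 * n - 1 : ℝ) = 1 / r ^ 2 := eq_one_div_of_mul_eq_one_right hr
  rw [him, hn]
  field_simp
  norm_num

lemma abs_p_sub_mainIntegral_le {n : ℕ} {r : ℝ} (hr0 : 0 < r) (hr1 : r ≤ 1 / 5)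
    (hr : r ^ 2 * (24 * n - 1) = 1) :
    |p n - r * √r * mainIntegral (π / (6 * r))| ≤ 51 / 50 * exp (π / (12 * r)) + 1 := by
  set c := √3 / 2 * r with hc
  have hc0 : 0 ≤ c := by positivity
  have hc1 : c ≤ 1 / 2 := by
    calc c ≤ 2 / 2 * (1 / 5) := by rw [hc]; gcongr; exact sqrt_le_iff.2 (by norm_num)
      _ ≤ 1 / 2 := by norm_num
  have hc2 : c ^ 2 = 3 / 4 * r ^ 2 := by rw [hc, mul_pow, div_pow, sq_sqrt] <;> norm_num
  have hright : arcPoint r (π / 3) = (c : ℝ) + (r / 2 : ℝ) * I := by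
    rw [arcPoint_eq, sin_pi_div_three, cos_pi_div_three, hc]
    push_cast
    ring
  have hleft : arcPoint r (-(π / 3)) = (-c : ℝ) + (r / 2 : ℝ) * I := by
    rw [arcPoint_eq, sin_neg, cos_neg, sin_pi_div_three, cos_pi_div_three, hc]
    push_cast
    ring
  have harc := abs_re_cauchyPrimitive_arcPoint_sub_le hr0 hr1 hr
  rw [hright, hleft] at harc
  have hsegR := (Complex.abs_re_le_norm _).trans <| norm_cauchyPrimitive_sub_le hr0 hr hc1
    fun x hx ↦ ⟨abs_le.2 ⟨by linarith [hx.1], hx.2⟩, by nlinarith [hx.1]⟩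
  have hsegL := (Complex.abs_re_le_norm _).trans <| norm_cauchyPrimitive_sub_le hr0 hr
    (neg_le_neg hc1) fun x hx ↦ ⟨abs_le.2 ⟨hx.1, by linarith [hx.2]⟩, by nlinarith [hx.2]⟩
  have hperiod := cauchyPrimitive_add_one_sub n (τ := (-(1 / 2) : ℝ) + (r / 2 : ℝ) * I)
    (by simpa using hr0)
  rw [show ((-(1 / 2) : ℝ) : ℂ) + (r / 2 : ℝ) * I + 1 = (1 / 2 : ℝ) + (r / 2 : ℝ) * I by
    push_cast; ring] at hperiod
  replace hperiod := congrArg Complex.re hperiod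
  rw [Complex.sub_re, Complex.ofReal_re] at hperiod
  rw [Complex.sub_re] at hsegR hsegL harc
  have hexp := mul_nonneg (exp_pos (π / (12 * r))).le hc0
  rw [abs_le] at *
  constructor <;> linarith

end Contour

section Asymptotic

lemma integral_Ioi_exp_neg_mul_sq_le {a b : ℝ} (ha : 0 < a) (hb : 0 < b) :
    ∫ t in Set.Ioi a, exp (-b * t ^ 2) ≤ exp (-(b * a ^ 2)) / (b * a) := by
  have hexp : ∫ t in Set.Ioi a, exp (-(b * a) * t) = exp (-(b * a ^ 2)) / (b * a) := by
    rw [integral_exp_mul_Ioi (neg_lt_zero.2 (by positivity)), neg_div_neg_eq]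
    ring_nf
  rw [← hexp]
  refine MeasureTheory.setIntegral_mono_on (integrable_exp_neg_mul_sq hb).integrableOn
    (integrableOn_exp_mul_Ioi (neg_lt_zero.2 (by positivity)) _) measurableSet_Ioi fun t ht ↦ ?_
  have hat : a * t ≤ t ^ 2 := by nlinarith [Set.mem_Ioi.1 ht]
  rw [exp_le_exp]
  nlinarith

lemma abs_integral_exp_neg_mul_sq_sub_le {a b : ℝ} (ha : 0 < a) (hb : 0 < b) :
    |(∫ t in (-a)..a, exp (-b * t ^ 2)) - √(π / b)| ≤ 2 * (exp (-(b * a ^ 2)) / (b * a)) := by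
  set g : ℝ → ℝ := fun t ↦ exp (-b * t ^ 2)
  have hint : MeasureTheory.Integrable g := integrable_exp_neg_mul_sq hb
  have hneg : ∫ t in (-a)..0, g t = ∫ t in 0..a, g t := by
    have := intervalIntegral.integral_comp_neg (a := 0) (b := a) g
    rw [neg_zero] at this
    simpa [g] using this.symm
  have hsymm := intervalIntegral.integral_add_adjacent_intervals (hint.intervalIntegrable (a := -a))
    (hint.intervalIntegrable (a := 0) (b := a))
  have hsplit := intervalIntegral.integral_interval_add_Ioi (a := 0) (b := a) hint.integrableOn
    hint.integrableOn
  rw [integral_gaussian_Ioi] at hsplit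
  have htail := integral_Ioi_exp_neg_mul_sq_le ha hb
  have hpos : 0 ≤ ∫ t in Set.Ioi a, g t :=
    MeasureTheory.setIntegral_nonneg measurableSet_Ioi fun t _ ↦ exp_nonneg _
  rw [abs_le]
  constructor <;> linarith

lemma integral_sq_mul_exp_neg_mul_sq (a : ℝ) {b : ℝ} (hb : b ≠ 0) :
    ∫ t in (-a)..a, t ^ 2 * exp (-b * t ^ 2) =
      (∫ t in (-a)..a, exp (-b * t ^ 2)) / (2 * b) - a * exp (-(b * a ^ 2)) / b := by
  have hderiv : ∀ t : ℝ, HasDerivAt (fun t ↦ -t / (2 * b) * exp (-b * t ^ 2))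
      (t ^ 2 * exp (-b * t ^ 2) - exp (-b * t ^ 2) / (2 * b)) t := by
    intro t
    convert! ((hasDerivAt_id t).neg.div_const (2 * b)).mul
      (((hasDerivAt_pow 2 t).const_mul (-b)).exp) using 1
    simp only [id, Pi.neg_apply]
    field_simp
    push_cast
    ring
  have h := intervalIntegral.integral_eq_sub_of_hasDerivAt (a := -a) (b := a)
    (fun t _ ↦ hderiv t) (Continuous.intervalIntegrable (by fun_prop) _ _)
  rw [intervalIntegral.integral_sub (Continuous.intervalIntegrable (by fun_prop) _ _)
    (Continuous.intervalIntegrable (by fun_prop) _ _), intervalIntegral.integral_div, neg_sq,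
    neg_mul] at h
  rw [sub_eq_iff_eq_add.1 h]
  field_simp
  ring

lemma mainIntegral_eq {m : ℝ} (hm : m ≠ 0) :
    mainIntegral m = 2 * exp m * ((1 - 1 / m) *
      (∫ t in (-(1 / 2))..(1 / 2), exp (-(2 * m) * t ^ 2)) + exp (-(m / 2)) / m) := by
  have hmain : ∀ t, mainIntegrand m t =
      2 * exp m * (exp (-(2 * m) * t ^ 2) - 4 * (t ^ 2 * exp (-(2 * m) * t ^ 2))) := fun t ↦ by
    rw [mainIntegrand, show m * (1 - 2 * t ^ 2) = m + -(2 * m) * t ^ 2 by ring, exp_add]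
    ring
  simp only [mainIntegral, hmain, intervalIntegral.integral_const_mul]
  rw [intervalIntegral.integral_sub (Continuous.intervalIntegrable (by fun_prop) _ _)
    (Continuous.intervalIntegrable (by fun_prop) _ _), intervalIntegral.integral_const_mul,
    integral_sq_mul_exp_neg_mul_sq _ (mul_ne_zero two_ne_zero hm),
    show 2 * m * (1 / 2) ^ 2 = m / 2 by ring]
  field_simp
  ring

lemma abs_mainIntegral_sub_le {m : ℝ} (hm : 1 ≤ m) :
    |mainIntegral m - 2 * exp m * √(π / (2 * m)) * (1 - 1 / m)| ≤ 6 * (exp (m / 2) / m) := by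
  have hm0 : 0 < m := by linarith
  have hgauss := abs_integral_exp_neg_mul_sq_sub_le (a := 1 / 2) one_half_pos
    (show 0 < 2 * m by positivity)
  rw [show 2 * m * (1 / 2) ^ 2 = m / 2 by ring, show 2 * m * (1 / 2) = m by ring] at hgauss
  rw [mainIntegral_eq hm0.ne']
  set J := ∫ t in (-(1 / 2))..(1 / 2), exp (-(2 * m) * t ^ 2)
  have hinv : 0 ≤ 1 - 1 / m := by rw [sub_nonneg, div_le_one hm0]; exact hm
  have hinv' : 1 - 1 / m ≤ 1 := by simpa using hm0.le
  have hbracket : |(1 - 1 / m) * (J - √(π / (2 * m))) + exp (-(m / 2)) / m| ≤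
      3 * (exp (-(m / 2)) / m) :=
    calc _ ≤ |(1 - 1 / m) * (J - √(π / (2 * m)))| + |exp (-(m / 2)) / m| := abs_add_le _ _
      _ = (1 - 1 / m) * |J - √(π / (2 * m))| + exp (-(m / 2)) / m := by
        rw [abs_mul, abs_of_nonneg hinv, abs_of_pos (a := exp (-(m / 2)) / m) (by positivity)]
      _ ≤ 1 * (2 * (exp (-(m / 2)) / m)) + exp (-(m / 2)) / m := by gcongr
      _ = _ := by ring
  calc _ = |2 * exp m * ((1 - 1 / m) * (J - √(π / (2 * m))) + exp (-(m / 2)) / m)| := by ring_nf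
    _ ≤ 2 * exp m * (3 * (exp (-(m / 2)) / m)) := by
      rw [abs_mul, abs_of_pos (by positivity)]
      gcongr
    _ = 6 * (exp (m + -(m / 2)) / m) := by rw [exp_add]; ring
    _ = 6 * (exp (m / 2) / m) := by ring_nf

lemma mu_eq_div {x r : ℝ} (hr0 : 0 < r) (hr : r ^ 2 * (24 * x - 1) = 1) :
    mu x = π / (6 * r) := by
  rw [mu, eq_one_div_of_mul_eq_one_right hr, sqrt_div zero_le_one, sqrt_one, sqrt_sq hr0.le]
  field_simp

lemma T_eq {x : ℝ} (hx : 0 < 24 * x - 1) :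
    T x = 2 * √3 / (24 * x - 1) * (1 - 1 / mu x) * exp (mu x) := by
  have hmu : mu x ^ 2 = (π / 6) ^ 2 * (24 * x - 1) := by rw [mu, mul_pow, sq_sqrt hx.le]
  have hcoeff : d / mu x ^ 2 = 2 * √3 / (24 * x - 1) := by
    rw [hmu, d, div_eq_div_iff (by positivity) hx.ne', div_mul_eq_mul_div,
      div_eq_iff (by positivity)]
    linear_combination (-(π ^ 2 * (24 * x - 1) / 3)) * sq_sqrt (show (0 : ℝ) ≤ 3 by norm_num)
  rw [T, hcoeff]

lemma T_eq_radius {x r : ℝ} (hr0 : 0 < r) (hr : r ^ 2 * (24 * x - 1) = 1) :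
    T x = r * √r * (2 * exp (mu x) * √(π / (2 * mu x)) * (1 - 1 / mu x)) := by
  have hmul : 0 < 24 * x - 1 := pos_of_mul_pos_right (one_pos.trans_le hr.ge) (sq_nonneg r)
  have hthree : π / (2 * mu x) = 3 * r := by
    rw [mu_eq_div hr0 hr]
    field_simp
    norm_num
  rw [T_eq hmul, hthree, sqrt_mul (by norm_num), eq_one_div_of_mul_eq_one_right hr,
    div_div_eq_mul_div, div_one]
  linear_combination (-(2 * √3 * r * exp (mu x) * (1 - 1 / mu x))) * sq_sqrt hr0.le

lemma sq_lt_exp_div_six {m : ℝ} (hm : 50 ≤ m) : 11 / 10 * m ^ 2 < 23 / 25 * exp (m / 6) := by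
  obtain ⟨t, ht, rfl⟩ : ∃ t : ℝ, 0 ≤ t ∧ m = 50 + 6 * t := ⟨(m - 50) / 6, by linarith, by ring⟩
  have hexp : (4000 : ℝ) ≤ exp (25 / 3) := by
    refine le_of_pow_le_pow_left₀ three_ne_zero (exp_nonneg _) ?_
    calc (4000 : ℝ) ^ 3 ≤ 2.7182818283 ^ 25 := by norm_num
      _ ≤ exp 1 ^ 25 := by gcongr; exact exp_one_gt_d9.le
      _ = exp (25 / 3) ^ 3 := by rw [← exp_nat_mul, ← exp_nat_mul]; norm_num
  have hmul : 4000 * (1 + t + t ^ 2 / 2) ≤ exp (25 / 3) * exp t := by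
    gcongr
    exact quadratic_le_exp_of_nonneg ht
  rw [show (50 + 6 * t) / 6 = 25 / 3 + t by ring, exp_add]
  nlinarith

lemma fifty_le_mu {x : ℝ} (hx : 400 ≤ x) : 50 ≤ mu x := by
  have hsqrt : (97 : ℝ) ≤ √(24 * x - 1) := le_sqrt_of_sq_le (by linarith)
  rw [mu]
  nlinarith [pi_gt_d2]

lemma lt_T_mul_exp {x : ℝ} (hx : 400 ≤ x) :
    11 / 10 * exp (mu x / 2) < T x * exp (-(mu x) / 3) := by
  have hm := fifty_le_mu hx
  set m := mu x with hmdef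
  have : 0 < m := by linarith
  have hd : (94 / 100 : ℝ) ≤ d := by
    have hsqrt : √3 ≤ 1.74 := sqrt_le_iff.2 (by norm_num)
    calc (94 / 100 : ℝ) ≤ 3.14 ^ 2 / (6 * 1.74) := by norm_num
      _ ≤ d := by rw [d]; gcongr; exact pi_gt_d2.le
  have hsq := sq_lt_exp_div_six hm
  have hinv : 49 / 50 ≤ 1 - 1 / m := by
    have : 1 / m ≤ 1 / 50 := by gcongr
    linarith
  have hexp : exp (m / 6) * exp (m / 2) = exp m * exp (-m / 3) := by
    rw [← exp_add, ← exp_add]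
    ring_nf
  calc 11 / 10 * exp (m / 2) = 11 / 10 * m ^ 2 / m ^ 2 * exp (m / 2) := by field_simp
    _ < 23 / 25 * exp (m / 6) / m ^ 2 * exp (m / 2) := by gcongr
    _ = (94 / 100) / m ^ 2 * (46 / 47) * (exp (m / 6) * exp (m / 2)) := by ring
    _ ≤ d / m ^ 2 * (1 - 1 / m) * (exp (m / 6) * exp (m / 2)) := by gcongr; linarith
    _ = T x * exp (-m / 3) := by rw [hexp, T, ← hmdef, mul_assoc _ (exp m)]

lemma abs_p_sub_T_le {n : ℕ} (hn : 400 ≤ n) : |p n - T n| ≤ 11 / 10 * exp (mu n / 2) := by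
  have hn' : (400 : ℝ) ≤ n := by exact_mod_cast hn
  set r := (√(24 * n - 1))⁻¹ with hrdef
  have hr : r ^ 2 * (24 * n - 1) = 1 := by
    rw [hrdef, inv_pow, sq_sqrt (by linarith), inv_mul_cancel₀ (by linarith)]
  have hr0 : 0 < r := inv_pos.2 (sqrt_pos.2 (by linarith))
  have hr1 : r ≤ 1 / 97 := by
    rw [hrdef, one_div]
    gcongr
    exact le_sqrt_of_sq_le (by linarith)
  have hm := fifty_le_mu hn'
  have hcontour := abs_p_sub_mainIntegral_le hr0 (by linarith) hr
  rw [show π / (12 * r) = π / (6 * r) / 2 by ring, ← mu_eq_div hr0 hr] at hcontour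
  have hgauss : |r * √r * mainIntegral (mu n) - T n| ≤ 1 / 97 * (6 * (exp (mu n / 2) / 50)) := by
    rw [T_eq_radius hr0 hr, ← mul_sub, abs_mul, abs_of_nonneg (by positivity)]
    gcongr
    · exact (mul_le_of_le_one_right hr0.le (sqrt_le_one.2 (by linarith))).trans hr1
    · refine (abs_mainIntegral_sub_le (by linarith)).trans ?_
      gcongr
  linarith [abs_sub_le (p n) (r * √r * mainIntegral (mu n)) (T n), add_one_le_exp (mu n / 2)]

lemma abs_div_sub_one_lt_of_abs_sub_lt {a b ε : ℝ} (hb : 0 < b) (h : |a - b| < b * ε) :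
    |a / b - 1| < ε := by
  rwa [div_sub_one hb.ne', abs_div, abs_of_pos hb, div_lt_iff₀' hb]

lemma abs_p_div_T_sub_one_lt_of_large {n : ℕ} (hn : 400 ≤ n) :
    |p n / T n - 1| < exp (-(mu n) / 3) := by
  have hlt := lt_T_mul_exp (x := n) (by exact_mod_cast hn)
  exact abs_div_sub_one_lt_of_abs_sub_lt
    (pos_of_mul_pos_left ((by positivity : (0 : ℝ) ≤ _).trans_lt hlt) (exp_nonneg _))
    ((abs_p_sub_T_le hn).trans_lt hlt)

end Asymptotic

section PartitionTable

open PowerSeries (coeff X)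
open scoped PowerSeries.WithPiTopology

/-- The generating series of the partition function. -/
def partitionSeries : PowerSeries ℤ := .mk fun n ↦ Fintype.card (Nat.Partition n)

/-- The first `n` values of the partition function, in decreasing order of the index. -/
def partitionList : ℕ → List ℕ
  | 0 => []
  | n + 1 => Fintype.card (Nat.Partition n) :: partitionList n

/-- The alternating sum `L[0] - L[2 k + 1] - L[3 k + 2] + ⋯`. If the head of `L` is the entry of
index `k (3 k + 1) / 2` of a longer list, the terms are the entries of that list at the generalized
pentagonal numbers from this one on, in `s` pairs; indices beyond the end contribute `0`. -/
def pentagonalSum : ℕ → ℕ → List ℕ → ℤ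
  | 0, _, _ => 0
  | s + 1, k, L =>
    L.headD 0 - (L.drop (2 * k + 1)).headD 0 - pentagonalSum s (k + 1) (L.drop (3 * k + 2))

lemma partitionSeries_mul_pentagonalSeries :
    partitionSeries * PowerSeries.pentagonalSeries ℤ = 1 := by
  have hfactor (i : ℕ) : (if True then ∑' j : ℕ, (X : PowerSeries ℤ) ^ ((i + 1) * j) else 1) *
      (1 - X ^ (i + 1)) = 1 := by
    simp only [if_true, pow_mul]
    exact PowerSeries.WithPiTopology.tsum_pow_mul_one_sub_of_constantCoeff_eq_zero (by simp)
  have hprod := (Nat.Partition.hasProd_powerSeriesMk_card_restricted ℤ fun _ ↦ True).mul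
    (PowerSeries.WithPiTopology.hasProd_one_sub_X_pow ℤ)
  simp only [hfactor] at hprod
  simpa [Nat.Partition.restricted, partitionSeries] using hprod.unique hasProd_one

lemma getD_partitionList (n j : ℕ) : (partitionList (n + 1)).getD j 0 =
    if j ≤ n then Fintype.card (Nat.Partition (n - j)) else 0 := by
  induction n generalizing j with
  | zero => cases j <;> simp [partitionList]
  | succ n ih =>
    cases j with
    | zero => simp [partitionList]
    | succ j => rw [partitionList, List.getD_cons_succ, ih]; simp

lemma coeff_partitionSeries_mul_X_pow (n j : ℕ) :
    coeff n (partitionSeries * X ^ j) = ((partitionList (n + 1)).getD j 0 : ℤ) := by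
  rw [PowerSeries.coeff_mul_X_pow', getD_partitionList, partitionSeries, PowerSeries.coeff_mk]
  push_cast
  rfl

lemma pentagonal_natCast_add_one (k : ℕ) :
    pentagonal ((k : ℤ) + 1) = pentagonal (-(k : ℤ)) + (2 * k + 1) := by
  zify
  linarith [two_mul_natCast_pentagonal ((k : ℤ) + 1), two_mul_natCast_pentagonal (-(k : ℤ))]

lemma pentagonal_neg_natCast_add_one (k : ℕ) :
    pentagonal (-((k : ℤ) + 1)) = pentagonal (-(k : ℤ)) + (3 * k + 2) := by
  zify
  linarith [two_mul_natCast_pentagonal (-((k : ℤ) + 1)), two_mul_natCast_pentagonal (-(k : ℤ))]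

lemma sum_neg_one_pow_mul_getD_partitionList {n s : ℕ} (hn : n ≠ 0)
    (hs : n < pentagonal (-(s : ℤ))) :
    ∑ k ∈ range s, (-1) ^ k * ((partitionList (n + 1)).getD (pentagonal (-(k : ℤ))) 0 -
      (partitionList (n + 1)).getD (pentagonal ((k : ℤ) + 1)) 0 : ℤ) = 0 := by
  have hsum := (PowerSeries.WithPiTopology.hasSum_pow_pentagonal_sub_pentagonalSeries ℤ).mul_left
    partitionSeries
  rw [partitionSeries_mul_pentagonalSeries,
    PowerSeries.WithPiTopology.hasSum_iff_hasSum_coeff] at hsum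
  have hterm (k : ℕ) : coeff n (partitionSeries * ((-1) ^ k * (X ^ pentagonal (-(k : ℤ)) -
      X ^ pentagonal ((k : ℤ) + 1)))) =
      (-1) ^ k * ((partitionList (n + 1)).getD (pentagonal (-(k : ℤ))) 0 -
        (partitionList (n + 1)).getD (pentagonal ((k : ℤ) + 1)) 0 : ℤ) := by
    rw [mul_left_comm, mul_sub, show (-1 : PowerSeries ℤ) ^ k = PowerSeries.C ((-1) ^ k) by simp,
      PowerSeries.coeff_C_mul, map_sub, coeff_partitionSeries_mul_X_pow,
      coeff_partitionSeries_mul_X_pow]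
  have hcoeff := hsum n
  simp only [hterm, PowerSeries.coeff_one, if_neg hn] at hcoeff
  refine (hasSum_sum_of_ne_finset_zero (L := .unconditional ℕ) fun k hk ↦ ?_).unique hcoeff
  have hmono : pentagonal (-(s : ℤ)) ≤ pentagonal (-(k : ℤ)) :=
    pentagonal_strictAntiOn.antitoneOn (by simp) (by simp) (by simpa using hk)
  have hnext := pentagonal_natCast_add_one k
  rw [getD_partitionList, getD_partitionList, if_neg (by omega), if_neg (by omega)]
  simp

lemma pentagonalSum_drop (L : List ℕ) (s k : ℕ) :
    pentagonalSum s k (L.drop (pentagonal (-(k : ℤ)))) =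
      ∑ i ∈ range s, (-1) ^ i * (L.getD (pentagonal (-((k + i : ℕ) : ℤ))) 0 -
        L.getD (pentagonal (((k + i : ℕ) : ℤ) + 1)) 0 : ℤ) := by
  induction s generalizing k with
  | zero => simp [pentagonalSum]
  | succ s ih =>
    have hhead (j : ℕ) : (L.drop j).headD 0 = L.getD j 0 := by
      rw [List.headD_eq_head?_getD, List.head?_drop, List.getD_eq_getElem?_getD]
    rw [pentagonalSum, List.drop_drop, List.drop_drop, hhead, hhead, ← pentagonal_natCast_add_one,
      ← pentagonal_neg_natCast_add_one, ← Nat.cast_succ, ih, sum_range_succ', sub_eq_add_neg,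
      ← sum_neg_distrib, add_comm]
    congr 1
    · refine sum_congr rfl fun i _ ↦ ?_
      rw [show k + 1 + i = k + (i + 1) by ring, pow_succ]
      ring
    · simp

lemma pentagonalSum_partitionList {n s : ℕ} (hn : n ≠ 0) (hs : n < pentagonal (-(s : ℤ))) :
    pentagonalSum s 0 (partitionList (n + 1)) = 0 := by
  have hdrop := pentagonalSum_drop (partitionList (n + 1)) s 0
  simp only [zero_add] at hdrop
  exact hdrop.trans (sum_neg_one_pow_mul_getD_partitionList hn hs)

/-- The value `p n` obtained by Euler's recurrence from `L = [p (n - 1), …, p 0]`. -/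
def nextPartition (s : ℕ) (L : List ℕ) : ℕ := (L.headD 0 + pentagonalSum s 1 L.tail).toNat

lemma nextPartition_partitionList {n s : ℕ} (hn : n ≠ 0) (hs : n < pentagonal (-(s + 1 : ℤ))) :
    nextPartition s (partitionList n) = Fintype.card (Nat.Partition n) := by
  have hrec := pentagonalSum_partitionList (s := s + 1) hn (by exact_mod_cast hs)
  simp only [partitionList, pentagonalSum, List.headD_cons, mul_zero, zero_add,
    List.drop_succ_cons, List.drop_zero] at hrec
  rw [nextPartition, ← List.drop_one]
  omega

/-- `f n`, in a form for which the kernel evaluates `n` to a numeral before it applies `f`. -/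
def force {α : Type} (n : ℕ) (f : ℕ → α) : α := n.casesOn (f 0) fun k ↦ f (k + 1)

lemma force_eq {α : Type} (n : ℕ) (f : ℕ → α) : force n f = f n := by cases n <;> rfl

/-- Prepends `k` further values of the partition function to `L` by Euler's recurrence. -/
def extendPartitions (s : ℕ) : ℕ → List ℕ → List ℕ
  | 0, L => L
  | k + 1, L => force (nextPartition s L) fun a ↦ extendPartitions s k (a :: L)

lemma extendPartitions_partitionList {s n k : ℕ} (hn : n ≠ 0)
    (hs : n + k ≤ pentagonal (-(s + 1 : ℤ))) :
    extendPartitions s k (partitionList n) = partitionList (n + k) := by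
  induction k generalizing n with
  | zero => rfl
  | succ k ih =>
    rw [extendPartitions, force_eq, nextPartition_partitionList hn (by omega), ← partitionList,
      ih n.succ_ne_zero (by omega), Nat.succ_add_eq_add_succ]

/-- The values `p 399, …, p 1, p 0`. -/
def partitionTable : List ℕ := extendPartitions 16 399 [1]

lemma partitionTable_eq : partitionTable = partitionList 400 :=
  extendPartitions_partitionList (n := 1) one_ne_zero (by decide)

end PartitionTable

section SmallCases

/-- The scale of the fixed-point arithmetic: the natural number `a` stands for `a / fixedOne`. -/
def fixedOne : ℕ := 2 ^ 128

/-- Repeated squaring in fixed-point arithmetic, rounding down. -/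
def squareDown : ℕ → ℕ → ℕ
  | 0, l => l
  | k + 1, l => squareDown k (l ^ 2 / fixedOne)

/-- Newton's iteration for the square root of `M`. It only provides a candidate: `checkBound` tests
the result. -/
def newtonSqrt (M : ℕ) : ℕ → ℕ → ℕ
  | 0, x => x
  | k + 1, x => newtonSqrt M k ((x + M / x) / 2)

/-- A fixed-point lower bound for `exp` of the number represented by `a`. -/
def expLower (a : ℕ) : ℕ := squareDown 48 (fixedOne + a / 2 ^ 48)

/-- A fixed-point lower bound for `exp` of the negative of the number represented by `b`. -/
def expNegLower (b : ℕ) : ℕ := squareDown 48 (fixedOne - (b / 2 ^ 48 + 1))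

/-- A fixed-point lower bound for `π / 6` times the number represented by `c`. -/
def piDivSixMulLower (c : ℕ) : ℕ := c * 314159265358979323846 / (6 * 10 ^ 20)

/-- A fixed-point upper bound for `π / 6` times the number represented by `c`. -/
def piDivSixMulUpper (c : ℕ) : ℕ := c * 314159265358979323847 / (6 * 10 ^ 20) + 1

lemma fixedOne_pos : (0 : ℝ) < fixedOne := by norm_num [fixedOne]

lemma div_le_natDiv_add_one (x y : ℕ) : (x : ℝ) / y ≤ ((x / y + 1 : ℕ) : ℝ) := by
  rw [← Nat.floor_div_eq_div (K := ℝ), Nat.cast_add_one]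
  exact (Nat.lt_floor_add_one _).le

lemma squareDown_le_exp (k : ℕ) {l : ℕ} {x : ℝ} (h : (l : ℝ) / fixedOne ≤ exp (x / 2 ^ k)) :
    (squareDown k l : ℝ) / fixedOne ≤ exp x := by
  induction k generalizing l with
  | zero => simpa [squareDown] using h
  | succ k ih =>
    refine ih ?_
    have hF := fixedOne_pos
    calc ((l ^ 2 / fixedOne : ℕ) : ℝ) / fixedOne
        ≤ ((l ^ 2 : ℕ) / fixedOne : ℝ) / fixedOne := by gcongr; exact Nat.cast_div_le
      _ = ((l : ℝ) / fixedOne) ^ 2 := by push_cast; field_simp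
      _ ≤ exp (x / 2 ^ (k + 1)) ^ 2 := by gcongr
      _ = exp (x / 2 ^ k) := by rw [← exp_nat_mul, pow_succ]; congr 1; push_cast; ring

lemma expLower_le {a : ℕ} {x : ℝ} (hx : (a : ℝ) / fixedOne ≤ x) :
    (expLower a : ℝ) / fixedOne ≤ exp x := by
  have hF := fixedOne_pos
  refine squareDown_le_exp 48 (le_trans ?_ (add_one_le_exp _))
  have hdiv : ((a / 2 ^ 48 : ℕ) : ℝ) ≤ (a : ℝ) / 2 ^ 48 := by
    exact_mod_cast Nat.cast_div_le (α := ℝ) (m := a) (n := 2 ^ 48)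
  calc ((fixedOne + a / 2 ^ 48 : ℕ) : ℝ) / fixedOne
      ≤ (fixedOne + (a : ℝ) / 2 ^ 48) / fixedOne := by rw [Nat.cast_add]; gcongr
    _ = (a : ℝ) / fixedOne / 2 ^ 48 + 1 := by field_simp; ring
    _ ≤ x / 2 ^ 48 + 1 := by gcongr

lemma expNegLower_le {b : ℕ} {x : ℝ} (hx : x ≤ (b : ℝ) / fixedOne) :
    (expNegLower b : ℝ) / fixedOne ≤ exp (-x) := by
  have hF := fixedOne_pos
  refine squareDown_le_exp 48 ?_
  rcases le_total fixedOne (b / 2 ^ 48 + 1) with h | h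
  · rw [Nat.sub_eq_zero_of_le h, Nat.cast_zero, zero_div]
    positivity
  have hdiv : (b : ℝ) / 2 ^ 48 ≤ ((b / 2 ^ 48 + 1 : ℕ) : ℝ) := by
    exact_mod_cast div_le_natDiv_add_one b (2 ^ 48)
  calc ((fixedOne - (b / 2 ^ 48 + 1) : ℕ) : ℝ) / fixedOne
      ≤ (fixedOne - (b : ℝ) / 2 ^ 48) / fixedOne := by rw [Nat.cast_sub h]; gcongr
    _ = -((b : ℝ) / fixedOne) / 2 ^ 48 + 1 := by field_simp; ring
    _ ≤ -x / 2 ^ 48 + 1 := by gcongr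
    _ ≤ exp (-x / 2 ^ 48) := add_one_le_exp _

lemma div_fixedOne_le_sqrt {N c : ℕ} (h : c ^ 2 ≤ N * fixedOne ^ 2) :
    (c : ℝ) / fixedOne ≤ √N := by
  have hF := fixedOne_pos
  refine le_sqrt_of_sq_le ?_
  rw [div_pow, div_le_iff₀ (by positivity)]
  exact_mod_cast h

lemma sqrt_le_div_fixedOne {N c : ℕ} (h : N * fixedOne ^ 2 ≤ c ^ 2) :
    √N ≤ (c : ℝ) / fixedOne := by
  have hF := fixedOne_pos
  refine sqrt_le_iff.2 ⟨by positivity, ?_⟩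
  rw [div_pow, le_div_iff₀ (by positivity)]
  exact_mod_cast h

lemma piDivSixMulLower_le {c : ℕ} {y : ℝ} (hc : (c : ℝ) / fixedOne ≤ y) :
    (piDivSixMulLower c : ℝ) / fixedOne ≤ π / 6 * y := by
  have hF := fixedOne_pos
  have hdiv : (piDivSixMulLower c : ℝ) ≤ c * 314159265358979323846 / (6 * 10 ^ 20) := by
    have := Nat.cast_div_le (α := ℝ) (m := c * 314159265358979323846) (n := 6 * 10 ^ 20)
    rw [piDivSixMulLower]
    exact_mod_cast this
  calc (piDivSixMulLower c : ℝ) / fixedOne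
      ≤ c * 314159265358979323846 / (6 * 10 ^ 20) / fixedOne := by gcongr
    _ = 3.14159265358979323846 / 6 * (c / fixedOne) := by ring
    _ ≤ π / 6 * y := by gcongr; exact pi_gt_d20.le

lemma le_piDivSixMulUpper {c : ℕ} {y : ℝ} (hc : y ≤ (c : ℝ) / fixedOne) :
    π / 6 * y ≤ (piDivSixMulUpper c : ℝ) / fixedOne := by
  have hF := fixedOne_pos
  have hdiv : (c * 314159265358979323847 / (6 * 10 ^ 20) : ℝ) ≤ piDivSixMulUpper c := by
    have := div_le_natDiv_add_one (c * 314159265358979323847) (6 * 10 ^ 20)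
    rw [piDivSixMulUpper]
    exact_mod_cast this
  calc π / 6 * y ≤ π / 6 * (c / fixedOne) := by gcongr
    _ ≤ 3.14159265358979323847 / 6 * (c / fixedOne) := by gcongr; exact pi_lt_d20.le
    _ = c * 314159265358979323847 / (6 * 10 ^ 20) / fixedOne := by ring
    _ ≤ piDivSixMulUpper c / fixedOne := by gcongr

lemma abs_div_T_sub_one_lt {x P a b A E ε : ℝ} (hx : 0 < 24 * x - 1) (hP : 0 ≤ P)
    (ha : 1 < a) (ha_mu : a ≤ mu x) (hb_mu : mu x ≤ b) (hA : 0 ≤ A) (hA_exp : A ≤ exp (mu x))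
    (hE_exp : E ≤ exp (-mu x)) (hε : 0 ≤ ε) (hε_one : ε ≤ 1) (hεE : ε ^ 3 ≤ E)
    (hupper : P < 2 * 1.732050807568 / (24 * x - 1) * (1 - 1 / a) * A * (1 + ε))
    (hlower : 2 * 1.732050807569 / (24 * x - 1) * (1 - 1 / b) * (1 - ε) < P * E) :
    |P / T x - 1| < exp (-(mu x) / 3) := by
  have hs : 1.732050807568 ≤ √3 := le_sqrt_of_sq_le (by norm_num)
  have ht : √3 ≤ 1.732050807569 := sqrt_le_iff.2 ⟨by norm_num, by norm_num⟩
  have hmu : 1 < mu x := ha.trans_le ha_mu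
  have hmu_inv : 0 < 1 - 1 / mu x := by rw [sub_pos, div_lt_one] <;> linarith
  have ha_inv : 0 < 1 - 1 / a := by rw [sub_pos, div_lt_one] <;> linarith
  have hT : 0 < T x := by rw [T_eq hx]; positivity
  have hε_exp : ε ≤ exp (-(mu x) / 3) := by
    refine le_of_pow_le_pow_left₀ three_ne_zero (exp_nonneg _) (hεE.trans (hE_exp.trans_eq ?_))
    rw [← exp_nat_mul]
    congr 1
    push_cast
    ring
  have hPT : P < T x * (1 + ε) := by
    refine hupper.trans_le ?_
    rw [T_eq hx]
    gcongr
  have hTP : T x * (1 - ε) < P := by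
    have hexp : exp (mu x) * exp (-mu x) = 1 := by rw [← exp_add, add_neg_cancel, exp_zero]
    refine lt_of_mul_lt_mul_right ?_ (exp_nonneg (-mu x))
    calc T x * (1 - ε) * exp (-mu x)
        = 2 * √3 / (24 * x - 1) * (1 - 1 / mu x) * (1 - ε) := by
          rw [T_eq hx]
          linear_combination 2 * √3 / (24 * x - 1) * (1 - 1 / mu x) * (1 - ε) * hexp
      _ ≤ 2 * 1.732050807569 / (24 * x - 1) * (1 - 1 / b) * (1 - ε) := by
          gcongr
      _ < P * E := hlower
      _ ≤ P * exp (-mu x) := by gcongr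
  have hTε : T x * ε ≤ T x * exp (-(mu x) / 3) := by gcongr
  exact abs_div_sub_one_lt_of_abs_sub_lt hT (abs_lt.2 ⟨by linarith, by linarith⟩)

/-- A numerical check of the bound at `n`, where `P` is the value of `p n`: the last two conditions
compare `P` with `T n * (1 ± ε)` for some `ε = 2 ^ (-k) ≤ exp (-(mu n) / 3)`, with `T n` replaced by
its fixed-point bounds. -/
def checkBound (n P : ℕ) : Bool :=
  let N := 24 * n - 1
  let c := newtonSqrt (N * fixedOne ^ 2) 10 (64 * fixedOne) - 1
  let a := piDivSixMulLower c
  let b := piDivSixMulUpper (c + 2)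
  let E := expNegLower b
  let k := (130 - E.log2) / 3
  let ε := (1 / (2 ^ k : ℕ) : ℚ)
  decide (c ^ 2 ≤ N * fixedOne ^ 2) && decide (N * fixedOne ^ 2 ≤ (c + 2) ^ 2) &&
    decide (fixedOne < a) && decide (fixedOne ≤ E * (2 ^ k) ^ 3) &&
    decide ((P : ℚ) < 2 * 1.732050807568 / N * (1 - 1 / (a / fixedOne)) *
      (expLower a / fixedOne) * (1 + ε)) &&
    decide (2 * 1.732050807569 / N * (1 - 1 / (b / fixedOne)) * (1 - ε) < (P * (E / fixedOne) : ℚ))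

lemma abs_div_T_sub_one_lt_of_checkBound {n P : ℕ} (hn : 1 ≤ n) (h : checkBound n P = true) :
    |(P : ℝ) / T n - 1| < exp (-(mu n) / 3) := by
  simp only [checkBound, Bool.and_eq_true, decide_eq_true_eq] at h
  obtain ⟨⟨⟨⟨⟨hc, hc'⟩, ha⟩, hk⟩, hupper⟩, hlower⟩ := h
  have hF := fixedOne_pos
  have hN : ((24 * n - 1 : ℕ) : ℝ) = 24 * n - 1 := by
    rw [Nat.cast_sub (by omega)]; push_cast; rfl
  have hN_pos : (0 : ℝ) < 24 * n - 1 := by rw [← hN]; exact_mod_cast (by omega : 0 < 24 * n - 1)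
  have ha_mu := piDivSixMulLower_le (div_fixedOne_le_sqrt hc)
  have hb_mu := le_piDivSixMulUpper (sqrt_le_div_fixedOne hc')
  rw [hN, ← mu] at ha_mu hb_mu
  generalize newtonSqrt _ _ _ - 1 = c at *
  generalize (130 - (expNegLower _).log2) / 3 = k at *
  refine abs_div_T_sub_one_lt (ε := 1 / (2 ^ k : ℕ)) hN_pos P.cast_nonneg ?_ ha_mu hb_mu
    (by positivity) (expLower_le ha_mu) (expNegLower_le hb_mu) (by positivity) ?_ ?_ ?_ ?_
  · rw [one_lt_div hF]
    exact_mod_cast ha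
  · exact div_le_one_of_le₀ (by exact_mod_cast Nat.one_le_two_pow) (by positivity)
  · rw [div_pow, one_pow, div_le_div_iff₀ (by positivity) hF, one_mul]
    exact_mod_cast hk
  · rw [← hN]
    simpa using (Rat.cast_lt (K := ℝ)).2 hupper
  · rw [← hN]
    simpa using (Rat.cast_lt (K := ℝ)).2 hlower

/-- Applies `checkBound` to the entries of index at least `40` of a list of values of `p` in
decreasing order of the index, starting at index `n`. -/
def checkBounds : ℕ → List ℕ → Bool
  | _, [] => true
  | n, a :: L => (Nat.blt n 40 || checkBound n a) && checkBounds (n - 1) L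

lemma checkBound_of_checkBounds {s : ℕ} (h : checkBounds (s - 1) (partitionList s) = true) {n : ℕ}
    (hn : n < s) (hn40 : 40 ≤ n) : checkBound n (Fintype.card (Nat.Partition n)) = true := by
  induction s with
  | zero => omega
  | succ s ih =>
    simp only [partitionList, checkBounds, Nat.add_sub_cancel, Bool.and_eq_true, Bool.or_eq_true,
      Nat.blt_eq] at h
    rcases Nat.lt_succ_iff_lt_or_eq.1 hn with hlt | rfl
    · exact ih h.2 hlt
    · exact h.1.resolve_left (by omega)

set_option maxRecDepth 10000 in
lemma checkBounds_partitionTable : checkBounds 399 partitionTable = true := by decide +kernel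

lemma abs_p_div_T_sub_one_lt_of_small {n : ℕ} (hn : 40 ≤ n) (hn' : n < 400) :
    |p n / T n - 1| < exp (-(mu n) / 3) :=
  abs_div_T_sub_one_lt_of_checkBound (by omega)
    (checkBound_of_checkBounds (partitionTable_eq ▸ checkBounds_partitionTable) hn' hn)

end SmallCases

theorem p_div_T_close_to_one (n : ℕ) (hn : 40 ≤ n) :
    |p n / T (n : ℝ) - 1| < Real.exp (-(mu (n : ℝ)) / 3) := by
  rcases lt_or_ge n 400 with h | h
  · exact abs_p_div_T_sub_one_lt_of_small hn h
  · exact abs_p_div_T_sub_one_lt_of_large h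
end

section
/- For every integer n ≥ 1, |p(n) - T̃(n)| < 5 + (9/μ(n)²)·e^{μ(n)/2}. -/
open Real

/-!
Write `η` for the Dedekind eta function and `m = μ(n)`. Cauchy's formula for the generating function
of `p` gives `p(n) = ∫ (η τ)⁻¹ exp (-2πi (n - 1/24) τ) dθ` over `|θ| ≤ 1/2` on the line
`τ = θ + i y`; take `12 m y = π`, the saddle point. Near `τ = 0` the transformation
`τ ↦ -1/τ` replaces `(η (i z))⁻¹` by `√z exp (π / (12 z))` up to an error of norm at most `1`.
The integral of this function against the exponential is computed in closed form: after `z = w²`,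
completing squares reduces it to the primitive of `exp (w²)`, and the limits of that primitive at
infinity produce exactly the two terms of `T̃(n)`.

Elsewhere on the line, move `τ` to `γ τ` in the fundamental domain. Since `|η τ|⁴ im τ` is modular
invariant, `|η τ|⁻¹` is controlled by `im (γ τ) = y / |c τ + d|²`. Only the cusps `±1/2` give more
than `exp (m / 9)`; each contributes a Gaussian bump of height about `√y exp (m / 4)` and width
about `y / √m`. All errors together are below `9 m⁻² exp (m / 2)` once `m ≥ 28`, that is for
`n ≥ 120`. The smaller `n` are checked in rational arithmetic, with `p(n)` read off the identity
`(∑ p(n) Xⁿ) ∏ (1 - Xⁱ) = 1`.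
-/

namespace PartitionBound

section GeneratingFunction

open PowerSeries Finset Filter Topology

/-- The number of partitions of `n` into parts of size at most `m`; it approximates the partition
function by coefficients of finite products. -/
def boundedCount (m n : ℕ) : ℕ := #(Nat.Partition.restricted n (· ≤ m))

lemma boundedCount_le_card (m n : ℕ) : boundedCount m n ≤ Fintype.card (Nat.Partition n) :=
  card_le_univ _

lemma boundedCount_eq_card {m n : ℕ} (h : n ≤ m) :
    boundedCount m n = Fintype.card (Nat.Partition n) := by
  rw [boundedCount, Nat.Partition.restricted, filter_true_of_mem, card_univ]
  exact fun x _ i hi ↦ (x.le_of_mem_parts hi).trans h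

section Ring

variable (R : Type*) [CommRing R]

lemma mk_ite_dvd_mul_one_sub_X_pow (k : ℕ) :
    (mk fun n ↦ if k + 1 ∣ n then (1 : R) else 0) * (1 - X ^ (k + 1)) = 1 := by
  ext n
  rw [mul_sub, mul_one, map_sub, coeff_mul_X_pow', coeff_one, coeff_mk, coeff_mk]
  rcases Nat.eq_zero_or_pos n with rfl | hn
  · simp
  by_cases hkn : k + 1 ≤ n
  · obtain ⟨l, rfl⟩ := Nat.exists_eq_add_of_le' hkn
    simp
  · simp [hkn, Nat.not_dvd_of_pos_of_lt hn (not_le.mp hkn), hn.ne']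

open WithPiTopology in
lemma mk_boundedCount_eq_prod (m : ℕ) :
    (mk fun n ↦ (boundedCount m n : R)) =
      ∏ i ∈ range m, mk fun n ↦ if i + 1 ∣ n then (1 : R) else 0 := by
  let _ : TopologicalSpace R := ⊥
  have : DiscreteTopology R := ⟨rfl⟩
  have geometric (i : ℕ) :
      ∑' j : ℕ, (X : R⟦X⟧) ^ ((i + 1) * j) = mk fun n ↦ if i + 1 ∣ n then (1 : R) else 0 := by
    refine left_inv_eq_right_inv (a := 1 - X ^ (i + 1)) ?_
      (by rw [mul_comm, mk_ite_dvd_mul_one_sub_X_pow])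
    simp_rw [pow_mul]
    exact tsum_pow_mul_one_sub_of_constantCoeff_eq_zero (by simp)
  have factors : ∏ i ∈ range m, (if i + 1 ≤ m then ∑' j : ℕ, (X : R⟦X⟧) ^ ((i + 1) * j) else 1) =
      ∏ i ∈ range m, mk fun n ↦ if i + 1 ∣ n then (1 : R) else 0 :=
    prod_congr rfl fun i hi ↦ by rw [if_pos (Nat.succ_le_of_lt (mem_range.mp hi)), geometric]
  rw [← factors]
  refine (Nat.Partition.hasProd_powerSeriesMk_card_restricted R (· ≤ m)).unique
    (hasProd_prod_of_ne_finset_one fun i hi ↦ if_neg ?_)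
  simpa using hi

lemma mk_boundedCount_mul_prod (m : ℕ) :
    (mk fun n ↦ (boundedCount m n : R)) * ∏ i ∈ range m, (1 - X ^ (i + 1)) = 1 := by
  rw [mk_boundedCount_eq_prod, ← prod_mul_distrib]
  exact prod_eq_one fun i _ ↦ mk_ite_dvd_mul_one_sub_X_pow R i

end Ring

section PowerSeriesEval

variable {𝕜 : Type*} [RCLike 𝕜] {q : 𝕜}

lemma hasSum_coeff_mul {f g : 𝕜⟦X⟧} {a b : 𝕜} (hf : HasSum (fun n ↦ coeff n f * q ^ n) a)
    (hg : HasSum (fun n ↦ coeff n g * q ^ n) b) :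
    HasSum (fun n ↦ coeff n (f * g) * q ^ n) (a * b) := by
  have hf' := summable_norm_iff.mpr hf.summable
  have hg' := summable_norm_iff.mpr hg.summable
  have cauchy (n : ℕ) : coeff n (f * g) * q ^ n =
      ∑ kl ∈ antidiagonal n, (coeff kl.1 f * q ^ kl.1) * (coeff kl.2 g * q ^ kl.2) := by
    rw [coeff_mul, sum_mul]
    refine sum_congr rfl fun kl hkl ↦ ?_
    rw [← mem_antidiagonal.mp hkl]
    ring
  simp_rw [cauchy]
  rw [← hf.tsum_eq, ← hg.tsum_eq, tsum_mul_tsum_eq_tsum_sum_antidiagonal_of_summable_norm hf' hg']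
  exact (summable_norm_sum_mul_antidiagonal_of_summable_norm hf' hg').of_norm.hasSum

lemma hasSum_coeff_prod {ι : Type*} (s : Finset ι) {f : ι → 𝕜⟦X⟧} {a : ι → 𝕜}
    (h : ∀ i, HasSum (fun n ↦ coeff n (f i) * q ^ n) (a i)) :
    HasSum (fun n ↦ coeff n (∏ i ∈ s, f i) * q ^ n) (∏ i ∈ s, a i) := by
  classical
  induction s using Finset.induction_on with
  | empty =>
    rw [prod_empty, prod_empty]
    have h0 : coeff 0 (1 : 𝕜⟦X⟧) * q ^ 0 = 1 := by rw [coeff_zero_one, pow_zero, mul_one]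
    rw [← h0]
    exact hasSum_single 0 fun n hn ↦ by rw [coeff_one, if_neg hn, zero_mul]
  | insert i s hi ih =>
    rw [prod_insert hi, prod_insert hi]
    exact hasSum_coeff_mul (h i) ih

lemma hasSum_ite_dvd_mul_pow (hq : ‖q‖ < 1) (k : ℕ) :
    HasSum (fun n ↦ (if k + 1 ∣ n then 1 else 0) * q ^ n) (1 - q ^ (k + 1))⁻¹ := by
  have hq' : ‖q ^ (k + 1)‖ < 1 := by
    rw [norm_pow]
    exact pow_lt_one₀ (norm_nonneg _) hq k.succ_ne_zero
  rw [← (mul_right_injective₀ k.succ_ne_zero).hasSum_iff]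
  · simpa [Function.comp_def, pow_mul] using hasSum_geometric_of_norm_lt_one hq'
  · intro n hn
    rw [if_neg fun ⟨j, hj⟩ ↦ hn ⟨j, hj.symm⟩, zero_mul]

lemma hasSum_boundedCount_mul_pow (hq : ‖q‖ < 1) (m : ℕ) :
    HasSum (fun n ↦ (boundedCount m n : 𝕜) * q ^ n) (∏ i ∈ range m, (1 - q ^ (i + 1)))⁻¹ := by
  rw [← prod_inv_distrib]
  have h := hasSum_coeff_prod (q := q) (range m)
    (f := fun i ↦ mk fun n ↦ if i + 1 ∣ n then (1 : 𝕜) else 0)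
    (fun i ↦ by simpa only [coeff_mk] using hasSum_ite_dvd_mul_pow hq i)
  simpa only [← mk_boundedCount_eq_prod, coeff_mk] using h

end PowerSeriesEval

/-- The Euler product `∏_{n ≥ 1} (1 - q ^ n)`, the reciprocal of the generating function of `p`. -/
noncomputable def euler (q : ℂ) : ℂ := ∏' n : ℕ, (1 - q ^ (n + 1))

lemma tendsto_prod_euler {q : ℂ} (hq : ‖q‖ < 1) :
    Tendsto (fun m ↦ ∏ i ∈ range m, (1 - q ^ (i + 1))) atTop (𝓝 (euler q)) :=
  (ModularForm.multipliable_one_sub_pow hq).hasProd.tendsto_prod_nat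

lemma euler_ne_zero {q : ℂ} (hq : ‖q‖ < 1) : euler q ≠ 0 := by
  have hpow (i : ℕ) : ‖q ^ (i + 1)‖ < 1 := by
    rw [norm_pow]
    exact pow_lt_one₀ (norm_nonneg _) hq i.succ_ne_zero
  simp_rw [euler, sub_eq_add_neg]
  refine tprod_one_add_ne_zero_of_summable (f := fun n ↦ -q ^ (n + 1)) (fun i h ↦ ?_) ?_
  · have := hpow i
    simp [show q ^ (i + 1) = 1 by linear_combination -h] at this
  · simpa using (summable_nat_add_iff 1).mpr (summable_geometric_of_lt_one (norm_nonneg _) hq)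

lemma p_nonneg (n : ℕ) : 0 ≤ p n := Nat.cast_nonneg _

lemma sum_p_mul_pow_le {r : ℝ} (h0 : 0 ≤ r) (h1 : r < 1) (m : ℕ) :
    ∑ n ∈ range m, p n * r ^ n ≤ (∏ i ∈ range m, (1 - r ^ (i + 1)))⁻¹ := by
  have hr : ‖r‖ < 1 := by rwa [norm_of_nonneg h0]
  calc ∑ n ∈ range m, p n * r ^ n
      = ∑ n ∈ range m, (boundedCount m n : ℝ) * r ^ n := sum_congr rfl fun n hn ↦ by
        rw [boundedCount_eq_card (mem_range.mp hn).le, p]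
    _ ≤ _ := sum_le_hasSum _ (fun n _ ↦ by positivity) (hasSum_boundedCount_mul_pow hr m)

lemma summable_p_mul_pow {r : ℝ} (h0 : 0 ≤ r) (h1 : r < 1) : Summable fun n ↦ p n * r ^ n := by
  have hr : ‖(r : ℂ)‖ < 1 := by rwa [Complex.norm_of_nonneg h0]
  obtain ⟨c, hc⟩ := ((tendsto_prod_euler hr).inv₀ (euler_ne_zero hr)).norm.bddAbove_range
  refine summable_of_sum_range_le (c := c) (fun n ↦ mul_nonneg (p_nonneg n) (by positivity))
    fun m ↦ (sum_p_mul_pow_le h0 h1 m).trans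
      ((le_abs_self _).trans (le_of_eq_of_le ?_ (hc ⟨m, rfl⟩)))
  rw [← Real.norm_eq_abs, ← Complex.norm_real]
  push_cast
  rfl

lemma hasSum_p_mul_pow {q : ℂ} (hq : ‖q‖ < 1) :
    HasSum (fun n ↦ (p n : ℂ) * q ^ n) (euler q)⁻¹ := by
  have hs := summable_p_mul_pow (norm_nonneg q) hq
  have hs' : Summable fun n ↦ (p n : ℂ) * q ^ n := .of_norm (hs.congr fun n ↦ by simp [p])
  have h : Tendsto (fun m ↦ ∑' n, (boundedCount m n : ℂ) * q ^ n) atTop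
      (𝓝 (∑' n, (p n : ℂ) * q ^ n)) := by
    refine tendsto_tsum_of_dominated_convergence hs (fun n ↦ ?_) (.of_forall fun m n ↦ ?_)
    · refine tendsto_const_nhds.congr' ?_
      filter_upwards [eventually_ge_atTop n] with m hm
      rw [boundedCount_eq_card hm, p, Complex.ofReal_natCast]
    · rw [norm_mul, norm_pow, Complex.norm_natCast, p]
      gcongr
      exact boundedCount_le_card m n
  simp_rw [(hasSum_boundedCount_mul_pow hq _).tsum_eq] at h
  rw [← tendsto_nhds_unique h ((tendsto_prod_euler hq).inv₀ (euler_ne_zero hq))]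
  exact hs'.hasSum

lemma one_sub_sum_le_prod {ι : Type*} (s : Finset ι) {f : ι → ℝ} (h0 : ∀ i, 0 ≤ f i)
    (h1 : ∀ i, f i ≤ 1) : 1 - ∑ i ∈ s, f i ≤ ∏ i ∈ s, (1 - f i) := by
  classical
  induction s using Finset.induction_on with
  | empty => simp
  | insert i s hi ih =>
    have : ∏ j ∈ s, (1 - f j) ≤ 1 :=
      prod_le_one (fun j _ ↦ sub_nonneg.mpr (h1 j)) fun j _ ↦ sub_le_self _ (h0 j)
    rw [sum_insert hi, prod_insert hi]
    nlinarith [h0 i]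

lemma sum_pow_succ_le {r : ℝ} (h0 : 0 ≤ r) (h1 : r < 1) (m : ℕ) :
    ∑ i ∈ range m, r ^ (i + 1) ≤ r / (1 - r) := by
  simp_rw [pow_succ, ← sum_mul]
  rw [div_eq_inv_mul]
  gcongr
  exact sum_le_hasSum _ (fun i _ ↦ by positivity) (hasSum_geometric_of_lt_one h0 h1)

lemma tsum_p_mul_pow_le {r : ℝ} (h0 : 0 ≤ r) (h1 : r < 1 / 2) :
    ∑' n, p n * r ^ n ≤ (1 - r) / (1 - 2 * r) := by
  have hr : r < 1 := by linarith
  have hpos : 0 < 1 - r / (1 - r) := by rw [sub_pos, div_lt_one] <;> linarith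
  rw [show (1 - r) / (1 - 2 * r) = (1 - r / (1 - r))⁻¹ by
    rw [one_sub_div (by linarith), inv_div]; ring]
  refine Real.tsum_le_of_sum_range_le (fun n ↦ mul_nonneg (p_nonneg n) (by positivity))
    fun m ↦ (sum_p_mul_pow_le h0 hr m).trans (inv_anti₀ hpos ?_)
  exact (sub_le_sub_left (sum_pow_succ_le h0 hr m) 1).trans
    (one_sub_sum_le_prod _ (fun i ↦ by positivity) fun i ↦ pow_le_one₀ h0 hr.le)

lemma norm_inv_euler_sub_one_le {q : ℂ} (hq : ‖q‖ < 1 / 2) :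
    ‖(euler q)⁻¹ - 1‖ ≤ ‖q‖ / (1 - 2 * ‖q‖) := by
  have h1 : ‖q‖ < 1 := by linarith
  have hp0 : p 0 = 1 := by simp [p]
  have hs := summable_p_mul_pow (norm_nonneg q) h1
  have hsum := hasSum_p_mul_pow h1
  have hle := tsum_p_mul_pow_le (norm_nonneg q) hq
  rw [← hsum.tsum_eq, hsum.summable.tsum_eq_zero_add]
  rw [hs.tsum_eq_zero_add] at hle
  simp only [hp0, pow_zero, mul_one, Complex.ofReal_one, add_sub_cancel_left] at hle ⊢
  calc ‖∑' n, (p (n + 1) : ℂ) * q ^ (n + 1)‖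
      ≤ ∑' n, p (n + 1) * ‖q‖ ^ (n + 1) :=
        tsum_of_norm_bounded ((summable_nat_add_iff 1).mpr hs).hasSum fun n ↦ by simp [p]
    _ ≤ (1 - ‖q‖) / (1 - 2 * ‖q‖) - 1 := by linarith
    _ = ‖q‖ / (1 - 2 * ‖q‖) := by
      rw [div_sub_one (by linarith)]
      ring

end GeneratingFunction

section EtaBound

open UpperHalfPlane ModularForm Function.Periodic
open scoped MatrixGroups

lemma eta_eq_qParam_mul_euler (z : ℂ) : eta z = qParam 24 z * euler (qParam 1 z) := by
  simp [eta, euler, eta_q_eq_pow, qParam]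

lemma norm_eta_pow_four_mul_im_smul (g : SL(2, ℤ)) (τ : ℍ) :
    ‖eta ↑(g • τ)‖ ^ 4 * (g • τ).im = ‖eta τ‖ ^ 4 * τ.im := by
  have hΔ : (discriminant ∣[(12 : ℤ)] g) = discriminant :=
    SlashInvariantForm.slash_action_generators_SL2Z discriminant_S_invariant
      discriminant_T_invariant g
  have h := congrArg norm (petersson_slash_SL 12 discriminant discriminant g τ)
  rw [hΔ] at h
  simp only [petersson, discriminant, norm_mul, Complex.norm_conj, norm_pow, norm_zpow,
    Complex.norm_real, Real.norm_eq_abs, abs_of_pos (UpperHalfPlane.im_pos _)] at h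
  refine (pow_left_inj₀ (mul_nonneg (by positivity) (im_pos _).le)
    (mul_nonneg (by positivity) (im_pos _).le) (n := 12) (by norm_num)).mp ?_
  simp only [mul_pow]
  norm_cast at h
  linear_combination -h

lemma exp_neg_two_pi_mul_le {Y : ℝ} (hY : 0 < Y) (h : 3 ≤ 4 * Y ^ 2) :
    rexp (-(2 * π * Y)) ≤ 1 / 200 := by
  have hY' : 0.866 ≤ Y := by nlinarith
  rw [exp_neg, one_div]
  refine inv_anti₀ (by norm_num) ?_
  calc (200 : ℝ) ≤ (2.7182818283 : ℝ) ^ 5 * 1.44 := by norm_num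
    _ ≤ rexp 1 ^ 5 * rexp 0.44 := by
      gcongr
      · exact exp_one_gt_d9.le
      · linarith [add_one_le_exp (0.44 : ℝ)]
    _ = rexp 5.44 := by rw [← exp_nat_mul, ← exp_add]; norm_num
    _ ≤ rexp (2 * π * Y) := exp_le_exp.mpr (by nlinarith [pi_gt_d4])

lemma norm_inv_eta_le_of_three_le_four_mul_im_sq {z : ℂ} (hz : 0 < z.im) (h : 3 ≤ 4 * z.im ^ 2) :
    ‖eta z‖⁻¹ ≤ 199 / 198 * rexp (π * z.im / 12) := by
  have hq : ‖qParam 1 z‖ ≤ 1 / 200 := by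
    rw [norm_qParam]
    simpa using exp_neg_two_pi_mul_le hz h
  have hsub : ‖(euler (qParam 1 z))⁻¹ - 1‖ ≤ 1 / 198 := by
    refine (norm_inv_euler_sub_one_le (hq.trans_lt (by norm_num))).trans ?_
    rw [div_le_div_iff₀] <;> linarith
  have heuler : ‖euler (qParam 1 z)‖⁻¹ ≤ 199 / 198 := by
    rw [← norm_inv]
    linarith [norm_le_norm_add_norm_sub' (euler (qParam 1 z))⁻¹ 1, norm_one (α := ℂ)]
  rw [eta_eq_qParam_mul_euler, norm_mul, mul_inv, norm_qParam, ← exp_neg, mul_comm]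
  gcongr
  exact le_of_eq (by ring)

lemma exists_coprime_norm_inv_eta_le (τ : ℍ) : ∃ a b : ℤ, IsCoprime a b ∧
    3 ≤ 4 * (τ.im / Complex.normSq (a * τ + b)) ^ 2 ∧
    ‖eta τ‖⁻¹ ^ 4 ≤ (199 / 198) ^ 4 * (Complex.normSq (a * τ + b) *
      rexp (π * (τ.im / Complex.normSq (a * τ + b)) / 3)) := by
  obtain ⟨g, hg⟩ := ModularGroup.exists_smul_mem_fd τ
  refine ⟨g 1 0, g 1 1, ModularGroup.bottom_row_coprime g, ?_⟩
  have hfd := ModularGroup.three_le_four_mul_im_sq_of_mem_fd hg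
  have hbound := norm_inv_eta_le_of_three_le_four_mul_im_sq (im_pos (g • τ)) hfd
  have hinv := norm_eta_pow_four_mul_im_smul g τ
  have hpos := (g • τ).im_pos
  rw [coe_im] at hbound
  rw [ModularGroup.im_smul_eq_div_normSq, ModularGroup.denom_apply] at hbound hinv hfd hpos
  refine ⟨hfd, ?_⟩
  set N := Complex.normSq (g 1 0 * τ + g 1 1)
  have hN : 0 < N := (div_pos_iff_of_pos_left τ.im_pos).mp hpos
  have := τ.im_pos
  have heta : ‖eta τ‖⁻¹ ^ 4 = N * ‖eta ↑(g • τ)‖⁻¹ ^ 4 := by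
    have hne := norm_ne_zero_iff.mpr (eta_ne_zero τ.im_pos)
    have hne' := norm_ne_zero_iff.mpr (eta_ne_zero (g • τ).im_pos)
    field_simp at hinv ⊢
    linear_combination hinv
  calc ‖eta τ‖⁻¹ ^ 4 ≤ N * (199 / 198 * rexp (π * (τ.im / N) / 12)) ^ 4 := by
        rw [heta]
        gcongr
    _ = (199 / 198) ^ 4 * (N * rexp (π * (τ.im / N) / 3)) := by
        rw [mul_pow, ← exp_nat_mul]
        push_cast
        ring_nf

end EtaBound

section CoefficientIntegral

open Complex Function.Periodic

lemma integral_exp_two_pi_I_mul (k : ℤ) (y : ℝ) :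
    ∫ θ in (-(1 / 2) : ℝ)..(1 / 2), cexp (2 * π * I * k * (θ + y * I)) =
      if k = 0 then 1 else 0 := by
  split_ifs with hk
  · simp only [hk, Int.cast_zero, mul_zero, zero_mul, Complex.exp_zero]
    norm_num
  · simp_rw [mul_add, Complex.exp_add]
    rw [intervalIntegral.integral_mul_const,
      integral_exp_mul_complex (mul_ne_zero two_pi_I_ne_zero (Int.cast_ne_zero.mpr hk))]
    have hperiodic : cexp (2 * π * I * k * (1 / 2 : ℝ)) = cexp (2 * π * I * k * (-(1 / 2) : ℝ)) :=
      Complex.exp_eq_exp_iff_exists_int.mpr ⟨k, by push_cast; ring⟩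
    rw [hperiodic, sub_self, zero_div, zero_mul]

lemma coeff_eq_integral {a : ℕ → ℂ} {F : ℂ → ℂ} {y : ℝ}
    (hF : ∀ q : ℂ, ‖q‖ = rexp (-(2 * π * y)) → HasSum (fun m ↦ a m * q ^ m) (F q)) (n : ℕ) :
    a n = ∫ θ in (-(1 / 2) : ℝ)..(1 / 2),
      F (qParam 1 (θ + y * I)) * cexp (-(2 * π * I * n * (θ + y * I))) := by
  have hnorm (θ : ℝ) : ‖qParam 1 (θ + y * I)‖ = rexp (-(2 * π * y)) := by simp [norm_qParam]
  have hterm (m : ℕ) (θ : ℝ) : a m * cexp (2 * π * I * ((m - n : ℤ) : ℂ) * (θ + y * I)) =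
      a m * qParam 1 (θ + y * I) ^ m * cexp (-(2 * π * I * n * (θ + y * I))) := by
    rw [qParam, ← Complex.exp_nat_mul, mul_assoc (a m), ← Complex.exp_add]
    push_cast
    ring_nf
  let f (m : ℕ) : C(ℝ, ℂ) :=
    ⟨fun θ ↦ a m * cexp (2 * π * I * ((m - n : ℤ) : ℂ) * (θ + y * I)), by fun_prop⟩
  have hf : Summable fun m ↦ ‖(f m).restrict
      (⟨Set.uIcc (-(1 / 2) : ℝ) (1 / 2), isCompact_uIcc⟩ : TopologicalSpace.Compacts ℝ)‖ := by
    refine .of_nonneg_of_le (fun _ ↦ norm_nonneg _) (fun m ↦ ?_)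
      (((summable_norm_iff.mpr (hF _ (hnorm 0)).summable)).mul_right (rexp (2 * π * n * y)))
    refine (ContinuousMap.norm_le _ (by positivity)).mpr fun θ ↦ le_of_eq ?_
    simp only [f, ContinuousMap.restrict_apply, ContinuousMap.coe_mk]
    rw [hterm, norm_mul, norm_mul, norm_mul, norm_pow, norm_pow, hnorm, hnorm, norm_exp]
    simp
  have hint (m : ℕ) : ∫ θ in (-(1 / 2) : ℝ)..(1 / 2), f m θ = if m = n then a n else 0 := by
    simp only [f, ContinuousMap.coe_mk]
    rw [intervalIntegral.integral_const_mul, integral_exp_two_pi_I_mul]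
    by_cases hmn : m = n
    · simp [hmn]
    · simp [hmn, sub_eq_zero]
  have h := intervalIntegral.hasSum_intervalIntegral_of_summable_norm hf
  simp_rw [hint] at h
  rw [← h.unique (hasSum_ite_eq n (a n))]
  refine intervalIntegral.integral_congr fun θ _ ↦ ?_
  simp only [f, ContinuousMap.coe_mk, hterm]
  exact ((hF _ (hnorm θ)).mul_right _).tsum_eq

lemma p_eq_integral (n : ℕ) {y : ℝ} (hy : 0 < y) :
    (p n : ℂ) = ∫ θ in (-(1 / 2) : ℝ)..(1 / 2), (ModularForm.eta (θ + y * I))⁻¹ *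
      cexp (-(2 * π * I * (n - 1 / 24) * (θ + y * I))) := by
  rw [coeff_eq_integral (a := fun m ↦ (p m : ℂ)) (F := fun q ↦ (euler q)⁻¹) (y := y)
    (fun q hq ↦ hasSum_p_mul_pow (by rw [hq, exp_lt_one_iff]; nlinarith [pi_pos]))]
  refine intervalIntegral.integral_congr fun θ _ ↦ ?_
  have hshift : cexp (-(2 * π * I * n * (θ + y * I))) =
      (qParam 24 (θ + y * I))⁻¹ * cexp (-(2 * π * I * (n - 1 / 24) * (θ + y * I))) := by
    rw [qParam, ← Complex.exp_neg, ← Complex.exp_add]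
    push_cast
    ring_nf
  simp only [eta_eq_qParam_mul_euler, mul_inv, hshift]
  ring

end CoefficientIntegral

section GaussianPrimitive

open Complex MeasureTheory Filter Topology

/-- The odd primitive `u ↦ ∫₀ᵘ exp (w ^ 2) dw` of `exp (w ^ 2)`, as an integral along the segment
from `0` to `u`. -/
noncomputable def expSqPrimitive (u : ℂ) : ℂ := ∫ t in (0 : ℝ)..1, u * cexp ((t * u) ^ 2)

lemma expSqPrimitive_zero : expSqPrimitive 0 = 0 := by simp [expSqPrimitive]

lemma expSqPrimitive_neg (u : ℂ) : expSqPrimitive (-u) = -expSqPrimitive u := by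
  simp [expSqPrimitive, mul_pow]

lemma integral_exp_sq_line {F : ℂ → ℂ} (hF : ∀ u, HasDerivAt F (cexp (u ^ 2)) u) (v c : ℂ)
    (a b : ℝ) :
    ∫ t in a..b, c * cexp ((v + t * c) ^ 2) = F (v + b * c) - F (v + a * c) := by
  refine intervalIntegral.integral_eq_sub_of_hasDerivAt (f := fun t : ℝ ↦ F (v + t * c))
    (fun t _ ↦ ?_) (Continuous.intervalIntegrable (by fun_prop) _ _)
  have hline : HasDerivAt (fun t : ℂ ↦ v + t * c) c t := by
    simpa using ((hasDerivAt_id (t : ℂ)).mul_const c).const_add v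
  simpa [mul_comm] using ((hF (v + t * c)).comp (t : ℂ) hline).comp_ofReal

lemma hasDerivAt_expSqPrimitive (u : ℂ) : HasDerivAt expSqPrimitive (cexp (u ^ 2)) u := by
  obtain ⟨F, hF0, hF⟩ := (Differentiable.isExactOn_univ
    (f := fun u : ℂ ↦ cexp (u ^ 2)) (by fun_prop)).with_val_at 0 0
  have hF' (w : ℂ) : HasDerivAt F (cexp (w ^ 2)) w := hF w (Set.mem_univ w)
  have heq : expSqPrimitive = F := funext fun w ↦ by
    simpa [expSqPrimitive, hF0] using integral_exp_sq_line hF' 0 w 0 1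
  exact heq ▸ hF' u

lemma norm_exp_sq_add_mul_I (x y : ℝ) : ‖cexp ((x + y * I) ^ 2)‖ = rexp (x ^ 2 - y ^ 2) := by
  rw [Complex.norm_exp]
  congr 1
  simp [sq]

lemma integrableOn_exp_neg_sq_Ioi : IntegrableOn (fun t : ℝ ↦ rexp (-t ^ 2)) (Set.Ioi 0) := by
  simpa using (integrable_exp_neg_mul_sq one_pos).integrableOn

lemma integral_exp_neg_sq_Ioi : ∫ t in Set.Ioi (0 : ℝ), rexp (-t ^ 2) = √π / 2 := by
  simpa using integral_gaussian_Ioi 1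

lemma integral_exp_neg_sq_le {S : ℝ} (hS : 0 ≤ S) :
    ∫ t in (0 : ℝ)..S, rexp (-t ^ 2) ≤ √π / 2 := by
  rw [intervalIntegral.integral_of_le hS, ← integral_exp_neg_sq_Ioi]
  exact setIntegral_mono_set integrableOn_exp_neg_sq_Ioi (ae_of_all _ fun t ↦ (exp_pos _).le)
    (Eventually.of_forall Set.Ioc_subset_Ioi_self)

lemma tendsto_expSqPrimitive_mul_I :
    Tendsto (fun S : ℝ ↦ expSqPrimitive (S * I)) atTop (𝓝 (I * (√π / 2 : ℝ))) := by
  have heq (S : ℝ) : expSqPrimitive (S * I) = I * (∫ t in (0 : ℝ)..S, rexp (-t ^ 2) : ℝ) := by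
    have h := integral_exp_sq_line hasDerivAt_expSqPrimitive 0 I 0 S
    simp only [zero_add, ofReal_zero, zero_mul, expSqPrimitive_zero, sub_zero, mul_pow, I_sq] at h
    rw [← h, intervalIntegral.integral_const_mul, ← intervalIntegral.integral_ofReal]
    simp
  simp_rw [heq, ← integral_exp_neg_sq_Ioi]
  exact ((continuous_ofReal.tendsto _).comp
    (intervalIntegral_tendsto_integral_Ioi 0 integrableOn_exp_neg_sq_Ioi tendsto_id)).const_mul I

lemma norm_expSqPrimitive_add_sub_le (x y : ℝ) :
    ‖expSqPrimitive (x + y * I) - expSqPrimitive (y * I)‖ ≤ rexp (x ^ 2 - y ^ 2) * |x| := by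
  have h := integral_exp_sq_line hasDerivAt_expSqPrimitive (y * I) 1 0 x
  simp only [one_mul, mul_one, ofReal_zero, add_zero] at h
  rw [add_comm (x : ℂ), ← h]
  refine (intervalIntegral.norm_integral_le_of_norm_le_const (C := rexp (x ^ 2 - y ^ 2))
    fun t ht ↦ ?_).trans_eq (by rw [sub_zero])
  have ht' : |t| ≤ |x| := by simpa using Set.abs_sub_left_of_mem_uIcc (Set.uIoc_subset_uIcc ht)
  rw [add_comm, norm_exp_sq_add_mul_I, exp_le_exp]
  linarith [sq_le_sq.mpr ht']

lemma tendsto_expSqPrimitive_add_mul_I (x : ℝ) :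
    Tendsto (fun S : ℝ ↦ expSqPrimitive (x + S * I)) atTop (𝓝 (I * (√π / 2 : ℝ))) := by
  have hgauss : Tendsto (fun S : ℝ ↦ rexp (x ^ 2 - S ^ 2) * |x|) atTop (𝓝 0) := by
    rw [← zero_mul |x|]
    refine (tendsto_exp_atBot.comp ?_).mul_const _
    exact tendsto_atBot_add_const_left _ _
      (tendsto_neg_atTop_atBot.comp (tendsto_pow_atTop two_ne_zero))
  have hshift := squeeze_zero_norm (norm_expSqPrimitive_add_sub_le x) hgauss
  simpa using hshift.add tendsto_expSqPrimitive_mul_I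

lemma norm_expSqPrimitive_sub_le {u : ℂ} (hu : 0 ≤ u.im) :
    ‖expSqPrimitive u - I * (√π / 2 : ℝ)‖ ≤ √π / 2 * rexp (u ^ 2).re := by
  have hlim : Tendsto (fun S : ℝ ↦ expSqPrimitive (u + S * I)) atTop (𝓝 (I * (√π / 2 : ℝ))) := by
    refine ((tendsto_expSqPrimitive_add_mul_I u.re).comp
      (tendsto_atTop_add_const_left atTop u.im tendsto_id)).congr fun S ↦ ?_
    conv_rhs => rw [← re_add_im u]
    simp only [Function.comp_apply, id_eq, ofReal_add]
    ring_nf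
  refine le_of_tendsto (hlim.const_sub (expSqPrimitive u)).norm ?_
  filter_upwards [eventually_ge_atTop 0] with S hS
  have hline := integral_exp_sq_line hasDerivAt_expSqPrimitive u I 0 S
  rw [ofReal_zero, zero_mul, add_zero] at hline
  rw [norm_sub_rev, ← hline]
  calc ‖∫ t in (0 : ℝ)..S, I * cexp ((u + t * I) ^ 2)‖
      ≤ ∫ t in (0 : ℝ)..S, rexp (u ^ 2).re * rexp (-t ^ 2) := by
        refine intervalIntegral.norm_integral_le_of_norm_le hS (ae_of_all _ fun t ht ↦ ?_)
          (Continuous.intervalIntegrable (by fun_prop) _ _)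
        rw [norm_mul, norm_I, one_mul, Complex.norm_exp, ← Real.exp_add, exp_le_exp]
        simp only [sq, mul_re, add_re, add_im, ofReal_re, ofReal_im, I_re, I_im, mul_im]
        nlinarith [mul_nonneg ht.1.le hu]
    _ = rexp (u ^ 2).re * ∫ t in (0 : ℝ)..S, rexp (-t ^ 2) :=
        intervalIntegral.integral_const_mul _ _
    _ ≤ √π / 2 * rexp (u ^ 2).re := by
        rw [mul_comm]
        gcongr
        exact integral_exp_neg_sq_le hS

end GaussianPrimitive

section MainIntegral

open Complex

lemma sqrt_sq (z : ℂ) : Complex.sqrt z ^ 2 = z := by simp [Complex.sqrt]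

lemma hasDerivAt_sqrt {z : ℂ} (hz : z ∈ slitPlane) :
    HasDerivAt Complex.sqrt (1 / (2 * Complex.sqrt z)) z := by
  refine (Complex.hasDerivAt_sqrt hz).congr_deriv ?_
  rw [show (-1 / 2 : ℂ) = -2⁻¹ by norm_num, cpow_neg, Complex.sqrt]
  ring

lemma sqrt_im_nonneg {z : ℂ} (hz : 0 ≤ z.im) : 0 ≤ (Complex.sqrt z).im := by
  have him : (Complex.sqrt z).im = √((‖z‖ - z.re) / 2) := by simp [sqrt_eq_real_add_ite, hz]
  rw [him]
  positivity

lemma sqrt_im_nonpos {z : ℂ} (hz : z.im < 0) : (Complex.sqrt z).im ≤ 0 := by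
  have him : (Complex.sqrt z).im = -√((‖z‖ - z.re) / 2) := by
    simp [sqrt_eq_real_add_ite, hz.not_ge]
  rw [him, neg_nonpos]
  positivity

lemma mul_sub_div_sq (a b : ℂ) {w : ℂ} (hw : w ≠ 0) :
    (b * w - a / w) ^ 2 = a ^ 2 / w ^ 2 + b ^ 2 * w ^ 2 - 2 * a * b := by
  field_simp
  ring

lemma mul_add_div_sq (a b : ℂ) {w : ℂ} (hw : w ≠ 0) :
    (b * w + a / w) ^ 2 = a ^ 2 / w ^ 2 + b ^ 2 * w ^ 2 + 2 * a * b := by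
  field_simp
  ring

variable {α β : ℝ} {w : ℂ}

/-- The odd function of `w` with derivative `2 β² w² exp (α² / w² + β² w²)`: after `z = w²` it is a
primitive of `√z exp (α² / z + β² z)`, up to the factor `β²`. The two Gaussian primitives come from
completing squares as `α² / w² + β² w² = (β w ∓ α / w)² ± 2 α β`. -/
noncomputable def mainPrimitive (α β : ℝ) (w : ℂ) : ℂ :=
  w * cexp (α ^ 2 / w ^ 2 + β ^ 2 * w ^ 2) +
    ((rexp (2 * α * β) * (2 * α * β - 1) : ℝ) * expSqPrimitive (β * w - α / w) -
      (rexp (-(2 * α * β)) * (2 * α * β + 1) : ℝ) * expSqPrimitive (β * w + α / w)) / (2 * β)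

/-- The limit of `mainPrimitive α β w` as `w` tends to infinity inside the upper half plane along
directions where `exp (β² w²)` decays. -/
noncomputable def mainPrimitiveLimit (α β : ℝ) : ℂ :=
  I * (√π / 2 * (rexp (2 * α * β) * (2 * α * β - 1) -
    rexp (-(2 * α * β)) * (2 * α * β + 1)) / (2 * β) : ℝ)

lemma mainPrimitive_neg (α β : ℝ) (w : ℂ) : mainPrimitive α β (-w) = -mainPrimitive α β w := by
  have hsub : β * -w - α / -w = -(β * w - α / w) := by rw [div_neg]; ring
  have hadd : β * -w + α / -w = -(β * w + α / w) := by rw [div_neg]; ring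
  simp only [mainPrimitive, hsub, hadd, expSqPrimitive_neg, neg_sq]
  ring

lemma hasDerivAt_mainPrimitive (hβ : β ≠ 0) (hw : w ≠ 0) :
    HasDerivAt (mainPrimitive α β)
      (2 * β ^ 2 * w ^ 2 * cexp (α ^ 2 / w ^ 2 + β ^ 2 * w ^ 2)) w := by
  have hβ' : (β : ℂ) ≠ 0 := ofReal_ne_zero.mpr hβ
  have hinv : HasDerivAt (fun w : ℂ ↦ (α : ℂ) / w) (-α / w ^ 2) w := by
    simpa [div_eq_mul_inv] using (hasDerivAt_inv hw).const_mul (α : ℂ)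
  have hlin : HasDerivAt (fun w : ℂ ↦ (β : ℂ) * w) β w := by
    simpa using (hasDerivAt_id w).const_mul (β : ℂ)
  have hsub := (hasDerivAt_expSqPrimitive (β * w - α / w)).comp w (hlin.sub hinv)
  have hadd := (hasDerivAt_expSqPrimitive (β * w + α / w)).comp w (hlin.add hinv)
  have hexponent : HasDerivAt (fun w : ℂ ↦ (α : ℂ) ^ 2 / w ^ 2 + β ^ 2 * w ^ 2)
      (2 * (α / w) * (-α / w ^ 2) + 2 * (β * w) * β) w := by
    simpa [div_pow, mul_pow] using (hinv.fun_pow 2).fun_add (hlin.fun_pow 2)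
  refine (((hasDerivAt_id w).mul hexponent.cexp).add
    (((hsub.const_mul _).sub (hadd.const_mul _)).div_const (2 * (β : ℂ)))).congr_deriv ?_
  rw [mul_sub_div_sq _ _ hw, mul_add_div_sq _ _ hw, Complex.exp_sub,
    Complex.exp_add _ (2 * α * β : ℂ)]
  push_cast
  rw [Complex.exp_neg]
  have := Complex.exp_ne_zero (2 * α * β)
  simp only [id]
  field_simp
  ring

lemma norm_mul_expSqPrimitive_sub_le {c : ℝ} (hc : 0 ≤ c) (k : ℝ) {u : ℂ} (hu : 0 ≤ u.im) :
    ‖(rexp k * c : ℝ) * (expSqPrimitive u - I * (√π / 2 : ℝ))‖ ≤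
      c * (√π / 2) * rexp ((u ^ 2).re + k) := by
  rw [norm_mul, norm_real, norm_of_nonneg (by positivity), Real.exp_add]
  calc rexp k * c * ‖expSqPrimitive u - I * (√π / 2 : ℝ)‖
      ≤ rexp k * c * (√π / 2 * rexp (u ^ 2).re) := by
        gcongr
        exact norm_expSqPrimitive_sub_le hu
    _ = c * (√π / 2) * (rexp (u ^ 2).re * rexp k) := by ring

lemma im_mul_sub_div_nonneg (hα : 0 ≤ α) (hβ : 0 ≤ β) (hw : 0 ≤ w.im) :
    0 ≤ (β * w - α / w).im := by
  have him : ((α : ℂ) / w).im = -(α * w.im / ‖w‖ ^ 2) := by simp [div_im, normSq_eq_norm_sq]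
  rw [sub_im, him, im_ofReal_mul, sub_neg_eq_add]
  positivity

lemma im_mul_add_div_nonneg (hw0 : w ≠ 0) (hw : 0 ≤ w.im) (hαβ : α ≤ β * ‖w‖ ^ 2) :
    0 ≤ (β * w + α / w).im := by
  have him : ((α : ℂ) / w).im = -(α * w.im / ‖w‖ ^ 2) := by simp [div_im, normSq_eq_norm_sq]
  have : 0 < ‖w‖ := norm_pos_iff.mpr hw0
  rw [add_im, him, im_ofReal_mul, ← sub_eq_add_neg, sub_nonneg, div_le_iff₀ (by positivity)]
  nlinarith

lemma norm_mainPrimitive_sub_le (hα : 0 < α) (hβ : 0 < β) (hαβ : 1 ≤ 2 * α * β) (hw : 0 ≤ w.im)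
    (hw2 : α ≤ β * ‖w‖ ^ 2) :
    ‖mainPrimitive α β w - mainPrimitiveLimit α β‖ ≤
      (‖w‖ + √π * α) * rexp (α ^ 2 / w ^ 2 + β ^ 2 * w ^ 2).re := by
  have hw0 : w ≠ 0 := by
    rintro rfl
    simp at hw2
    linarith
  have hsub := norm_mul_expSqPrimitive_sub_le (sub_nonneg.mpr hαβ) (2 * α * β)
    (im_mul_sub_div_nonneg hα.le hβ.le hw)
  have hadd := norm_mul_expSqPrimitive_sub_le (c := 2 * α * β + 1) (by positivity) (-(2 * α * β))
    (im_mul_add_div_nonneg hw0 hw hw2)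
  have hre : (2 * α * β : ℂ).re = 2 * α * β := by norm_cast
  rw [mul_sub_div_sq _ _ hw0, sub_re, hre, sub_add_cancel] at hsub
  rw [mul_add_div_sq _ _ hw0, add_re _ (2 * α * β : ℂ), hre, add_neg_cancel_right] at hadd
  set h : ℂ := α ^ 2 / w ^ 2 + β ^ 2 * w ^ 2
  set A : ℝ := rexp (2 * α * β) * (2 * α * β - 1)
  set B : ℝ := rexp (-(2 * α * β)) * (2 * α * β + 1)
  set L : ℂ := I * (√π / 2 : ℝ)
  have hsplit : mainPrimitive α β w - mainPrimitiveLimit α β =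
      w * cexp h + (A * (expSqPrimitive (β * w - α / w) - L) -
        B * (expSqPrimitive (β * w + α / w) - L)) / (2 * β : ℝ) := by
    simp only [mainPrimitive, mainPrimitiveLimit, h, A, B, L]
    push_cast
    ring
  calc ‖mainPrimitive α β w - mainPrimitiveLimit α β‖
      ≤ ‖w‖ * rexp h.re + ((2 * α * β - 1) * (√π / 2) * rexp h.re +
          (2 * α * β + 1) * (√π / 2) * rexp h.re) / (2 * β) := by
        rw [hsplit]
        refine (norm_add_le _ _).trans ?_
        rw [norm_mul, Complex.norm_exp, norm_div, norm_real, norm_of_nonneg (by positivity)]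
        gcongr
        exact (norm_sub_le _ _).trans (add_le_add hsub hadd)
    _ = (‖w‖ + √π * α) * rexp h.re := by
        field_simp
        ring

lemma norm_mainPrimitive_sub_le_of_im_sq {y : ℝ} (hα : 0 < α) (hαβ : 1 ≤ 2 * α * β)
    (hβ : 2 * α ≤ β) (hy : 0 < y) (hy2 : y ≤ 1 / 2) (hw : 0 ≤ w.im) (hre : (w ^ 2).re = y)
    (him : (w ^ 2).im ^ 2 = 1 / 4) :
    ‖mainPrimitive α β w - mainPrimitiveLimit α β‖ ≤
      (1 + √π * α) * rexp (β ^ 2 * y + 4 * α ^ 2 * y) := by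
  have hβ0 : 0 < β := by linarith
  have hnorm : ‖w ^ 2‖ ^ 2 = y ^ 2 + 1 / 4 := by
    rw [← normSq_eq_norm_sq, normSq_apply, hre, ← him]
    ring
  have hlow : 1 / 2 ≤ ‖w‖ ^ 2 := by rw [← norm_pow]; nlinarith [norm_nonneg (w ^ 2)]
  have hup : ‖w‖ ^ 2 ≤ 1 := by rw [← norm_pow]; nlinarith [norm_nonneg (w ^ 2)]
  refine (norm_mainPrimitive_sub_le hα hβ0 hαβ hw (by nlinarith)).trans ?_
  have hw1 : ‖w‖ ≤ 1 := by nlinarith [norm_nonneg w]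
  have hexponent : (α ^ 2 / w ^ 2 + β ^ 2 * w ^ 2 : ℂ).re ≤ β ^ 2 * y + 4 * α ^ 2 * y := by
    have hquot : ((α : ℂ) ^ 2 / w ^ 2).re = α ^ 2 * y / ‖w ^ 2‖ ^ 2 := by
      rw [← ofReal_pow, div_re, normSq_eq_norm_sq, hre, ofReal_re, ofReal_im]
      ring
    have hlin : ((β : ℂ) ^ 2 * w ^ 2).re = β ^ 2 * y := by rw [← ofReal_pow, re_ofReal_mul, hre]
    rw [add_re, hquot, hlin, hnorm, add_comm]
    gcongr
    rw [div_le_iff₀ (by positivity)]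
    nlinarith [show 0 ≤ 4 * α ^ 2 * y * y ^ 2 by positivity]
  gcongr

lemma sub_mul_I_mem_slitPlane {y : ℝ} (hy : 0 < y) (θ : ℝ) : (y - θ * I : ℂ) ∈ slitPlane :=
  .inl (by simpa using hy)

lemma sub_mul_I_ne_zero {y : ℝ} (hy : 0 < y) (θ : ℝ) : (y - θ * I : ℂ) ≠ 0 :=
  slitPlane_ne_zero (sub_mul_I_mem_slitPlane hy θ)

lemma continuous_sqrt_sub_mul_I {y : ℝ} (hy : 0 < y) :
    Continuous fun θ : ℝ ↦ Complex.sqrt (y - θ * I) :=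
  continuousOn_sqrt.comp_continuous (by fun_prop) (sub_mul_I_mem_slitPlane hy)

lemma integral_sqrt_mul_exp_eq (hβ : β ≠ 0) {y : ℝ} (hy : 0 < y) (a b : ℝ) :
    ∫ θ in a..b, Complex.sqrt (y - θ * I) * cexp (α ^ 2 / (y - θ * I) + β ^ 2 * (y - θ * I)) =
      I / β ^ 2 * (mainPrimitive α β (Complex.sqrt (y - b * I)) -
        mainPrimitive α β (Complex.sqrt (y - a * I))) := by
  have hβ' : (β : ℂ) ≠ 0 := ofReal_ne_zero.mpr hβ
  have hne := sub_mul_I_ne_zero hy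
  have hderiv (θ : ℝ) : HasDerivAt
      (fun θ : ℝ ↦ I / β ^ 2 * mainPrimitive α β (Complex.sqrt (y - θ * I)))
      (Complex.sqrt (y - θ * I) * cexp (α ^ 2 / (y - θ * I) + β ^ 2 * (y - θ * I))) θ := by
    have hw : Complex.sqrt (y - θ * I) ≠ 0 := fun h ↦
      hne θ (by rw [← sqrt_sq (y - θ * I), h, zero_pow two_ne_zero])
    have hline : HasDerivAt (fun θ : ℂ ↦ (y - θ * I : ℂ)) (-I) (θ : ℂ) := by
      simpa using ((hasDerivAt_id (θ : ℂ)).mul_const I).const_sub (y : ℂ)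
    have hsqrt := (hasDerivAt_sqrt (sub_mul_I_mem_slitPlane hy θ)).comp (θ : ℂ) hline
    refine (((hasDerivAt_mainPrimitive (α := α) hβ hw).comp (θ : ℂ) hsqrt).comp_ofReal.const_mul
      (I / (β : ℂ) ^ 2)).congr_deriv ?_
    have hsq := sqrt_sq (y - θ * I)
    generalize Complex.sqrt (y - θ * I) = w at hw hsq
    rw [← hsq]
    field_simp
    rw [I_sq]
    ring
  have hcont : Continuous fun θ : ℝ ↦ Complex.sqrt (y - θ * I) *
      cexp (α ^ 2 / (y - θ * I) + β ^ 2 * (y - θ * I)) := by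
    have := continuous_sqrt_sub_mul_I hy
    fun_prop (disch := assumption)
  rw [intervalIntegral.integral_eq_sub_of_hasDerivAt (fun θ _ ↦ hderiv θ)
    (hcont.intervalIntegrable _ _), mul_sub]

lemma norm_integral_sqrt_mul_exp_sub_le {y : ℝ} (hα : 0 < α) (hαβ : 1 ≤ 2 * α * β)
    (hβ : 2 * α ≤ β) (hy : 0 < y) (hy2 : y ≤ 1 / 2) :
    ‖(∫ θ in (-(1 / 2) : ℝ)..(1 / 2), Complex.sqrt (y - θ * I) *
        cexp (α ^ 2 / (y - θ * I) + β ^ 2 * (y - θ * I))) -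
      (√π * (rexp (2 * α * β) * (2 * α * β - 1)) / (2 * β ^ 3) : ℝ)‖ ≤
      (√π * (rexp (-(2 * α * β)) * (2 * α * β + 1)) / (2 * β) +
        2 * ((1 + √π * α) * rexp (β ^ 2 * y + 4 * α ^ 2 * y))) / β ^ 2 := by
  have hβ0 : 0 < β := by linarith
  have hβ' : (β : ℂ) ≠ 0 := ofReal_ne_zero.mpr hβ0.ne'
  rw [integral_sqrt_mul_exp_eq hβ0.ne' hy]
  set u := Complex.sqrt (y - (-(1 / 2) : ℝ) * I) with hu
  set v := -Complex.sqrt (y - (1 / 2 : ℝ) * I) with hv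
  have hupper := norm_mainPrimitive_sub_le_of_im_sq (w := u) hα hαβ hβ hy hy2
    (sqrt_im_nonneg (by simp)) (by simp [hu, sqrt_sq]) (by simp [hu, sqrt_sq]; norm_num)
  have hlower := norm_mainPrimitive_sub_le_of_im_sq (w := v) hα hαβ hβ hy hy2
    (by simpa [v] using sqrt_im_nonpos (z := y - (1 / 2 : ℝ) * I) (by simp))
    (by simp [hv, sqrt_sq]) (by simp [hv, sqrt_sq]; norm_num)
  rw [show Complex.sqrt (y - (1 / 2 : ℝ) * I) = -v by rw [hv, neg_neg], mainPrimitive_neg]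
  set M := mainPrimitiveLimit α β with hM
  have hsplit : I / β ^ 2 * (-mainPrimitive α β v - mainPrimitive α β u) -
      (√π * (rexp (2 * α * β) * (2 * α * β - 1)) / (2 * β ^ 3) : ℝ) =
      -((√π * (rexp (-(2 * α * β)) * (2 * α * β + 1)) / (2 * β) : ℝ) +
        I * ((mainPrimitive α β u - M) + (mainPrimitive α β v - M))) / (β ^ 2 : ℝ) := by
    rw [hM, mainPrimitiveLimit]
    push_cast
    field_simp
    ring_nf
    rw [I_sq]
    ring
  rw [hsplit, norm_div, norm_neg, norm_real, norm_of_nonneg (sq_nonneg β)]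
  gcongr
  refine (norm_add_le _ _).trans ?_
  rw [norm_real, norm_of_nonneg (by positivity), norm_mul, norm_I, one_mul]
  gcongr
  exact (norm_add_le_of_le hupper hlower).trans_eq (two_mul _).symm

end MainIntegral

section MainTerm

open Complex

/-- The leading term of `(η (I z))⁻¹` as `z → 0`, which comes from `η (I z) = η (I / z) / √z` and
the behaviour `η τ ~ exp (2 π I τ / 24)` of `η` at infinity. -/
noncomputable def cuspTerm (z : ℂ) : ℂ := Complex.sqrt z * cexp ((π / 12 : ℝ) / z)

lemma exp_one_quarter_le : rexp (1 / 4) ≤ 4 / 3 := by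
  have := Real.exp_bound_div_one_sub_of_interval (x := 1 / 4) (by norm_num) (by norm_num)
  linarith

variable {m α β : ℝ}

lemma sqrt_pi_mul_exp_div_eq_main_term (hα : 0 < α) (hα2 : α ^ 2 = π / 12) (hm : m ≠ 0)
    (hαβ : 2 * α * β = m) :
    √π * (rexp m * (m - 1)) / (2 * β ^ 3) = d / m ^ 2 * (1 - 1 / m) * rexp m := by
  have h3 : √3 ^ 2 = 3 := Real.sq_sqrt (by norm_num)
  have hπ : π = 12 * α ^ 2 := by rw [hα2]; ring
  have hsqrtπ : √π = 2 * √3 * α := by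
    rw [hπ, Real.sqrt_eq_iff_mul_self_eq (by positivity) (by positivity)]
    linear_combination -4 * α ^ 2 * h3
  have hd : d = 8 * √3 * α ^ 4 := by
    rw [d, hπ]
    field_simp
    linear_combination (-48 : ℝ) * h3
  have hβ : β = m / (2 * α) := by rw [← hαβ]; field_simp
  rw [hd, hsqrtπ, hβ]
  field_simp
  ring

lemma sqrt_pi_mul_exp_neg_div_add_le (hα : 0 < α) (hα2 : α ^ 2 = π / 12) (hαβ : 2 * α * β = m)
    (hβ : 1 ≤ β) :
    √π * (rexp (-m) * (m + 1)) / (2 * β) + 2 * ((1 + √π * α) * (4 / 3 * rexp (m / 4))) ≤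
      10 * rexp (m / 4) := by
  have hm : 0 < m := by rw [← hαβ]; positivity
  have hsqrtπ : √π ≤ 2 := Real.sqrt_le_iff.mpr ⟨by norm_num, by linarith [Real.pi_lt_d2]⟩
  have hα1 : α ≤ 0.52 := by nlinarith [Real.pi_lt_d2]
  have hexp : rexp (-m) * (m + 1) ≤ 1 := by
    rw [Real.exp_neg, ← div_eq_inv_mul, div_le_one (Real.exp_pos _)]
    exact Real.add_one_le_exp m
  calc √π * (rexp (-m) * (m + 1)) / (2 * β) + 2 * ((1 + √π * α) * (4 / 3 * rexp (m / 4)))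
      ≤ 2 * 1 / (2 * 1) + 2 * ((1 + 2 * 0.52) * (4 / 3 * rexp (m / 4))) := by gcongr
    _ ≤ 10 * rexp (m / 4) := by linarith [Real.one_le_exp (show 0 ≤ m / 4 by positivity)]

lemma norm_integral_cuspTerm_sub_le {y : ℝ} (hm : 28 ≤ m) (hy : 0 < y) (hmy : 12 * m * y = π) :
    ‖(∫ θ in (-(1 / 2) : ℝ)..(1 / 2),
        cuspTerm (y - θ * I) * cexp ((3 * m ^ 2 / π : ℝ) * (y - θ * I))) -
      (d / m ^ 2 * (1 - 1 / m) * rexp m : ℝ)‖ ≤ 1 / 10 * rexp (m / 4) := by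
  have hπ := Real.pi_lt_d2
  obtain ⟨α, hα, hα2⟩ : ∃ α : ℝ, 0 < α ∧ α ^ 2 = π / 12 :=
    ⟨√(π / 12), by positivity, Real.sq_sqrt (by positivity)⟩
  obtain ⟨β, hαβ⟩ : ∃ β, 2 * α * β = m := ⟨m / (2 * α), by field_simp⟩
  have hβ2 : β ^ 2 = 3 * m ^ 2 / π := by
    rw [eq_div_iff Real.pi_ne_zero, ← hαβ]
    linear_combination (-12 * β ^ 2 : ℝ) * hα2
  have hα1 : α ≤ 0.52 := by nlinarith
  have hβ : 26 ≤ β := by nlinarith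
  have hy1 : y ≤ 1 / 100 := by nlinarith
  have hbound := norm_integral_sqrt_mul_exp_sub_le (β := β) hα (by linarith) (by linarith) hy
    (by linarith)
  have hexp : rexp (β ^ 2 * y + 4 * α ^ 2 * y) ≤ 4 / 3 * rexp (m / 4) := by
    have hβy : β ^ 2 * y = m / 4 := by rw [hβ2, ← hmy]; field_simp; norm_num
    rw [hβy, Real.exp_add, mul_comm]
    gcongr
    exact (Real.exp_le_exp.mpr (by nlinarith)).trans exp_one_quarter_le
  rw [hαβ, sqrt_pi_mul_exp_div_eq_main_term hα hα2 (by linarith) hαβ] at hbound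
  have hintegrand (θ : ℝ) : cuspTerm (y - θ * I) * cexp ((3 * m ^ 2 / π : ℝ) * (y - θ * I)) =
      Complex.sqrt (y - θ * I) * cexp (α ^ 2 / (y - θ * I) + β ^ 2 * (y - θ * I)) := by
    rw [cuspTerm, mul_assoc, ← Complex.exp_add, ← hβ2, ← hα2, ofReal_pow, ofReal_pow]
  simp_rw [hintegrand]
  refine hbound.trans ?_
  rw [div_le_iff₀ (by positivity)]
  calc √π * (rexp (-m) * (m + 1)) / (2 * β) +
        2 * ((1 + √π * α) * rexp (β ^ 2 * y + 4 * α ^ 2 * y))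
      ≤ √π * (rexp (-m) * (m + 1)) / (2 * β) + 2 * ((1 + √π * α) * (4 / 3 * rexp (m / 4))) := by
        gcongr
    _ ≤ 10 * rexp (m / 4) := sqrt_pi_mul_exp_neg_div_add_le hα hα2 hαβ (by linarith)
    _ = 1 / 10 * rexp (m / 4) * 10 ^ 2 := by ring
    _ ≤ 1 / 10 * rexp (m / 4) * β ^ 2 := by
        gcongr
        linarith

end MainTerm

section Pointwise

open ModularForm Function.Periodic
open Complex hiding eta

lemma sqrt_I_mul {z : ℂ} (hz : 0 < z.re) :
    Complex.sqrt (I * z) = Complex.sqrt I * Complex.sqrt z := by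
  have hz0 : z ≠ 0 := slitPlane_ne_zero (.inl hz)
  have harg := abs_lt.mp (abs_arg_lt_pi_div_two_iff.mpr (.inl hz))
  rw [sqrt_eq_exp (mul_ne_zero I_ne_zero hz0), sqrt_eq_exp I_ne_zero, sqrt_eq_exp hz0,
    ← Complex.exp_add, Complex.log_mul I_ne_zero hz0]
  · ring_nf
  · rw [arg_I]
    constructor <;> linarith [harg.1, harg.2]

lemma sqrt_ne_zero {z : ℂ} (hz : z ≠ 0) : Complex.sqrt z ≠ 0 := fun h ↦
  hz (by rw [← sqrt_sq z, h, zero_pow two_ne_zero])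

lemma inv_eta_I_mul {z : ℂ} (hz : 0 < z.re) :
    (eta (I * z))⁻¹ = cuspTerm z * (euler (qParam 1 (I / z)))⁻¹ := by
  have hsqrt := sqrt_ne_zero (slitPlane_ne_zero (.inl hz))
  have hinv : -1 / (I * z) = I / z := by field_simp; rw [I_sq, neg_div]
  have hS := eta_comp_eq_csqrt_I_inv (x := I * z) (by simpa using hz)
  simp only [Function.comp_apply, Pi.smul_apply, Pi.mul_apply, smul_eq_mul, sqrt_I_mul hz, hinv]
    at hS
  have heta : eta (I * z) = eta (I / z) / Complex.sqrt z := by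
    rw [hS]
    field_simp [sqrt_ne_zero I_ne_zero]
  rw [heta, inv_div, eta_eq_qParam_mul_euler, cuspTerm, qParam, div_eq_mul_inv, mul_inv,
    ← Complex.exp_neg, ← mul_assoc]
  congr 3
  push_cast
  linear_combination (- (π : ℂ) / z / 12) * I_sq

lemma norm_cuspTerm (z : ℂ) : ‖cuspTerm z‖ = √‖z‖ * rexp (π / 12 * z⁻¹.re) := by
  have hsqrt : ‖Complex.sqrt z‖ = √‖z‖ := by
    rw [eq_comm, Real.sqrt_eq_iff_mul_self_eq (norm_nonneg _) (norm_nonneg _), ← pow_two,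
      ← norm_pow, sqrt_sq]
  rw [cuspTerm, norm_mul, Complex.norm_exp, div_eq_mul_inv, re_ofReal_mul, hsqrt]

lemma norm_inv_eta_sub_cuspTerm_le_one {z : ℂ} (hz : 0 < z.re) (hnorm : ‖z‖ ≤ 0.51)
    (h : 3 ≤ 4 * z⁻¹.re ^ 2) : ‖(eta (I * z))⁻¹ - cuspTerm z‖ ≤ 1 := by
  have hY : 0 < z⁻¹.re := by
    rw [inv_re]
    exact div_pos hz (normSq_pos.mpr (slitPlane_ne_zero (.inl hz)))
  set Y := z⁻¹.re with hYdef
  set q := qParam 1 (I / z)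
  have hq : ‖q‖ = rexp (-(2 * π * Y)) := by simp [q, norm_qParam, div_eq_mul_inv, hYdef]
  have hq200 := exp_neg_two_pi_mul_le hY h
  have heuler : ‖(euler q)⁻¹ - 1‖ ≤ 1.02 * rexp (-(2 * π * Y)) := by
    refine (norm_inv_euler_sub_one_le (by linarith)).trans ?_
    rw [hq, div_le_iff₀ (by linarith)]
    nlinarith [Real.exp_pos (-(2 * π * Y))]
  have hsqrt : √‖z‖ ≤ 0.8 := Real.sqrt_le_iff.mpr ⟨by norm_num, by linarith⟩
  have hexp : rexp (π / 12 * Y) * rexp (-(2 * π * Y)) ≤ 1 := by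
    rw [← Real.exp_add, Real.exp_le_one_iff]
    nlinarith [mul_pos Real.pi_pos hY]
  calc ‖(eta (I * z))⁻¹ - cuspTerm z‖
      = √‖z‖ * rexp (π / 12 * Y) * ‖(euler q)⁻¹ - 1‖ := by
        rw [inv_eta_I_mul hz, ← mul_sub_one, norm_mul, norm_cuspTerm]
    _ ≤ 0.8 * rexp (π / 12 * Y) * (1.02 * rexp (-(2 * π * Y))) := by gcongr
    _ = 0.8 * 1.02 * (rexp (π / 12 * Y) * rexp (-(2 * π * Y))) := by ring
    _ ≤ 1 := by linarith

lemma norm_cuspTerm_le_one {z : ℂ} (hnorm : ‖z‖ ≤ 0.51) (h : 4 * z⁻¹.re ^ 2 ≤ 3) :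
    ‖cuspTerm z‖ ≤ 1 := by
  have hsqrt : √‖z‖ ≤ 3 / 4 := Real.sqrt_le_iff.mpr ⟨by norm_num, by linarith⟩
  have hexp : rexp (π / 12 * z⁻¹.re) ≤ 4 / 3 := by
    refine (Real.exp_le_exp.mpr ?_).trans exp_one_quarter_le
    have : z⁻¹.re ≤ 0.8661 := by nlinarith
    nlinarith [Real.pi_pos, Real.pi_lt_d4]
  calc ‖cuspTerm z‖ = √‖z‖ * rexp (π / 12 * z⁻¹.re) := norm_cuspTerm z
    _ ≤ 3 / 4 * (4 / 3) := by gcongr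
    _ = 1 := by norm_num

lemma exp_div_le_exp_div {Y Y₀ : ℝ} (hY : 0.866 ≤ Y) (hY₀ : 11 ≤ Y₀) (h : Y ≤ Y₀) :
    rexp (π * Y / 3) / Y ≤ rexp (π * Y₀ / 3) / Y₀ := by
  have hπ := Real.pi_gt_d2
  have hY0 : 0 < Y := by linarith
  have hratio : Y₀ ≤ rexp (π / 3 * (Y₀ - Y)) * Y := by
    refine le_trans ?_ (mul_le_mul_of_nonneg_right
      (Real.exp_le_exp.mpr (show Y₀ - Y ≤ π / 3 * (Y₀ - Y) by nlinarith)) hY0.le)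
    by_cases hY1 : 1 ≤ Y
    · nlinarith [Real.add_one_le_exp (Y₀ - Y)]
    · nlinarith [Real.quadratic_le_exp_of_nonneg (x := Y₀ - Y) (by linarith)]
  rw [div_le_div_iff₀ hY0 (by linarith)]
  calc rexp (π * Y / 3) * Y₀ ≤ rexp (π * Y / 3) * (rexp (π / 3 * (Y₀ - Y)) * Y) := by gcongr
    _ = rexp (π * Y₀ / 3) * Y := by
        rw [← mul_assoc, ← Real.exp_add]
        ring_nf

lemma sq_le_add_intCast_sq {θ : ℝ} (hθ : |θ| ≤ 1 / 2) (k : ℤ) : θ ^ 2 ≤ (θ + k) ^ 2 := by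
  obtain ⟨hθ1, hθ2⟩ := abs_le.mp hθ
  rcases lt_trichotomy k 0 with hk | rfl | hk
  · have : (k : ℝ) ≤ -1 := by exact_mod_cast Int.le_sub_one_of_lt hk
    nlinarith
  · simp
  · have : (1 : ℝ) ≤ k := by exact_mod_cast hk
    nlinarith

variable {m y θ D : ℝ} {a b : ℤ}

lemma coprime_form_cases (hab : IsCoprime a b) (hθ : |θ| ≤ 1 / 2)
    (hD : (a * θ + b) ^ 2 + a ^ 2 * y ^ 2 ≤ 1 / 80) (ha : a ^ 2 < 9) :
    θ ^ 2 + y ^ 2 ≤ (a * θ + b) ^ 2 + a ^ 2 * y ^ 2 ∨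
      (a * θ + b) ^ 2 + a ^ 2 * y ^ 2 = 4 * ((θ - 1 / 2) ^ 2 + y ^ 2) ∨
      (a * θ + b) ^ 2 + a ^ 2 * y ^ 2 = 4 * ((θ + 1 / 2) ^ 2 + y ^ 2) := by
  wlog ha0 : 0 ≤ a generalizing a b
  · have hneg : ((-a : ℤ) * θ + (-b : ℤ)) ^ 2 + ((-a : ℤ) : ℝ) ^ 2 * y ^ 2 =
        (a * θ + b) ^ 2 + a ^ 2 * y ^ 2 := by push_cast; ring
    simpa only [hneg] using
      this hab.neg_neg (hneg.trans_le hD) (by rwa [neg_sq]) (by linarith)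
  have ha3 : a < 3 := by nlinarith
  interval_cases a
  · rcases Int.isUnit_iff.mp (isCoprime_zero_left.mp hab) with rfl | rfl <;> norm_num at hD
  · left
    have := sq_le_add_intCast_sq hθ b
    push_cast
    linarith
  · right
    obtain ⟨hθ1, hθ2⟩ := abs_le.mp hθ
    obtain ⟨hlow, hup⟩ := abs_lt.mp (abs_lt_of_sq_lt_sq
      (show (2 * θ + b) ^ 2 < (1 / 2 : ℝ) ^ 2 by push_cast at hD; nlinarith [sq_nonneg y])
      (by norm_num))
    have hb_low : -2 < b := by exact_mod_cast (by linarith : (-2 : ℝ) < b)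
    have hb_up : b < 2 := by exact_mod_cast (by linarith : (b : ℝ) < 2)
    have hb0 : b ≠ 0 := by
      rintro rfl
      simp at hab
    obtain rfl | rfl : b = -1 ∨ b = 1 := by omega
    · left; push_cast; ring
    · right; push_cast; ring

lemma mul_exp_le_of_nine_mul_sq_le (hy : 0 < y) (hy1 : y ≤ 1 / 100) (hmy : 12 * m * y = π)
    (hD : 0 < D) (hyD : 0.866 ≤ y / D) (h : 9 * y ^ 2 ≤ D) :
    D * rexp (π * (y / D) / 3) ≤ 9 * y ^ 2 * rexp (4 * (m / 9)) := by
  have hle : y / D ≤ 1 / (9 * y) := by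
    rw [div_le_div_iff₀ hD (by positivity)]
    linarith
  have hge : 11 ≤ 1 / (9 * y) := by
    rw [le_div_iff₀ (by positivity)]
    linarith
  have hexponent : π * (1 / (9 * y)) / 3 = 4 * (m / 9) := by
    rw [← hmy]
    field_simp
    ring
  have hmono := exp_div_le_exp_div hyD hge hle
  rw [hexponent, div_div_eq_mul_div, div_div_eq_mul_div, div_one, div_le_iff₀ hy] at hmono
  linarith

lemma mul_exp_le_of_lt_nine_mul_sq (hy : 0 < y) (hm : 0 ≤ m) (hmy : 12 * m * y = π) {φ : ℝ}
    (hD : D = 4 * (φ ^ 2 + y ^ 2)) (h : D < 9 * y ^ 2) :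
    D * rexp (π * (y / D) / 3) ≤ 9 * y ^ 2 * rexp (4 * (m / 4 - m * φ ^ 2 / (9 * y ^ 2))) := by
  have hexponent : π * (y / D) / 3 = m - m * φ ^ 2 / (φ ^ 2 + y ^ 2) := by
    rw [hD, ← hmy]
    field_simp
    ring
  have hquot : 4 * (m * φ ^ 2 / (9 * y ^ 2)) ≤ m * φ ^ 2 / (φ ^ 2 + y ^ 2) := by
    rw [← mul_div_assoc, div_le_div_iff₀ (by positivity) (by positivity)]
    nlinarith [show 0 ≤ m * φ ^ 2 by positivity]
  gcongr
  linarith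

lemma coprime_form_mul_exp_le (hy : 0 < y) (hy1 : y ≤ 1 / 100) (hmy : 12 * m * y = π)
    (hab : IsCoprime a b) (hθ : |θ| ≤ 1 / 2) (hD : D = (a * θ + b) ^ 2 + a ^ 2 * y ^ 2)
    (hyD : 3 ≤ 4 * (y / D) ^ 2) (h : 4 * (y / (θ ^ 2 + y ^ 2)) ^ 2 < 3) :
    ∃ e ∈ ({m / 9, m / 4 - m * (θ - 1 / 2) ^ 2 / (9 * y ^ 2),
      m / 4 - m * (θ + 1 / 2) ^ 2 / (9 * y ^ 2)} : Set ℝ),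
      D * rexp (π * (y / D) / 3) ≤ 9 * y ^ 2 * rexp (4 * e) := by
  have hm : 0 ≤ m := by nlinarith [Real.pi_pos]
  have hD0 : 0 < D := by
    refine lt_of_le_of_ne (by rw [hD]; positivity) ?_
    rintro rfl
    norm_num at hyD
  have hyD' : 0.866 ≤ y / D := by nlinarith [div_pos hy hD0]
  rcases le_or_gt (9 * y ^ 2) D with h9 | h9
  · exact ⟨_, by simp, mul_exp_le_of_nine_mul_sq_le hy hy1 hmy hD0 hyD' h9⟩
  have ha : a ^ 2 < 9 := by
    have : (a : ℝ) ^ 2 * y ^ 2 < 9 * y ^ 2 := by linarith [sq_nonneg (a * θ + b)]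
    exact_mod_cast lt_of_mul_lt_mul_right this (by positivity)
  have hD80 : D ≤ 1 / 80 := by
    rw [le_div_iff₀ hD0] at hyD'
    linarith
  rw [hD] at hD80
  rcases coprime_form_cases hab hθ hD80 ha with hcusp | hcusp | hcusp <;> rw [← hD] at hcusp
  · have : (y / D) ^ 2 ≤ (y / (θ ^ 2 + y ^ 2)) ^ 2 := by gcongr
    linarith
  · exact ⟨_, by simp, mul_exp_le_of_lt_nine_mul_sq hy hm hmy hcusp h9⟩
  · exact ⟨_, by simp, mul_exp_le_of_lt_nine_mul_sq hy hm hmy hcusp h9⟩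

lemma norm_inv_eta_le (hy : 0 < y) (hy1 : y ≤ 1 / 100) (hmy : 12 * m * y = π)
    (hθ : |θ| ≤ 1 / 2) (h : 4 * (y / (θ ^ 2 + y ^ 2)) ^ 2 < 3) :
    ‖eta (θ + y * I)‖⁻¹ ≤ 199 / 198 * √(3 * y) * (rexp (m / 9) +
      rexp (m / 4 - m * (θ - 1 / 2) ^ 2 / (9 * y ^ 2)) +
      rexp (m / 4 - m * (θ + 1 / 2) ^ 2 / (9 * y ^ 2))) := by
  let τ : UpperHalfPlane := ⟨θ + y * I, by simpa using hy⟩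
  obtain ⟨a, b, hab, hfd, hη⟩ := exists_coprime_norm_inv_eta_le τ
  have him : τ.im = y := show (θ + y * I : ℂ).im = y by simp
  have hD : normSq (a * (τ : ℂ) + b) = (a * θ + b) ^ 2 + a ^ 2 * y ^ 2 := by
    change normSq (a * (θ + y * I) + b) = _
    rw [normSq_apply]
    simp
    ring
  rw [him] at hfd hη
  obtain ⟨e, he, hle⟩ := coprime_form_mul_exp_le hy hy1 hmy hab hθ hD hfd h
  have hsqrt : √(3 * y) ^ 4 = 9 * y ^ 2 := by
    rw [show √(3 * y) ^ 4 = (√(3 * y) ^ 2) ^ 2 by ring, Real.sq_sqrt (by positivity)]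
    ring
  have hpow : ‖eta (θ + y * I)‖⁻¹ ^ 4 ≤ (199 / 198 * √(3 * y) * rexp e) ^ 4 :=
    calc ‖eta (θ + y * I)‖⁻¹ ^ 4 ≤ (199 / 198) ^ 4 * (9 * y ^ 2 * rexp (4 * e)) :=
          hη.trans (by gcongr)
      _ = (199 / 198 * √(3 * y) * rexp e) ^ 4 := by
          rw [mul_pow, mul_pow, hsqrt, ← Real.exp_nat_mul]
          push_cast
          ring
  refine (le_of_pow_le_pow_left₀ four_ne_zero (by positivity) hpow).trans ?_
  gcongr
  rcases he with rfl | rfl | rfl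
  · rw [add_assoc]
    exact le_add_of_nonneg_right (by positivity)
  · exact (le_add_of_nonneg_left (by positivity)).trans (le_add_of_nonneg_right (by positivity))
  · exact le_add_of_nonneg_left (by positivity)

end Pointwise

section ErrorIntegral

open MeasureTheory ModularForm
open Complex hiding eta

variable {m y θ : ℝ}

/-- The bound for `(η τ)⁻¹ - cuspTerm (τ / I)` on the line `im τ = y`, where `12 m y = π`. The last
two exponentials come from the cusps `1 / 2` and `-1 / 2`, and `exp (m / 9)` from all cusps of
denominator at least `3`. -/
noncomputable def cuspErrorBound (m y θ : ℝ) : ℝ :=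
  1 + 199 / 198 * √(3 * y) * (rexp (m / 9) + rexp (m / 4 - m * (θ - 1 / 2) ^ 2 / (9 * y ^ 2)) +
    rexp (m / 4 - m * (θ + 1 / 2) ^ 2 / (9 * y ^ 2)))

lemma norm_inv_eta_sub_cuspTerm_le (hy : 0 < y) (hy1 : y ≤ 1 / 100) (hmy : 12 * m * y = π)
    (hθ : |θ| ≤ 1 / 2) :
    ‖(eta (θ + y * I))⁻¹ - cuspTerm (y - θ * I)‖ ≤ cuspErrorBound m y θ := by
  have hτ : (θ + y * I : ℂ) = I * (y - θ * I) := by linear_combination (θ : ℂ) * I_sq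
  have hnormSq : normSq (y - θ * I) = θ ^ 2 + y ^ 2 := by
    rw [normSq_apply]
    simp
    ring
  have hinv : (y - θ * I : ℂ)⁻¹.re = y / (θ ^ 2 + y ^ 2) := by simp [inv_re, hnormSq]
  have hnorm : ‖(y - θ * I : ℂ)‖ ≤ 0.51 := by
    refine abs_le_of_sq_le_sq' ?_ (by norm_num) |>.2
    rw [← normSq_eq_norm_sq, hnormSq]
    nlinarith [abs_le.mp hθ]
  rw [cuspErrorBound]
  rcases le_or_gt 3 (4 * (y / (θ ^ 2 + y ^ 2)) ^ 2) with h | h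
  · rw [hτ]
    refine (norm_inv_eta_sub_cuspTerm_le_one (by simpa using hy) hnorm (by rwa [hinv])).trans ?_
    exact le_add_of_nonneg_right (by positivity)
  · refine (norm_sub_le _ _).trans ?_
    rw [norm_inv, add_comm]
    exact add_le_add (norm_cuspTerm_le_one hnorm (by rw [hinv]; exact h.le))
      (norm_inv_eta_le hy hy1 hmy hθ h)

lemma integral_exp_neg_mul_sub_sq_le {c : ℝ} (hc : 0 < c) {a b : ℝ} (hab : a ≤ b) (x : ℝ) :
    ∫ θ in a..b, rexp (-c * (θ - x) ^ 2) ≤ √(π / c) := by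
  have hint : Integrable fun θ : ℝ ↦ rexp (-c * (θ - x) ^ 2) :=
    (integrable_exp_neg_mul_sq hc).comp_sub_right x
  rw [intervalIntegral.integral_of_le hab, ← integral_gaussian c,
    ← integral_sub_right_eq_self (fun θ ↦ rexp (-c * θ ^ 2)) x]
  exact setIntegral_le_integral hint (.of_forall fun _ ↦ (Real.exp_pos _).le)

lemma sqrt_mul_integral_exp_le (hm : 0 < m) (hy : 0 < y) (hmy : 12 * m * y = π) (x : ℝ) :
    √(3 * y) * ∫ θ in (-(1 / 2) : ℝ)..(1 / 2), rexp (m / 4 - m * (θ - x) ^ 2 / (9 * y ^ 2)) ≤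
      π ^ 2 / (8 * m ^ 2) * rexp (m / 4) := by
  set c := m / (9 * y ^ 2)
  have hfactor (θ : ℝ) : rexp (m / 4 - m * (θ - x) ^ 2 / (9 * y ^ 2)) =
      rexp (m / 4) * rexp (-c * (θ - x) ^ 2) := by
    rw [← Real.exp_add]
    congr 1
    ring
  have hconst : √(3 * y) * √(π / c) = π ^ 2 / (8 * m ^ 2) := by
    rw [← Real.sqrt_mul (by positivity), Real.sqrt_eq_iff_mul_self_eq (by positivity)
      (by positivity)]
    simp only [c]
    rw [← hmy]
    field_simp
    ring
  simp_rw [hfactor, intervalIntegral.integral_const_mul, ← hconst]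
  calc √(3 * y) * (rexp (m / 4) * ∫ θ in (-(1 / 2) : ℝ)..(1 / 2), rexp (-c * (θ - x) ^ 2))
      ≤ √(3 * y) * (rexp (m / 4) * √(π / c)) := by
        gcongr
        exact integral_exp_neg_mul_sub_sq_le (by positivity) (by norm_num) x
    _ = √(3 * y) * √(π / c) * rexp (m / 4) := by ring

@[fun_prop]
lemma continuous_cuspErrorBound (m y : ℝ) : Continuous (cuspErrorBound m y) := by
  unfold cuspErrorBound
  fun_prop

lemma integral_cuspErrorBound_eq (m y : ℝ) :
    ∫ θ in (-(1 / 2) : ℝ)..(1 / 2), cuspErrorBound m y θ =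
      1 + 199 / 198 * (√(3 * y) * rexp (m / 9) +
        √(3 * y) * (∫ θ in (-(1 / 2) : ℝ)..(1 / 2),
          rexp (m / 4 - m * (θ - 1 / 2) ^ 2 / (9 * y ^ 2))) +
        √(3 * y) * ∫ θ in (-(1 / 2) : ℝ)..(1 / 2),
          rexp (m / 4 - m * (θ - -(1 / 2)) ^ 2 / (9 * y ^ 2))) := by
  set G : ℝ → ℝ → ℝ := fun x θ ↦ rexp (m / 4 - m * (θ - x) ^ 2 / (9 * y ^ 2)) with hG
  have hint (x : ℝ) : IntervalIntegrable (G x) volume (-(1 / 2)) (1 / 2) :=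
    Continuous.intervalIntegrable (by fun_prop) _ _
  have hbound (θ : ℝ) : cuspErrorBound m y θ =
      1 + 199 / 198 * √(3 * y) * (rexp (m / 9) + G (1 / 2) θ + G (-(1 / 2)) θ) := by
    simp only [cuspErrorBound, hG, sub_neg_eq_add]
  simp_rw [hbound]
  rw [intervalIntegral.integral_add (by simp)
      (((intervalIntegrable_const.add (hint _)).add (hint _)).const_mul _),
    intervalIntegral.integral_const_mul,
    intervalIntegral.integral_add (intervalIntegrable_const.add (hint _)) (hint _),
    intervalIntegral.integral_add intervalIntegrable_const (hint _)]
  simp only [intervalIntegral.integral_const, hG, smul_eq_mul]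
  ring

lemma integral_cuspErrorBound_le (hm : 28 ≤ m) (hy : 0 < y) (hmy : 12 * m * y = π) :
    ∫ θ in (-(1 / 2) : ℝ)..(1 / 2), cuspErrorBound m y θ ≤
      1 + 0.18 * rexp (m / 9) + 5 / 2 / m ^ 2 * rexp (m / 4) := by
  have hm0 : 0 < m := by linarith
  have hsqrt : √(3 * y) ≤ 0.17 :=
    Real.sqrt_le_iff.mpr ⟨by norm_num, by nlinarith [Real.pi_lt_d4]⟩
  have hπ : 199 / 198 * (π ^ 2 / (8 * m ^ 2)) ≤ 5 / 4 / m ^ 2 := by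
    have hπ2 : π ^ 2 ≤ 3.1416 ^ 2 := by gcongr; exact Real.pi_lt_d4.le
    calc 199 / 198 * (π ^ 2 / (8 * m ^ 2)) = 199 / 198 * (π ^ 2 / 8) / m ^ 2 := by ring
      _ ≤ 5 / 4 / m ^ 2 := by
        gcongr
        linarith
  calc ∫ θ in (-(1 / 2) : ℝ)..(1 / 2), cuspErrorBound m y θ
      ≤ 1 + 199 / 198 * (0.17 * rexp (m / 9) + π ^ 2 / (8 * m ^ 2) * rexp (m / 4) +
          π ^ 2 / (8 * m ^ 2) * rexp (m / 4)) := by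
        rw [integral_cuspErrorBound_eq]
        have hcusp := sqrt_mul_integral_exp_le hm0 hy hmy
        have h₀ := mul_le_mul_of_nonneg_right hsqrt (Real.exp_pos (m / 9)).le
        linarith [hcusp (1 / 2), hcusp (-(1 / 2))]
    _ = 1 + 199 / 198 * 0.17 * rexp (m / 9) +
          2 * (199 / 198 * (π ^ 2 / (8 * m ^ 2))) * rexp (m / 4) := by ring
    _ ≤ 1 + 0.18 * rexp (m / 9) + 2 * (5 / 4 / m ^ 2) * rexp (m / 4) := by
        gcongr
        norm_num
    _ = 1 + 0.18 * rexp (m / 9) + 5 / 2 / m ^ 2 * rexp (m / 4) := by ring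

lemma norm_integral_inv_eta_sub_cuspTerm_le (hm : 28 ≤ m) (hy : 0 < y) (hmy : 12 * m * y = π)
    {f : ℝ → ℂ} (hf : ∀ θ, ‖f θ‖ = rexp (m / 4)) :
    ‖∫ θ in (-(1 / 2) : ℝ)..(1 / 2),
        ((eta (θ + y * I))⁻¹ - cuspTerm (y - θ * I)) * f θ‖ ≤
      (1 + 0.18 * rexp (m / 9) + 5 / 2 / m ^ 2 * rexp (m / 4)) * rexp (m / 4) := by
  have hy1 : y ≤ 1 / 100 := by nlinarith [Real.pi_lt_d2]
  calc ‖∫ θ in (-(1 / 2) : ℝ)..(1 / 2), ((eta (θ + y * I))⁻¹ - cuspTerm (y - θ * I)) * f θ‖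
      ≤ ∫ θ in (-(1 / 2) : ℝ)..(1 / 2), cuspErrorBound m y θ * rexp (m / 4) := by
        refine intervalIntegral.norm_integral_le_of_norm_le (by norm_num)
          (ae_of_all _ fun θ hθ ↦ ?_) (Continuous.intervalIntegrable (by fun_prop) _ _)
        rw [norm_mul, hf]
        gcongr
        exact norm_inv_eta_sub_cuspTerm_le hy hy1 hmy (abs_le.mpr ⟨hθ.1.le, hθ.2⟩)
    _ ≤ (1 + 0.18 * rexp (m / 9) + 5 / 2 / m ^ 2 * rexp (m / 4)) * rexp (m / 4) := by
        rw [intervalIntegral.integral_mul_const]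
        gcongr
        exact integral_cuspErrorBound_le hm hy hmy

end ErrorIntegral

section LargeValues

open ModularForm MeasureTheory
open Complex hiding eta

lemma sq_le_mul_exp {m : ℝ} (hm : 0 ≤ m) : m ^ 2 ≤ 28.1 * rexp (5 * m / 36) := by
  have htangent : rexp 1 * (5 * m / 72) ≤ rexp (5 * m / 72) := by
    have := Real.add_one_le_exp (5 * m / 72 - 1)
    rw [← add_sub_cancel 1 (5 * m / 72), Real.exp_add]
    gcongr
    linarith
  have hlin : 2.7182 * (5 * m / 72) ≤ rexp (5 * m / 72) :=
    le_trans (by gcongr; linarith [Real.exp_one_gt_d9]) htangent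
  calc m ^ 2 ≤ 28.1 * (2.7182 * (5 * m / 72)) ^ 2 := by nlinarith [sq_nonneg m]
    _ ≤ 28.1 * rexp (5 * m / 72) ^ 2 := by gcongr
    _ = 28.1 * rexp (5 * m / 36) := by
        rw [← Real.exp_nat_mul]
        ring_nf

lemma sq_mul_error_lt {m : ℝ} (hm : 28 ≤ m) :
    m ^ 2 * (1.1 + 0.18 * rexp (m / 9)) < 6.5 * rexp (m / 4) := by
  have hexp : 22 ≤ rexp (m / 9) := by
    have hone := Real.exp_one_gt_d9
    have hninth := Real.add_one_le_exp (1 / 9)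
    calc (22 : ℝ) ≤ 2.7182 ^ 3 * (1 / 9 + 1) := by norm_num
      _ ≤ rexp 1 ^ 3 * rexp (1 / 9) := by gcongr; linarith
      _ = rexp (28 / 9) := by
          rw [← Real.exp_nat_mul, ← Real.exp_add]
          norm_num
      _ ≤ rexp (m / 9) := by gcongr
  calc m ^ 2 * (1.1 + 0.18 * rexp (m / 9))
      ≤ 28.1 * rexp (5 * m / 36) * (0.23 * rexp (m / 9)) := by
        gcongr
        · exact sq_le_mul_exp (by linarith)
        · linarith
    _ = 28.1 * 0.23 * rexp (m / 4) := by
        rw [mul_mul_mul_comm, ← Real.exp_add]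
        ring_nf
    _ < 6.5 * rexp (m / 4) := by
        gcongr
        norm_num

lemma total_error_lt {m : ℝ} (hm : 28 ≤ m) :
    (1.1 + 0.18 * rexp (m / 9) + 5 / 2 / m ^ 2 * rexp (m / 4)) * rexp (m / 4) <
      9 / m ^ 2 * rexp (m / 2) := by
  have hm2 : 0 < m ^ 2 := by positivity
  calc (1.1 + 0.18 * rexp (m / 9) + 5 / 2 / m ^ 2 * rexp (m / 4)) * rexp (m / 4)
      < (6.5 * rexp (m / 4) / m ^ 2 + 5 / 2 / m ^ 2 * rexp (m / 4)) * rexp (m / 4) := by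
        gcongr
        rw [lt_div_iff₀' hm2]
        exact sq_mul_error_lt hm
    _ = 9 / m ^ 2 * (rexp (m / 4) * rexp (m / 4)) := by ring
    _ = 9 / m ^ 2 * rexp (m / 2) := by
        rw [← Real.exp_add]
        ring_nf

lemma continuous_inv_eta_line {y : ℝ} (hy : 0 < y) :
    Continuous fun θ : ℝ ↦ (eta (θ + y * I))⁻¹ := by
  have hmem (θ : ℝ) : (θ + y * I : ℂ) ∈ UpperHalfPlane.upperHalfPlaneSet := by
    simpa [UpperHalfPlane.upperHalfPlaneSet] using hy
  have hcont : ContinuousOn eta UpperHalfPlane.upperHalfPlaneSet := fun z hz ↦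
    (differentiableAt_eta_of_mem_upperHalfPlaneSet hz).continuousAt.continuousWithinAt
  exact (hcont.comp_continuous (by fun_prop) hmem).inv₀ fun θ ↦ eta_ne_zero (hmem θ)

lemma continuous_cuspTerm_line {y : ℝ} (hy : 0 < y) :
    Continuous fun θ : ℝ ↦ cuspTerm (y - θ * I) := by
  have := continuous_sqrt_sub_mul_I hy
  have := sub_mul_I_ne_zero hy
  unfold cuspTerm
  fun_prop (disch := assumption)

lemma mu_sq {n : ℕ} (hn : 1 ≤ n) : mu n ^ 2 = π ^ 2 / 36 * (24 * n - 1) := by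
  have : (1 : ℝ) ≤ n := by exact_mod_cast hn
  rw [mu, mul_pow, Real.sq_sqrt (by linarith)]
  ring

lemma twenty_eight_le_mu {n : ℕ} (hn : 120 ≤ n) : 28 ≤ mu n := by
  have hsqrt : (53.6 : ℝ) ≤ √(24 * n - 1) := by
    have : (120 : ℝ) ≤ n := by exact_mod_cast hn
    exact Real.le_sqrt_of_sq_le (by norm_num; linarith)
  have hπ := Real.pi_gt_d4
  calc (28 : ℝ) ≤ 3.1415 / 6 * 53.6 := by norm_num
    _ ≤ π / 6 * √(24 * n - 1) := by gcongr

lemma p_eq_integral_mu {n : ℕ} (hn : 1 ≤ n) {y : ℝ} (hy : 0 < y) :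
    (p n : ℂ) = ∫ θ in (-(1 / 2) : ℝ)..(1 / 2),
      (eta (θ + y * I))⁻¹ * cexp ((3 * mu n ^ 2 / π : ℝ) * (y - θ * I)) := by
  have hmu : 3 * mu n ^ 2 / π = 2 * π * (n - 1 / 24) := by
    rw [mu_sq hn]
    field_simp
    ring
  rw [p_eq_integral n hy, hmu]
  congr! 4 with θ
  push_cast
  linear_combination (-(2 * π * (n - 1 / 24) * y : ℂ)) * I_sq

lemma abs_p_sub_T_lt_of_large {n : ℕ} (hn : 120 ≤ n) :
    |p n - T n| < 9 / mu n ^ 2 * rexp (mu n / 2) := by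
  have hm := twenty_eight_le_mu hn
  have hp {y : ℝ} (hy : 0 < y) := p_eq_integral_mu (n := n) (by omega) hy
  rw [T]
  set m := mu n
  obtain ⟨y, hy, hmy⟩ : ∃ y : ℝ, 0 < y ∧ 12 * m * y = π :=
    ⟨π / (12 * m), by positivity, by field_simp⟩
  let f (θ : ℝ) : ℂ := cexp ((3 * m ^ 2 / π : ℝ) * (y - θ * I))
  have hfnorm (θ : ℝ) : ‖f θ‖ = rexp (m / 4) := by
    have hre : (y - θ * I : ℂ).re = y := by simp
    rw [Complex.norm_exp, re_ofReal_mul, hre, ← hmy]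
    congr 1
    field_simp
    norm_num
  have hfcont : Continuous f := by fun_prop
  have herr := norm_integral_inv_eta_sub_cuspTerm_le hm hy hmy hfnorm
  have hη : IntervalIntegrable (fun θ : ℝ ↦ (eta (θ + y * I))⁻¹ * f θ) volume (-(1 / 2)) (1 / 2) :=
    ((continuous_inv_eta_line hy).mul hfcont).intervalIntegrable _ _
  have hcusp : IntervalIntegrable (fun θ : ℝ ↦ cuspTerm (y - θ * I) * f θ) volume
      (-(1 / 2)) (1 / 2) :=
    ((continuous_cuspTerm_line hy).mul hfcont).intervalIntegrable _ _
  simp_rw [sub_mul] at herr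
  rw [intervalIntegral.integral_sub hη hcusp, ← hp hy] at herr
  have htri := norm_sub_le_norm_sub_add_norm_sub (p n : ℂ) _ _ |>.trans
    (add_le_add herr (norm_integral_cuspTerm_sub_le hm hy hmy))
  rw [← ofReal_sub, norm_real, Real.norm_eq_abs] at htri
  refine lt_of_le_of_lt (htri.trans_eq ?_) (total_error_lt hm)
  ring

end LargeValues

section SmallValues

open PowerSeries Finset

/-- The numbers of partitions of `0, …, 119`. -/
def partitionTable : List ℤ :=
  [1, 1, 2, 3, 5, 7, 11, 15, 22, 30, 42, 56, 77, 101, 135, 176, 231, 297, 385, 490, 627, 792,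
    1002, 1255, 1575, 1958, 2436, 3010, 3718, 4565, 5604, 6842, 8349, 10143, 12310, 14883, 17977,
    21637, 26015, 31185, 37338, 44583, 53174, 63261, 75175, 89134, 105558, 124754, 147273,
    173525, 204226, 239943, 281589, 329931, 386155, 451276, 526823, 614154, 715220, 831820,
    966467, 1121505, 1300156, 1505499, 1741630, 2012558, 2323520, 2679689, 3087735, 3554345,
    4087968, 4697205, 5392783, 6185689, 7089500, 8118264, 9289091, 10619863, 12132164, 13848650,
    15796476, 18004327, 20506255, 23338469, 26543660, 30167357, 34262962, 38887673, 44108109,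
    49995925, 56634173, 64112359, 72533807, 82010177, 92669720, 104651419, 118114304, 133230930,
    150198136, 169229875, 190569292, 214481126, 241265379, 271248950, 304801365, 342325709,
    384276336, 431149389, 483502844, 541946240, 607163746, 679903203, 761002156, 851376628,
    952050665, 1064144451, 1188908248, 1327710076, 1482074143, 1653668665]

/-- The coefficients of `f * (1 - X ^ j)`, where `l` lists the first coefficients of `f`. -/
def mulOneSubXPow (j : ℕ) (l : List ℤ) : List ℤ :=
  List.zipWith (· - ·) l (List.replicate j 0 ++ l)

/-- The coefficients of `f * ∏ i < m, (1 - X ^ (i + 1))`, where `l` lists the first coefficients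
of `f`. -/
def mulEulerProd : ℕ → List ℤ → List ℤ
  | 0, l => l
  | m + 1, l => mulOneSubXPow (m + 1) (mulEulerProd m l)

lemma length_mulOneSubXPow (j : ℕ) (l : List ℤ) : (mulOneSubXPow j l).length = l.length := by
  simp [mulOneSubXPow]

lemma length_mulEulerProd (m : ℕ) (l : List ℤ) : (mulEulerProd m l).length = l.length := by
  induction m with
  | zero => rfl
  | succ m ih => rw [mulEulerProd, length_mulOneSubXPow, ih]

/-- The polynomial whose coefficients are listed by `l`, as a power series. -/
noncomputable def listSeries (l : List ℤ) : ℤ⟦X⟧ := PowerSeries.mk fun n ↦ l.getD n 0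

lemma listSeries_one_cons_replicate_zero (k : ℕ) : listSeries (1 :: List.replicate k 0) = 1 := by
  ext n
  rcases n with _ | n
  · simp [listSeries]
  · rcases lt_or_ge n k with h | h <;> simp [listSeries, coeff_one, h]

lemma X_pow_length_dvd_listSeries_mulOneSubXPow_sub (j : ℕ) (l : List ℤ) :
    X ^ l.length ∣ listSeries (mulOneSubXPow j l) - listSeries l * (1 - X ^ j) := by
  rw [X_pow_dvd_iff]
  intro n hn
  have hcoeff : coeff n (listSeries (mulOneSubXPow j l)) =
      l.getD n 0 - if j ≤ n then l.getD (n - j) 0 else 0 := by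
    rw [listSeries, coeff_mk, List.getD_eq_getElem _ _ (by rwa [length_mulOneSubXPow])]
    simp only [mulOneSubXPow, List.getElem_zipWith, List.getElem_append, List.length_replicate,
      List.getElem_replicate, List.getD_eq_getElem _ _ hn]
    split_ifs with h₁ h₂ h₂
    · omega
    · rfl
    · rw [List.getD_eq_getElem _ _ (by omega)]
    · omega
  rw [map_sub, hcoeff, mul_sub, mul_one, map_sub, coeff_mul_X_pow']
  simp [listSeries]

lemma X_pow_length_dvd_listSeries_mulEulerProd_sub (m : ℕ) (l : List ℤ) :
    X ^ l.length ∣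
      listSeries (mulEulerProd m l) - listSeries l * ∏ i ∈ range m, (1 - X ^ (i + 1)) := by
  induction m with
  | zero => simp [mulEulerProd]
  | succ m ih =>
    have hfactor := X_pow_length_dvd_listSeries_mulOneSubXPow_sub (m + 1) (mulEulerProd m l)
    rw [length_mulEulerProd] at hfactor
    rw [mulEulerProd, prod_range_succ]
    convert hfactor.add (ih.mul_right (1 - X ^ (m + 1))) using 1
    ring

lemma card_partition_eq_getD_of_mulEulerProd_eq {m n : ℕ} {l : List ℤ}
    (hl : mulEulerProd m l = 1 :: List.replicate m 0) (hn : n ≤ m) :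
    (Fintype.card (Nat.Partition n) : ℤ) = l.getD n 0 := by
  have hlength : l.length = m + 1 := by simpa [length_mulEulerProd] using congrArg List.length hl
  have hdvd := X_pow_length_dvd_listSeries_mulEulerProd_sub m l
  rw [hl, listSeries_one_cons_replicate_zero, hlength] at hdvd
  set B : ℤ⟦X⟧ := PowerSeries.mk fun n ↦ (boundedCount m n : ℤ)
  have hcoeff := X_pow_dvd_iff.mp (hdvd.mul_right B) n (by omega)
  have hB : (1 - listSeries l * ∏ i ∈ range m, (1 - X ^ (i + 1))) * B = B - listSeries l := by
    linear_combination -listSeries l * mk_boundedCount_mul_prod ℤ m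
  rw [hB, map_sub, sub_eq_zero, coeff_mk, listSeries, coeff_mk, boundedCount_eq_card hn] at hcoeff
  exact hcoeff

lemma mulEulerProd_partitionTable :
    mulEulerProd 119 partitionTable = 1 :: List.replicate 119 0 := by
  decide +kernel

lemma p_eq_partitionTable {n : ℕ} (hn : n < 120) : p n = (partitionTable.getD n 0 : ℤ) := by
  rw [← card_partition_eq_getD_of_mulEulerProd_eq mulEulerProd_partitionTable (by omega), p,
    Int.cast_natCast]

end SmallValues

section RationalBounds

open Finset

/-- A rational lower bound for `exp x`, from a Taylor polynomial of `exp` at `x / 64`. -/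
def expLower (x : ℚ) : ℚ := (∑ i ∈ range 8, (x / 64) ^ i / i.factorial) ^ 64

/-- A rational upper bound for `exp x` if `x ≤ 64`, from a Taylor polynomial of `exp` at `x / 64`
and a bound for its remainder. -/
def expUpper (x : ℚ) : ℚ :=
  (∑ i ∈ range 8, (x / 64) ^ i / i.factorial +
    (x / 64) ^ 8 * (8 + 1) / (Nat.factorial 8 * 8)) ^ 64

lemma expLower_nonneg (x : ℚ) : 0 ≤ expLower x := by
  unfold expLower
  positivity

lemma exp_eq_exp_div_pow (x : ℝ) : rexp x = rexp (x / 64) ^ 64 := by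
  rw [← Real.exp_nat_mul]
  congr 1
  push_cast
  ring

lemma expLower_le_exp {x : ℚ} (hx : 0 ≤ x) : expLower x ≤ rexp x := by
  have : (0 : ℝ) ≤ x := by exact_mod_cast hx
  rw [exp_eq_exp_div_pow, expLower]
  push_cast
  gcongr
  exact Real.sum_le_exp_of_nonneg (by positivity) 8

lemma exp_le_expUpper {x : ℚ} (hx : 0 ≤ x) (hx64 : x ≤ 64) : rexp x ≤ expUpper x := by
  have : (0 : ℝ) ≤ x := by exact_mod_cast hx
  have hx64' : (x : ℝ) ≤ 64 := by exact_mod_cast hx64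
  rw [exp_eq_exp_div_pow, expUpper]
  push_cast
  gcongr
  have h := Real.exp_bound' (x := (x : ℝ) / 64) (by positivity) (by linarith) (n := 8)
    (by norm_num)
  push_cast at h
  exact h

lemma sqrt_natCast_mul_ten_pow (N : ℕ) : √(N * 10 ^ 20 : ℕ) = √N * 10 ^ 10 := by
  rw [Nat.cast_mul, Real.sqrt_mul (by positivity), show ((10 ^ 20 : ℕ) : ℝ) = (10 ^ 10) ^ 2 by
    norm_num, Real.sqrt_sq (by positivity)]

lemma natSqrt_div_le_sqrt (N : ℕ) : (Nat.sqrt (N * 10 ^ 20) : ℝ) / 10 ^ 10 ≤ √N := by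
  rw [div_le_iff₀ (by positivity), ← sqrt_natCast_mul_ten_pow]
  exact Real.nat_sqrt_le_real_sqrt

lemma sqrt_le_natSqrt_add_one_div (N : ℕ) :
    √N ≤ ((Nat.sqrt (N * 10 ^ 20) : ℝ) + 1) / 10 ^ 10 := by
  rw [le_div_iff₀ (by positivity), ← sqrt_natCast_mul_ten_pow]
  exact Real.real_sqrt_lt_nat_sqrt_succ.le

/-- A rational lower bound for `mu n`. -/
def muLower (n : ℕ) : ℚ :=
  3.14159265358979323846 / 6 * (Nat.sqrt ((24 * n - 1) * 10 ^ 20) / 10 ^ 10)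

/-- A rational upper bound for `mu n`. -/
def muUpper (n : ℕ) : ℚ :=
  3.14159265358979323847 / 6 * ((Nat.sqrt ((24 * n - 1) * 10 ^ 20) + 1) / 10 ^ 10)

/-- A rational lower bound for `T n`. -/
def TLower (n : ℕ) : ℚ :=
  9497031262 / 10 ^ 10 / muUpper n ^ 2 * (1 - 1 / muLower n) * expLower (muLower n)

/-- A rational upper bound for `T n`. -/
def TUpper (n : ℕ) : ℚ :=
  9497031263 / 10 ^ 10 / muLower n ^ 2 * (1 - 1 / muUpper n) * expUpper (muUpper n)

/-- A rational lower bound for the error allowed by the theorem. -/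
def errorLower (n : ℕ) : ℚ := 5 + 9 / muUpper n ^ 2 * expLower (muLower n / 2)

variable {n : ℕ}

lemma mu_eq_sqrt_natCast (hn : 1 ≤ n) : mu n = π / 6 * √(24 * n - 1 : ℕ) := by
  rw [mu, Nat.cast_sub (by omega)]
  push_cast
  rfl

lemma muLower_le_mu (hn : 1 ≤ n) : muLower n ≤ mu n := by
  rw [muLower, mu_eq_sqrt_natCast hn]
  push_cast
  gcongr
  · exact Real.pi_gt_d20.le
  · exact natSqrt_div_le_sqrt _

lemma mu_le_muUpper (hn : 1 ≤ n) : mu n ≤ muUpper n := by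
  rw [muUpper, mu_eq_sqrt_natCast hn]
  push_cast
  gcongr
  · exact Real.pi_lt_d20.le
  · exact sqrt_le_natSqrt_add_one_div _

lemma d_mem_Icc : d ∈ Set.Icc (9497031262 / 10 ^ 10 : ℝ) (9497031263 / 10 ^ 10) := by
  have hsqrt_lower : (1.73205080756 : ℝ) < √3 := Real.lt_sqrt_of_sq_lt (by norm_num)
  have hsqrt_upper : √3 < (1.73205080757 : ℝ) := (Real.sqrt_lt' (by norm_num)).2 (by norm_num)
  have hπ_lower : (3.14159265358979323846 : ℝ) ^ 2 < π ^ 2 := by gcongr; exact Real.pi_gt_d20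
  have hπ_upper : π ^ 2 < (3.14159265358979323847 : ℝ) ^ 2 := by gcongr; exact Real.pi_lt_d20
  rw [d, Set.mem_Icc, le_div_iff₀ (by positivity), div_le_iff₀ (by positivity)]
  norm_num at *
  constructor <;> linarith

lemma one_sub_one_div_nonneg {x : ℝ} (hx : 1 ≤ x) : 0 ≤ 1 - 1 / x :=
  sub_nonneg.mpr (div_le_one_of_le₀ hx (by linarith))

lemma TLower_le_T (hn : 1 ≤ n) (hmu : 1 < muLower n) : TLower n ≤ T n := by
  have hlower : (1 : ℝ) < muLower n := by exact_mod_cast hmu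
  have hle := muLower_le_mu hn
  have hge := mu_le_muUpper hn
  have hmu0 : 0 < mu n := by linarith
  have hfactor : (0 : ℝ) ≤ 1 - 1 / muLower n := one_sub_one_div_nonneg hlower.le
  have hfactor' : 0 ≤ 1 - 1 / mu n := one_sub_one_div_nonneg (by linarith)
  have hexp : (0 : ℝ) ≤ expLower (muLower n) := by exact_mod_cast expLower_nonneg _
  have hexp_le : expLower (muLower n) ≤ rexp (mu n) :=
    (expLower_le_exp (by linarith)).trans (Real.exp_le_exp.mpr hle)
  have hd := d_mem_Icc.1
  have : 0 ≤ d := by linarith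
  rw [TLower, T]
  push_cast
  gcongr

lemma T_le_TUpper (hn : 1 ≤ n) (hmu : 1 < muLower n) (hmu64 : muUpper n ≤ 64) :
    T n ≤ TUpper n := by
  have hlower : (1 : ℝ) < muLower n := by exact_mod_cast hmu
  have hle := muLower_le_mu hn
  have hge := mu_le_muUpper hn
  have hmu0 : 0 < mu n := by linarith
  have hfactor : 0 ≤ 1 - 1 / mu n := one_sub_one_div_nonneg (by linarith)
  have hfactor' : (0 : ℝ) ≤ 1 - 1 / muUpper n := one_sub_one_div_nonneg (by linarith)
  have hupper : (0 : ℚ) ≤ muUpper n := by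
    have : (0 : ℝ) ≤ muUpper n := by linarith
    exact_mod_cast this
  have hexp : rexp (mu n) ≤ expUpper (muUpper n) :=
    (Real.exp_le_exp.mpr hge).trans (exp_le_expUpper hupper hmu64)
  have hd := d_mem_Icc.2
  rw [TUpper, T]
  push_cast
  gcongr

lemma errorLower_le (hn : 1 ≤ n) (hmu : 1 < muLower n) :
    errorLower n ≤ 5 + 9 / mu n ^ 2 * rexp (mu n / 2) := by
  have hlower : (1 : ℝ) < muLower n := by exact_mod_cast hmu
  have hle := muLower_le_mu hn
  have hge := mu_le_muUpper hn
  have hexp : (0 : ℝ) ≤ expLower (muLower n / 2) := by exact_mod_cast expLower_nonneg _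
  have hexp_le : expLower (muLower n / 2) ≤ rexp (mu n / 2) := by
    refine (expLower_le_exp (by linarith)).trans (Real.exp_le_exp.mpr ?_)
    push_cast
    linarith
  have hmu0 : 0 < mu n := by linarith
  rw [errorLower]
  push_cast
  gcongr

lemma one_lt_muLower_and_muUpper_le : ∀ n < 120, 1 ≤ n → 1 < muLower n ∧ muUpper n ≤ 64 := by
  decide +kernel

lemma partitionTable_mem_Ioo : ∀ n < 120, 1 ≤ n →
    TUpper n - errorLower n < partitionTable.getD n 0 ∧
      partitionTable.getD n 0 < TLower n + errorLower n := by
  decide +kernel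

lemma abs_p_sub_T_lt_of_small (hn : 1 ≤ n) (hn120 : n < 120) :
    |p n - T n| < 5 + 9 / mu n ^ 2 * rexp (mu n / 2) := by
  obtain ⟨hmu, hmu64⟩ := one_lt_muLower_and_muUpper_le n hn120 hn
  obtain ⟨hlt, hgt⟩ := partitionTable_mem_Ioo n hn120 hn
  have hlt' : (TUpper n - errorLower n : ℝ) < (partitionTable.getD n 0 : ℤ) := by
    exact_mod_cast hlt
  have hgt' : ((partitionTable.getD n 0 : ℤ) : ℝ) < TLower n + errorLower n := by
    exact_mod_cast hgt
  have hT := TLower_le_T hn hmu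
  have hT' := T_le_TUpper hn hmu hmu64
  have herror := errorLower_le hn hmu
  rw [p_eq_partitionTable hn120, abs_sub_lt_iff]
  constructor <;> linarith

end RationalBounds

end PartitionBound

theorem p_sub_T_bound (n : ℕ) (hn : 1 ≤ n) :
    |p n - T (n : ℝ)| < 5 + 9 / mu (n : ℝ) ^ 2 * Real.exp (mu (n : ℝ) / 2) := by
  rcases Nat.lt_or_ge n 120 with h | h
  · exact PartitionBound.abs_p_sub_T_lt_of_small hn h
  · linarith [PartitionBound.abs_p_sub_T_lt_of_large h]
end

section
/- The limit as n → ∞ of (n-1)^{5/2} · ( (log T̃(n+1))/(n+1) + (log T̃(n-1))/(n-1) - 2·(log T̃(n))/n ) equals 3π/√24. -/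
open Real Filter Topology

/-!
A function asymptotic to `c * x ^ s`, in a sense that survives two differentiations, has second
differences asymptotic to `c * s * (s - 1) * x ^ (s - 2)`, by the mean value theorem applied twice.
This kind of asymptotic behaviour is stable under sums, products and composition, and a logarithm
counts as negligible against every positive power. Since `log (T x)` is `mu x` up to a constant and
logarithms of `mu x` and `mu x - 1`, and `mu x` behaves like `π / 6 * √24 * x ^ (1 / 2)`, the
quotient `log (T x) / x` behaves like `π / 6 * √24 * x ^ (-1 / 2)`, and
`π / 6 * √24 * (-1 / 2) * (-3 / 2) = 3 * π / √24`.
-/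

open scoped fwdDiff

section PowerWeights

variable {φ g : ℝ → ℝ} {a b c s L : ℝ}

lemma tendsto_rpow_mul_zero_of_lt (hφ : Tendsto (fun x => x ^ a * φ x) atTop (𝓝 L))
    (hba : b < a) : Tendsto (fun x => x ^ b * φ x) atTop (𝓝 0) := by
  have hprod := (tendsto_rpow_neg_atTop (sub_pos.2 hba)).mul hφ
  rw [zero_mul] at hprod
  refine hprod.congr' ?_
  filter_upwards [eventually_gt_atTop 0] with x hx
  rw [← mul_assoc, ← rpow_add hx, neg_sub, sub_add_cancel]

lemma tendsto_atTop_of_tendsto_rpow_neg_mul (hc : 0 < c) (hs : 0 < s)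
    (hg : Tendsto (fun x => x ^ (-s) * g x) atTop (𝓝 c)) : Tendsto g atTop atTop := by
  refine ((tendsto_rpow_atTop hs).atTop_mul_pos hc hg).congr' ?_
  filter_upwards [eventually_gt_atTop 0] with x hx
  rw [← mul_assoc, ← rpow_add hx, add_neg_cancel, rpow_zero, one_mul]

lemma tendsto_rpow_mul_comp (hφ : Tendsto (fun y => y ^ a * φ y) atTop (𝓝 L))
    (hc : 0 < c) (hs : 0 < s) (hg : Tendsto (fun x => x ^ (-s) * g x) atTop (𝓝 c)) :
    Tendsto (fun x => x ^ (s * a) * φ (g x)) atTop (𝓝 (c ^ (-a) * L)) := by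
  have hgtop := tendsto_atTop_of_tendsto_rpow_neg_mul hc hs hg
  refine ((hg.rpow_const (p := -a) (Or.inl hc.ne')).mul (hφ.comp hgtop)).congr' ?_
  filter_upwards [eventually_gt_atTop 0, hgtop.eventually_gt_atTop 0] with x hx hgx
  have hcancel : g x ^ (-a) * g x ^ a = 1 := by
    rw [← rpow_add hgx, neg_add_cancel, rpow_zero]
  rw [Function.comp_apply, mul_rpow (by positivity) hgx.le, ← rpow_mul hx.le, neg_mul_neg]
  linear_combination x ^ (s * a) * φ (g x) * hcancel

end PowerWeights

section MeanValue

variable {f f' f'' : ℝ → ℝ} {x h : ℝ}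

lemma exists_fwdDiff_eq_mul_deriv (hh : 0 < h)
    (hf : ∀ y ∈ Set.Icc x (x + h), HasDerivAt f (f' y) y) :
    ∃ ξ ∈ Set.Ioo x (x + h), Δ_[h] f x = h * f' ξ := by
  obtain ⟨ξ, hξ, hslope⟩ := exists_hasDerivAt_eq_slope f f' (lt_add_of_pos_right x hh)
    (fun y hy => (hf y hy).continuousAt.continuousWithinAt)
    (fun y hy => hf y (Set.Ioo_subset_Icc_self hy))
  refine ⟨ξ, hξ, ?_⟩
  rw [hslope, add_sub_cancel_left, mul_div_cancel₀ _ hh.ne', fwdDiff]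

lemma exists_fwdDiff_fwdDiff_eq_mul_deriv (hh : 0 < h)
    (hf : ∀ y ∈ Set.Icc x (x + 2 * h), HasDerivAt f (f' y) y)
    (hf' : ∀ y ∈ Set.Icc x (x + 2 * h), HasDerivAt f' (f'' y) y) :
    ∃ ξ ∈ Set.Ioo x (x + 2 * h), Δ_[h] (Δ_[h] f) x = h ^ 2 * f'' ξ := by
  have hdiff : ∀ y ∈ Set.Icc x (x + h), HasDerivAt (Δ_[h] f) (Δ_[h] f' y) y := fun y hy =>
    ((hf (y + h) ⟨by linarith [hy.1], by linarith [hy.2]⟩).comp_add_const y h).sub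
      (hf y ⟨hy.1, by linarith [hy.2]⟩)
  obtain ⟨η, hη, hfη⟩ := exists_fwdDiff_eq_mul_deriv hh hdiff
  obtain ⟨ξ, hξ, hfξ⟩ := exists_fwdDiff_eq_mul_deriv hh fun y (hy : y ∈ Set.Icc η (η + h)) =>
    hf' y ⟨by linarith [hy.1, hη.1], by linarith [hy.2, hη.2]⟩
  refine ⟨ξ, ⟨hη.1.trans hξ.1, by linarith [hξ.2, hη.2]⟩, ?_⟩
  rw [hfη, hfξ]
  ring

end MeanValue

/-- `f x ~ c * x ^ s` as `x → ∞`, where the relation may be differentiated twice: a second-order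
form of smooth variation with index `s`. For `c = 0` this says that `f`, `f'` and `f''` are
negligible against `x ^ s`, `x ^ (s - 1)` and `x ^ (s - 2)`. -/
def HasRpowAsymptotic (f : ℝ → ℝ) (c s : ℝ) : Prop :=
  ∃ f' f'' : ℝ → ℝ,
    (∀ᶠ x in atTop, HasDerivAt f (f' x) x) ∧
    (∀ᶠ x in atTop, HasDerivAt f' (f'' x) x) ∧
    Tendsto (fun x => x ^ (-s) * f x) atTop (𝓝 c) ∧
    Tendsto (fun x => x ^ (1 - s) * f' x) atTop (𝓝 (c * s)) ∧
    Tendsto (fun x => x ^ (2 - s) * f'' x) atTop (𝓝 (c * s * (s - 1)))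

namespace HasRpowAsymptotic

variable {f g : ℝ → ℝ} {a b c s t : ℝ}

lemma tendsto_atTop (hf : HasRpowAsymptotic f c s) (hc : 0 < c) (hs : 0 < s) :
    Tendsto f atTop atTop := by
  obtain ⟨-, -, -, -, hf₀, -⟩ := hf
  exact tendsto_atTop_of_tendsto_rpow_neg_mul hc hs hf₀

lemma congr' (hf : HasRpowAsymptotic f c s) (hfg : f =ᶠ[atTop] g) :
    HasRpowAsymptotic g c s := by
  obtain ⟨f', f'', hd, hd', hf₀, hf₁, hf₂⟩ := hf
  refine ⟨f', f'', ?_, hd', hf₀.congr' ?_, hf₁, hf₂⟩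
  · obtain ⟨M, hM⟩ := eventually_atTop.1 hfg
    filter_upwards [hd, eventually_gt_atTop M] with x hx hMx
    refine hx.congr_of_eventuallyEq ?_
    filter_upwards [eventually_gt_nhds hMx] with y hy using (hM y hy.le).symm
  · filter_upwards [hfg] with x hx
    rw [hx]

lemma of_lt (hf : HasRpowAsymptotic f c s) (hst : s < t) : HasRpowAsymptotic f 0 t := by
  obtain ⟨f', f'', hd, hd', hf₀, hf₁, hf₂⟩ := hf
  refine ⟨f', f'', hd, hd', tendsto_rpow_mul_zero_of_lt hf₀ (by linarith), ?_, ?_⟩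
  · simpa only [zero_mul] using tendsto_rpow_mul_zero_of_lt hf₁ (by linarith)
  · simpa only [zero_mul] using tendsto_rpow_mul_zero_of_lt hf₂ (by linarith)

lemma add (hf : HasRpowAsymptotic f a s) (hg : HasRpowAsymptotic g b s) :
    HasRpowAsymptotic (fun x => f x + g x) (a + b) s := by
  obtain ⟨f', f'', hfd, hfd', hf₀, hf₁, hf₂⟩ := hf
  obtain ⟨g', g'', hgd, hgd', hg₀, hg₁, hg₂⟩ := hg
  refine ⟨fun x => f' x + g' x, fun x => f'' x + g'' x, ?_, ?_, ?_, ?_, ?_⟩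
  · filter_upwards [hfd, hgd] with x hfx hgx using hfx.add hgx
  · filter_upwards [hfd', hgd'] with x hfx hgx using hfx.add hgx
  · simpa only [mul_add] using hf₀.add hg₀
  · simpa only [mul_add, add_mul] using hf₁.add hg₁
  · simpa only [mul_add, add_mul] using hf₂.add hg₂

lemma mul (hf : HasRpowAsymptotic f a s) (hg : HasRpowAsymptotic g b t) :
    HasRpowAsymptotic (fun x => f x * g x) (a * b) (s + t) := by
  obtain ⟨f', f'', hfd, hfd', hf₀, hf₁, hf₂⟩ := hf
  obtain ⟨g', g'', hgd, hgd', hg₀, hg₁, hg₂⟩ := hg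
  refine ⟨fun x => f' x * g x + f x * g' x,
    fun x => f'' x * g x + f' x * g' x + (f' x * g' x + f x * g'' x), ?_, ?_, ?_, ?_, ?_⟩
  · filter_upwards [hfd, hgd] with x hfx hgx using hfx.mul hgx
  · filter_upwards [hfd, hfd', hgd, hgd'] with x hfx hfx' hgx hgx'
      using (hfx'.mul hgx).add (hfx.mul hgx')
  · refine (hf₀.mul hg₀).congr' ?_
    filter_upwards [eventually_gt_atTop 0] with x hx
    rw [neg_add, rpow_add hx]
    ring
  · rw [show a * b * (s + t) = a * s * b + a * (b * t) by ring]
    refine ((hf₁.mul hg₀).add (hf₀.mul hg₁)).congr' ?_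
    filter_upwards [eventually_gt_atTop 0] with x hx
    have hw₁₀ : x ^ (1 - (s + t)) = x ^ (1 - s) * x ^ (-t) := by rw [← rpow_add hx]; ring_nf
    have hw₀₁ : x ^ (1 - (s + t)) = x ^ (-s) * x ^ (1 - t) := by rw [← rpow_add hx]; ring_nf
    linear_combination -(f' x * g x) * hw₁₀ - f x * g' x * hw₀₁
  · rw [show a * b * (s + t) * (s + t - 1) = a * s * (s - 1) * b + 2 * (a * s * (b * t)) +
      a * (b * t * (t - 1)) by ring]
    refine (((hf₂.mul hg₀).add ((hf₁.mul hg₁).const_mul 2)).add (hf₀.mul hg₂)).congr' ?_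
    filter_upwards [eventually_gt_atTop 0] with x hx
    have hw₂₀ : x ^ (2 - (s + t)) = x ^ (2 - s) * x ^ (-t) := by rw [← rpow_add hx]; ring_nf
    have hw₁₁ : x ^ (2 - (s + t)) = x ^ (1 - s) * x ^ (1 - t) := by rw [← rpow_add hx]; ring_nf
    have hw₀₂ : x ^ (2 - (s + t)) = x ^ (-s) * x ^ (2 - t) := by rw [← rpow_add hx]; ring_nf
    linear_combination -(f'' x * g x) * hw₂₀ - 2 * (f' x * g' x) * hw₁₁ - f x * g'' x * hw₀₂

lemma comp (hf : HasRpowAsymptotic f a t) (hg : HasRpowAsymptotic g b s) (hb : 0 < b)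
    (hs : 0 < s) : HasRpowAsymptotic (fun x => f (g x)) (a * b ^ t) (s * t) := by
  have hgtop := hg.tendsto_atTop hb hs
  obtain ⟨f', f'', hfd, hfd', hf₀, hf₁, hf₂⟩ := hf
  obtain ⟨g', g'', hgd, hgd', hg₀, hg₁, hg₂⟩ := hg
  have hfg₀ := tendsto_rpow_mul_comp hf₀ hb hs hg₀
  have hfg₁ := tendsto_rpow_mul_comp hf₁ hb hs hg₀
  have hfg₂ := tendsto_rpow_mul_comp hf₂ hb hs hg₀
  have hb₁ : b ^ (-(1 - t)) * b = b ^ t := by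
    rw [← rpow_add_one hb.ne']; ring_nf
  have hb₂ : b ^ (-(2 - t)) * b ^ 2 = b ^ t := by
    rw [← rpow_natCast, ← rpow_add hb]; push_cast; ring_nf
  refine ⟨fun x => f' (g x) * g' x, fun x => f'' (g x) * g' x * g' x + f' (g x) * g'' x,
    ?_, ?_, ?_, ?_, ?_⟩
  · filter_upwards [hgtop.eventually hfd, hgd] with x hfx hgx using hfx.comp x hgx
  · filter_upwards [hgtop.eventually hfd', hgd, hgd'] with x hfx' hgx hgx'
      using (hfx'.comp x hgx).mul hgx'
  · simpa only [mul_neg, neg_neg, mul_comm] using hfg₀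
  · rw [show a * b ^ t * (s * t) = b ^ (-(1 - t)) * (a * t) * (b * s) by
      linear_combination -(a * t * s) * hb₁]
    refine (hfg₁.mul hg₁).congr' ?_
    filter_upwards [eventually_gt_atTop 0] with x hx
    have hw : x ^ (1 - s * t) = x ^ (s * (1 - t)) * x ^ (1 - s) := by rw [← rpow_add hx]; ring_nf
    rw [hw]
    ring
  · rw [show a * b ^ t * (s * t) * (s * t - 1) =
        b ^ (-(2 - t)) * (a * t * (t - 1)) * (b * s) ^ 2 +
          b ^ (-(1 - t)) * (a * t) * (b * s * (s - 1)) by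
      linear_combination -(a * t * (t - 1) * s ^ 2) * hb₂ - a * t * s * (s - 1) * hb₁]
    refine ((hfg₂.mul (hg₁.pow 2)).add (hfg₁.mul hg₂)).congr' ?_
    filter_upwards [eventually_gt_atTop 0] with x hx
    have hw₂ : x ^ (2 - s * t) = x ^ (s * (2 - t)) * (x ^ (1 - s)) ^ 2 := by
      rw [sq, ← rpow_add hx, ← rpow_add hx]; ring_nf
    have hw₁ : x ^ (2 - s * t) = x ^ (s * (1 - t)) * x ^ (2 - s) := by
      rw [← rpow_add hx]; ring_nf
    linear_combination -(f'' (g x) * g' x ^ 2) * hw₂ - f' (g x) * g'' x * hw₁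

protected lemma rpow (s : ℝ) : HasRpowAsymptotic (fun x => x ^ s) 1 s := by
  refine ⟨fun x => s * x ^ (s - 1), fun x => s * ((s - 1) * x ^ (s - 1 - 1)), ?_, ?_, ?_, ?_, ?_⟩
  · filter_upwards [eventually_ne_atTop 0] with x hx using hasDerivAt_rpow_const (Or.inl hx)
  · filter_upwards [eventually_ne_atTop 0] with x hx
      using (hasDerivAt_rpow_const (Or.inl hx)).const_mul s
  all_goals
    refine tendsto_const_nhds.congr' ?_
    filter_upwards [eventually_gt_atTop 0] with x hx
  · rw [← rpow_add hx, neg_add_cancel, rpow_zero]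
  · rw [mul_left_comm, ← rpow_add hx, sub_add_sub_cancel, sub_self, rpow_zero, one_mul, mul_one]
  · rw [mul_left_comm, mul_left_comm (x ^ _), ← rpow_add hx,
      show 2 - s + (s - 1 - 1) = 0 by ring, rpow_zero, one_mul, mul_one]

protected lemma id : HasRpowAsymptotic (fun x => x) 1 1 := by
  simpa only [rpow_one] using HasRpowAsymptotic.rpow 1

protected lemma const (c : ℝ) : HasRpowAsymptotic (fun _ => c) c 0 :=
  ⟨fun _ => 0, fun _ => 0, .of_forall fun x => hasDerivAt_const x c,
    .of_forall fun x => hasDerivAt_const x 0, by simp, by simp, by simp⟩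

lemma const_mul (b : ℝ) (hf : HasRpowAsymptotic f c s) :
    HasRpowAsymptotic (fun x => b * f x) (b * c) s := by
  simpa only [zero_add] using (HasRpowAsymptotic.const b).mul hf

lemma add_const (hf : HasRpowAsymptotic f c s) (hs : 0 < s) (b : ℝ) :
    HasRpowAsymptotic (fun x => f x + b) c s := by
  simpa only [add_zero] using hf.add ((HasRpowAsymptotic.const b).of_lt hs)

protected lemma log (hs : 0 < s) : HasRpowAsymptotic log 0 s := by
  have hneg : Tendsto (fun x : ℝ => x ^ (-s)) atTop (𝓝 0) := tendsto_rpow_neg_atTop hs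
  refine ⟨fun x => x⁻¹, fun x => -(x ^ 2)⁻¹, ?_, ?_, ?_, ?_, ?_⟩
  · filter_upwards [eventually_ne_atTop 0] with x hx using hasDerivAt_log hx
  · filter_upwards [eventually_ne_atTop 0] with x hx using hasDerivAt_inv hx
  · refine (isLittleO_log_rpow_atTop hs).tendsto_div_nhds_zero.congr' ?_
    filter_upwards [eventually_ge_atTop 0] with x hx
    rw [rpow_neg hx, div_eq_inv_mul]
  · rw [zero_mul]
    refine hneg.congr' ?_
    filter_upwards [eventually_gt_atTop 0] with x hx
    rw [← rpow_neg_one, ← rpow_add hx]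
    ring_nf
  · rw [zero_mul, zero_mul, ← neg_zero]
    refine hneg.neg.congr' ?_
    filter_upwards [eventually_gt_atTop 0] with x hx
    rw [mul_neg, ← rpow_natCast, ← rpow_neg hx.le, ← rpow_add hx]
    push_cast
    ring_nf

lemma tendsto_fwdDiff_fwdDiff (hf : HasRpowAsymptotic f c s) {h : ℝ} (hh : 0 < h) :
    Tendsto (fun x => x ^ (2 - s) * Δ_[h] (Δ_[h] f) x) atTop
      (𝓝 (h ^ 2 * (c * s * (s - 1)))) := by
  obtain ⟨f', f'', hd, hd', -, -, hf₂⟩ := hf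
  obtain ⟨M, hM⟩ := eventually_atTop.1 (hd.and hd')
  have hmean : ∀ x, ∃ ξ ∈ Set.Ioo x (x + 2 * h),
      M ≤ x → Δ_[h] (Δ_[h] f) x = h ^ 2 * f'' ξ := by
    intro x
    by_cases hx : M ≤ x
    · obtain ⟨ξ, hξ, heq⟩ := exists_fwdDiff_fwdDiff_eq_mul_deriv hh
        (fun y hy => (hM y (hx.trans hy.1)).1) (fun y hy => (hM y (hx.trans hy.1)).2)
      exact ⟨ξ, hξ, fun _ => heq⟩
    · exact ⟨x + h, ⟨by linarith, by linarith⟩, fun hMx => absurd hMx hx⟩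
  choose ξ hξ heq using hmean
  have hupper : Tendsto (fun x : ℝ => 1 + 2 * h * x⁻¹) atTop (𝓝 1) := by
    simpa using (tendsto_inv_atTop_zero.const_mul (2 * h)).const_add 1
  have hξ_div : Tendsto (fun x => x ^ (-1 : ℝ) * ξ x) atTop (𝓝 1) := by
    refine tendsto_of_tendsto_of_tendsto_of_le_of_le' tendsto_const_nhds hupper ?_ ?_
    all_goals
      filter_upwards [eventually_gt_atTop 0] with x hx
      rw [rpow_neg_one, ← div_eq_inv_mul]
    · exact (one_le_div hx).2 (hξ x).1.le
    · rw [div_le_iff₀ hx, add_mul, one_mul, inv_mul_cancel_right₀ hx.ne']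
      exact (hξ x).2.le
  have hlim := (tendsto_rpow_mul_comp hf₂ one_pos one_pos hξ_div).const_mul (h ^ 2)
  simp only [one_rpow, one_mul] at hlim
  refine hlim.congr' ?_
  filter_upwards [eventually_ge_atTop M] with x hx
  rw [heq x hx]
  ring

end HasRpowAsymptotic

lemma hasRpowAsymptotic_mu : HasRpowAsymptotic mu (π / 6 * √24) (1 / 2) := by
  have hlin : HasRpowAsymptotic (fun x => 24 * x + -1) 24 1 := by
    simpa only [mul_one] using (HasRpowAsymptotic.id.const_mul 24).add_const one_pos (-1)
  have hsqrt := ((HasRpowAsymptotic.rpow (1 / 2)).comp hlin (by norm_num) one_pos).const_mul (π / 6)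
  simp only [one_mul, ← sqrt_eq_rpow, ← sub_eq_add_neg] at hsqrt
  exact hsqrt

lemma tendsto_mu_atTop : Tendsto mu atTop atTop :=
  hasRpowAsymptotic_mu.tendsto_atTop (by positivity) (by norm_num)

lemma log_T_of_one_lt_mu {x : ℝ} (hx : 1 < mu x) :
    log (T x) = mu x + (log (mu x - 1) + -3 * log (mu x) + log d) := by
  have hmu : mu x ≠ 0 := by linarith
  have hsub : mu x - 1 ≠ 0 := by linarith
  have hd : d ≠ 0 := by unfold d; positivity
  have hT : T x = d * (mu x - 1) / mu x ^ 3 * exp (mu x) := by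
    unfold T
    field_simp
  rw [hT, log_mul (by positivity) (exp_ne_zero _), log_div (by positivity) (by positivity),
    log_mul hd hsub, log_pow, log_exp]
  push_cast
  ring

lemma hasRpowAsymptotic_log_T :
    HasRpowAsymptotic (fun x => log (T x)) (π / 6 * √24) (1 / 2) := by
  have hshift : HasRpowAsymptotic (fun y => y + -1) 1 1 :=
    HasRpowAsymptotic.id.add_const one_pos (-1)
  have hlog_shift : HasRpowAsymptotic (fun y => log (y - 1)) 0 1 := by
    simpa only [zero_mul, one_mul, ← sub_eq_add_neg] using
      (HasRpowAsymptotic.log one_pos).comp hshift one_pos one_pos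
  have hlogs : HasRpowAsymptotic (fun y => log (y - 1) + -3 * log y + log d) 0 1 := by
    simpa only [mul_zero, add_zero] using
      (hlog_shift.add ((HasRpowAsymptotic.log one_pos).const_mul (-3))).add_const one_pos (log d)
  have hcomp := (HasRpowAsymptotic.id.add hlogs).comp hasRpowAsymptotic_mu
    (by positivity) (by norm_num)
  rw [add_zero, one_mul, rpow_one, mul_one] at hcomp
  refine hcomp.congr' ?_
  filter_upwards [tendsto_mu_atTop.eventually_gt_atTop 1] with x hx
  exact (log_T_of_one_lt_mu hx).symm

lemma hasRpowAsymptotic_log_T_div :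
    HasRpowAsymptotic (fun x => log (T x) / x) (π / 6 * √24) (-1 / 2) := by
  have hmul := hasRpowAsymptotic_log_T.mul (HasRpowAsymptotic.rpow (-1))
  rw [mul_one, show (1 / 2 + -1 : ℝ) = -1 / 2 by norm_num] at hmul
  simpa only [rpow_neg_one, ← div_eq_mul_inv] using hmul

theorem limit_second_difference_log_T_general :
    Tendsto (fun x : ℝ => (x - 1) ^ ((5 : ℝ) / 2) *
      (log (T (x + 1)) / (x + 1) + log (T (x - 1)) / (x - 1) - 2 * log (T x) / x))
      atTop (𝓝 (3 * π / √24)) := by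
  have hpred : Tendsto (fun x : ℝ => x - 1) atTop atTop :=
    tendsto_atTop_add_const_right _ _ tendsto_id
  have hdiff := (hasRpowAsymptotic_log_T_div.tendsto_fwdDiff_fwdDiff one_pos).comp hpred
  have hlimit : (1 : ℝ) ^ 2 * (π / 6 * √24 * (-1 / 2) * (-1 / 2 - 1)) = 3 * π / √24 := by
    have hsq : √24 ^ 2 = (24 : ℝ) := sq_sqrt (by norm_num)
    field_simp
    rw [hsq]
    norm_num
  rw [hlimit] at hdiff
  refine hdiff.congr fun x => ?_
  have hexp : (2 : ℝ) - -1 / 2 = 5 / 2 := by norm_num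
  simp only [Function.comp_apply, fwdDiff, sub_add_cancel, hexp]
  ring

theorem limit_second_difference_log_T :
    Tendsto (fun n : ℕ =>
        ((n : ℝ) - 1) ^ ((5 : ℝ) / 2) *
          (Real.log (T ((n : ℝ) + 1)) / ((n : ℝ) + 1) +
            Real.log (T ((n : ℝ) - 1)) / ((n : ℝ) - 1) -
            2 * Real.log (T (n : ℝ)) / (n : ℝ)))
      atTop (nhds (3 * π / Real.sqrt 24)) :=
  limit_second_difference_log_T_general.comp tendsto_natCast_atTop_atTop
end
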